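/- Let i ∈ I and let β be a formal nonnegative combination of the α_j. For every graded left R(β)-module M there is an isomorphism of graded R(β)-modules E_i F_i M ≅ q^{−(α_i,α_i)} F_i E_i M ⊕ (M ⊗_k k[t_i]), natural in M, where t_i is an indeterminate of degree (α_i,α_i) and M ⊗_k k[t_i] ≅ ⊕_{m ≥ 0} q^{m(α_i,α_i)} M; here E_i F_i is the composite through modules over R(β+α_i) and F_i E_i the composite through modules over R(β−α_i). -/

import Mathlib

/- ## Scaffold: Khovanov–Lauda–Rouquier algebras -/

open scoped TensorProduct

/-- A symmetrizable Cartan datum together with the structure constants of the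
family of polynomials `Q`. -/
structure CartanDatum (k : Type) [Field k] (I : Type) [Fintype I] [DecidableEq I] : Type where
  a : I → I → ℤ
  d : I → ℤ
  t : I → I → ℕ → ℕ → k
  a_diag : ∀ i, a i i = 2
  a_nonpos : ∀ i j, i ≠ j → a i j ≤ 0
  a_zero_iff : ∀ i j, a i j = 0 ↔ a j i = 0
  d_pos : ∀ i, 0 < d i
  symmetrize : ∀ i j, d i * a i j = d j * a j i
  t_symm : ∀ i j p q, t i j p q = t j i q p
  t_lead : ∀ i j, i ≠ j → t i j (-(a i j)).toNat 0 ≠ 0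

namespace KLR

variable {k : Type} [Field k] {I : Type} [Fintype I] [DecidableEq I]

/-- The symmetric bilinear form `(α_i, α_j) = d_i a_{ij}`. -/
def B (C : CartanDatum k I) (i j : I) : ℤ := C.d i * C.a i j

/-- Generators of the KLR algebra `R(n)`. -/
inductive Gen (I : Type) (n : ℕ) : Type
  | e (ν : Fin n → I) : Gen I n
  | x (a : Fin n) : Gen I n
  | tau (l : ℕ) (h : l + 1 < n) : Gen I n

variable (k) in
/-- The free algebra on the generators. -/
abbrev FA (I : Type) (n : ℕ) : Type := FreeAlgebra k (Gen I n)

variable (k) in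
def ge {n : ℕ} (ν : Fin n → I) : FA k I n := FreeAlgebra.ι k (Gen.e ν)

variable (k) in
def gx {n : ℕ} (a : Fin n) : FA k I n := FreeAlgebra.ι k (Gen.x a)

variable (k) in
def gt {n : ℕ} (l : ℕ) (h : l + 1 < n) : FA k I n := FreeAlgebra.ι k (Gen.tau l h)

/-- The polynomial `Q_{ij}(u,v)` evaluated on two elements of an algebra. -/
def Qel (C : CartanDatum k I) {A : Type} [Ring A] [Algebra k A] (i j : I) (u v : A) : A :=
  if i = j then 0 else
    ∑ p ∈ Finset.range ((-(C.a i j)).toNat + 1), ∑ q ∈ Finset.range ((-(C.a j i)).toNat + 1),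
      if C.d i * (p : ℤ) + C.d j * (q : ℤ) = -(C.d i * C.a i j) then
        C.t i j p q • (u ^ p * v ^ q) else 0

/-- The divided difference `(Q_{ij}(u,v) - Q_{ij}(w,v))/(u - w)` evaluated on elements. -/
def Qdiff (C : CartanDatum k I) {A : Type} [Ring A] [Algebra k A] (i j : I) (u v w : A) : A :=
  if i = j then 0 else
    ∑ p ∈ Finset.range ((-(C.a i j)).toNat + 1), ∑ q ∈ Finset.range ((-(C.a j i)).toNat + 1),
      if C.d i * (p : ℤ) + C.d j * (q : ℤ) = -(C.d i * C.a i j) then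
        C.t i j p q • ((∑ c ∈ Finset.range p, u ^ c * w ^ (p - 1 - c)) * v ^ q) else 0

/-- The defining relations of the KLR algebra `R(n)`. -/
inductive Rel (C : CartanDatum k I) (n : ℕ) : FA k I n → FA k I n → Prop
  | ee : ∀ ν ν' : Fin n → I, Rel C n (ge k ν * ge k ν') (if ν = ν' then ge k ν else 0)
  | esum : Rel C n (∑ ν : Fin n → I, ge k ν) 1
  | xx : ∀ a b : Fin n, Rel C n (gx k a * gx k b) (gx k b * gx k a)
  | xe : ∀ (a : Fin n) (ν : Fin n → I), Rel C n (gx k a * ge k ν) (ge k ν * gx k a)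
  | taue : ∀ (l : ℕ) (h : l + 1 < n) (ν : Fin n → I),
      Rel C n (gt k l h * ge k ν)
        (ge k (ν ∘ Equiv.swap (⟨l, Nat.lt_of_succ_lt h⟩ : Fin n) ⟨l + 1, h⟩) * gt k l h)
  | tautau : ∀ (l : ℕ) (h : l + 1 < n) (l' : ℕ) (h' : l' + 1 < n),
      (l + 1 < l' ∨ l' + 1 < l) →
      Rel C n (gt k l h * gt k l' h') (gt k l' h' * gt k l h)
  | tausq : ∀ (l : ℕ) (h : l + 1 < n) (ν : Fin n → I),
      Rel C n (gt k l h ^ 2 * ge k ν)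
        (Qel C (ν ⟨l, Nat.lt_of_succ_lt h⟩) (ν ⟨l + 1, h⟩)
          (gx k ⟨l, Nat.lt_of_succ_lt h⟩) (gx k ⟨l + 1, h⟩) * ge k ν)
  | taux : ∀ (l : ℕ) (h : l + 1 < n) (m : Fin n) (ν : Fin n → I),
      Rel C n ((gt k l h * gx k m
          - gx k (Equiv.swap (⟨l, Nat.lt_of_succ_lt h⟩ : Fin n) ⟨l + 1, h⟩ m) * gt k l h) * ge k ν)
        (if m = ⟨l, Nat.lt_of_succ_lt h⟩ ∧ ν ⟨l, Nat.lt_of_succ_lt h⟩ = ν ⟨l + 1, h⟩ then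
            -(ge k ν)
          else if m = (⟨l + 1, h⟩ : Fin n) ∧ ν ⟨l, Nat.lt_of_succ_lt h⟩ = ν ⟨l + 1, h⟩ then
            ge k ν
          else 0)
  | braid : ∀ (l : ℕ) (h2 : l + 2 < n) (ν : Fin n → I),
      Rel C n ((gt k (l + 1) h2 * gt k l (Nat.lt_of_succ_lt h2) * gt k (l + 1) h2
          - gt k l (Nat.lt_of_succ_lt h2) * gt k (l + 1) h2 * gt k l (Nat.lt_of_succ_lt h2))
          * ge k ν)
        (if ν ⟨l, Nat.lt_of_succ_lt (Nat.lt_of_succ_lt h2)⟩ = ν ⟨l + 2, h2⟩ then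
            Qdiff C (ν ⟨l, Nat.lt_of_succ_lt (Nat.lt_of_succ_lt h2)⟩)
              (ν ⟨l + 1, Nat.lt_of_succ_lt h2⟩)
              (gx k ⟨l, Nat.lt_of_succ_lt (Nat.lt_of_succ_lt h2)⟩)
              (gx k ⟨l + 1, Nat.lt_of_succ_lt h2⟩)
              (gx k ⟨l + 2, h2⟩) * ge k ν
          else 0)

/-- The Khovanov–Lauda–Rouquier algebra `R(n)`. -/
abbrev Alg (C : CartanDatum k I) (n : ℕ) : Type := RingQuot (Rel C n)

variable (C : CartanDatum k I)

/-- The generator `e(ν)` of `R(n)`. -/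
noncomputable def Ee {n : ℕ} (ν : Fin n → I) : Alg C n :=
  RingQuot.mkAlgHom k (Rel C n) (ge k ν)

/-- The generator `x_a` of `R(n)`. -/
noncomputable def Xx {n : ℕ} (a : Fin n) : Alg C n :=
  RingQuot.mkAlgHom k (Rel C n) (gx k a)

/-- The generator `τ_l` of `R(n)`. -/
noncomputable def Tt {n : ℕ} (l : ℕ) (h : l + 1 < n) : Alg C n :=
  RingQuot.mkAlgHom k (Rel C n) (gt k l h)

variable (I) in
/-- The height of `β = Σ k_i α_i`. -/
def ht (β : I → ℕ) : ℕ := ∑ i, β i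

/-- The content of a sequence `ν`. -/
def content {m : ℕ} (ν : Fin m → I) : I → ℕ :=
  fun i => (Finset.univ.filter (fun a => ν a = i)).card

/-- The set `I^β` of sequences of length `m` with content `β`. -/
def seqs (β : I → ℕ) (m : ℕ) : Finset (Fin m → I) :=
  Finset.univ.filter (fun ν => content ν = β)

/-- The central idempotent `e(β)` in `R(n)`. -/
noncomputable def eIdem (n : ℕ) (β : I → ℕ) : Alg C n := ∑ ν ∈ seqs β n, Ee C ν

/-- `β + α_i`. -/
def addA (β : I → ℕ) (i : I) : I → ℕ := fun j => β j + if j = i then 1 else 0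

/-- The idempotent `e(β, α_i)` of `R(n+1)` (sum over `ν ∈ I^{β+α_i}` with `ν_{n+1} = i`). -/
noncomputable def eR (n : ℕ) (β : I → ℕ) (i : I) : Alg C (n + 1) :=
  ∑ ν ∈ (seqs (addA β i) (n + 1)).filter (fun ν => ν (Fin.last n) = i), Ee C ν

/-- The idempotent `e(α_i, β)` of `R(n+1)` (sum over `ν ∈ I^{β+α_i}` with `ν_1 = i`). -/
noncomputable def eL (n : ℕ) (β : I → ℕ) (i : I) : Alg C (n + 1) :=
  ∑ ν ∈ (seqs (addA β i) (n + 1)).filter (fun ν => ν 0 = i), Ee C ν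

/-- The idempotent `e(β - α_i, α_i)` of `R(n)`: sum over `ν ∈ I^β` with last entry `i`;
this is `0` when the coefficient of `α_i` in `β` is `0` or `n = 0`. -/
noncomputable def eD (n : ℕ) (β : I → ℕ) (i : I) : Alg C n :=
  ∑ ν ∈ (seqs β n).filter (fun ν => if h : 0 < n then ν ⟨n - 1, Nat.sub_lt h one_pos⟩ = i
      else False), Ee C ν

/-- The relations defining `R(β) = R(n)e(β)` (a unital ring with unit the image of
`e(β)`): the KLR relations together with the relation `e(β) = 1`. -/
inductive URel (n : ℕ) (β : I → ℕ) : FA k I n → FA k I n → Prop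
  | base : ∀ {x y : FA k I n}, Rel C n x y → URel n β x y
  | unit : URel n β (∑ ν ∈ seqs β n, ge k ν) 1

/-- The algebra `R(β)`, realized as the quotient of `R(n)` identifying `e(β)` with `1`. -/
abbrev bAlg (n : ℕ) (β : I → ℕ) : Type := RingQuot (URel C n β)

/-- The canonical projection `R(n) → R(β)`. -/
noncomputable def toB {n : ℕ} {β : I → ℕ} : Alg C n →ₐ[k] bAlg C n β :=
  RingQuot.liftAlgHom (S := k)
    ⟨RingQuot.mkAlgHom k (URel C n β),
      fun _ _ h => RingQuot.mkAlgHom_rel k (URel.base h)⟩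

/-- The element `a^Λ(x_1)` at the level of the free algebra. -/
noncomputable def aLamF (Λ : I → ℕ) (n : ℕ) (β : I → ℕ) : FA k I n :=
  if h : 0 < n then
    ∑ ν ∈ seqs β n, (gx k (⟨0, h⟩ : Fin n)) ^ (Λ (ν ⟨0, h⟩)) * ge k ν
  else 0

/-- The element `a^Λ(x_1)` of `R(β)`. -/
noncomputable def aLam (Λ : I → ℕ) (n : ℕ) (β : I → ℕ) : bAlg C n β :=
  RingQuot.mkAlgHom k (URel C n β) (aLamF Λ n β)

/-- The relations defining the cyclotomic quotient `R^Λ(β)`. -/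
inductive CRel (Λ : I → ℕ) (n : ℕ) (β : I → ℕ) : FA k I n → FA k I n → Prop
  | base : ∀ {x y : FA k I n}, Rel C n x y → CRel Λ n β x y
  | unit : CRel Λ n β (∑ ν ∈ seqs β n, ge k ν) 1
  | cyc : CRel Λ n β (aLamF Λ n β) 0

/-- The cyclotomic KLR algebra `R^Λ(β)`. -/
abbrev cAlg (Λ : I → ℕ) (n : ℕ) (β : I → ℕ) : Type := RingQuot (CRel C Λ n β)

/-- The canonical projection `R(β) → R^Λ(β)`. -/
noncomputable def toC {Λ : I → ℕ} {n : ℕ} {β : I → ℕ} : bAlg C n β →ₐ[k] cAlg C Λ n β :=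
  RingQuot.liftAlgHom (S := k)
    ⟨RingQuot.mkAlgHom k (CRel C Λ n β),
      fun _ _ h => by
        cases h with
        | base hb => exact RingQuot.mkAlgHom_rel k (CRel.base hb)
        | unit => exact RingQuot.mkAlgHom_rel k CRel.unit⟩

/-- The canonical projection `R(n) → R^Λ(β)`. -/
noncomputable def toCB (Λ : I → ℕ) {n : ℕ} {β : I → ℕ} : Alg C n →ₐ[k] cAlg C Λ n β :=
  (toC C).comp (toB C)

end KLR
namespace KLR

variable {k : Type} [Field k] {I : Type} [Fintype I] [DecidableEq I] (C : CartanDatum k I)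

section Homs

/-- Characterization of the non-unital algebra homomorphism `R(n) → R(n+1)` adding `i`
on the right: `e(ν) ↦ e(ν∗(i))`, `x_a ↦ x_a e(…,α_i)`, `τ_l ↦ τ_l e(…,α_i)`,
where the relevant idempotent is supplied as `e`. -/
def IsUpR {n : ℕ} (i : I) (e : Alg C (n + 1)) (φ : Alg C n →ₙₐ[k] Alg C (n + 1)) : Prop :=
  (∀ ν : Fin n → I, φ (Ee C ν) = Ee C (Fin.snoc ν i)) ∧
  (∀ a : Fin n, φ (Xx C a) = Xx C a.castSucc * e) ∧
  (∀ (l : ℕ) (h : l + 1 < n), φ (Tt C l h) = Tt C l (Nat.lt_succ_of_lt h) * e)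

/-- Characterization of the non-unital algebra homomorphism `R(n) → R(n+1)` adding `i`
on the left: `e(ν) ↦ e((i)∗ν)`, `x_a ↦ x_{a+1} e(α_i,…)`, `τ_l ↦ τ_{l+1} e(α_i,…)`. -/
def IsUpL {n : ℕ} (i : I) (e : Alg C (n + 1)) (φ : Alg C n →ₙₐ[k] Alg C (n + 1)) : Prop :=
  (∀ ν : Fin n → I, φ (Ee C ν) = Ee C (Fin.cons i ν)) ∧
  (∀ a : Fin n, φ (Xx C a) = Xx C a.succ * e) ∧
  (∀ (l : ℕ) (h : l + 1 < n), φ (Tt C l h) = Tt C (l + 1) (Nat.succ_lt_succ h) * e)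

/-- Characterization of the non-unital homomorphism `R(β) → R(β+α_i)` (right version). -/
def IsUpRb {n : ℕ} {β γ' : I → ℕ} (i : I)
    (φ : bAlg C n β →ₙₐ[k] bAlg C (n + 1) γ') : Prop :=
  (∀ ν : Fin n → I, φ (toB C (Ee C ν)) = toB C (Ee C (Fin.snoc ν i))) ∧
  (∀ a : Fin n, φ (toB C (Xx C a)) = toB C (Xx C a.castSucc * eR C n β i)) ∧
  (∀ (l : ℕ) (h : l + 1 < n),
    φ (toB C (Tt C l h)) = toB C (Tt C l (Nat.lt_succ_of_lt h) * eR C n β i))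

/-- Characterization of the non-unital homomorphism `R(β) → R(β+α_i)` (left version). -/
def IsUpLb {n : ℕ} {β γ' : I → ℕ} (i : I)
    (φ : bAlg C n β →ₙₐ[k] bAlg C (n + 1) γ') : Prop :=
  (∀ ν : Fin n → I, φ (toB C (Ee C ν)) = toB C (Ee C (Fin.cons i ν))) ∧
  (∀ a : Fin n, φ (toB C (Xx C a)) = toB C (Xx C a.succ * eL C n β i)) ∧
  (∀ (l : ℕ) (h : l + 1 < n),
    φ (toB C (Tt C l h)) = toB C (Tt C (l + 1) (Nat.succ_lt_succ h) * eL C n β i))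

/-- Characterization of the non-unital homomorphism `R^Λ(β) → R^Λ(β+α_i)` (right version). -/
def IsUpRc (Λ : I → ℕ) {n : ℕ} {β γ' : I → ℕ} (i : I)
    (φ : cAlg C Λ n β →ₙₐ[k] cAlg C Λ (n + 1) γ') : Prop :=
  (∀ ν : Fin n → I, φ (toCB C Λ (Ee C ν)) = toCB C Λ (Ee C (Fin.snoc ν i))) ∧
  (∀ a : Fin n, φ (toCB C Λ (Xx C a)) = toCB C Λ (Xx C a.castSucc * eR C n β i)) ∧
  (∀ (l : ℕ) (h : l + 1 < n),
    φ (toCB C Λ (Tt C l h)) = toCB C Λ (Tt C l (Nat.lt_succ_of_lt h) * eR C n β i))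

end Homs

section Tensor

open scoped TensorProduct

variable (S B M : Type) [Ring S] [Algebra k S] [Ring B] [Algebra k B]
  [AddCommGroup M] [Module k M] [Module S M] [IsScalarTower k S M]

variable (k) in
/-- The relation submodule defining the balanced tensor product `B ⊗_S M` where `S`
acts on `B` on the right through the (non-unital) homomorphism `φ : S → B`. -/
def TRel (φ : S →ₙₐ[k] B) : Submodule B (B ⊗[k] M) :=
  Submodule.span B {z | ∃ (b : B) (r : S) (m : M), z = (b * φ r) ⊗ₜ[k] m - b ⊗ₜ[k] (r • m)}

variable (k) in
/-- The balanced tensor product `B ⊗_S M` (over the homomorphism `φ : S → B`). -/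
abbrev OT (φ : S →ₙₐ[k] B) : Type := (B ⊗[k] M) ⧸ TRel k S B M φ

variable (k) in
/-- The canonical projection onto the balanced tensor product. -/
def OTmk (φ : S →ₙₐ[k] B) (z : B ⊗[k] M) : OT k S B M φ := Submodule.Quotient.mk z

end Tensor

section ESub

variable (A : Type) [Ring A] [Algebra k A] (N : Type) [AddCommGroup N] [Module k N]
  [Module A N] [IsScalarTower k A N]

variable (k) in
/-- Multiplication by `e` as a `k`-linear endomorphism of an `A`-module. -/
def eMap (e : A) : N →ₗ[k] N where
  toFun x := e • x
  map_add' x y := smul_add e x y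
  map_smul' c x := by
    simp only [RingHom.id_apply]
    rw [← algebraMap_smul A c x, ← mul_smul, ← Algebra.commutes, mul_smul, algebraMap_smul]

variable (k) in
/-- The `k`-submodule `eN` of an `A`-module `N`. -/
def eSub (e : A) : Submodule k N := LinearMap.range (eMap k A N e)

end ESub

section Grading

variable {A M : Type}

variable (k) in
/-- `𝒜` is an algebra grading of `A`. -/
def IsAlgGrading [Ring A] [Algebra k A] (𝒜 : ℤ → Submodule k A) : Prop :=
  (1 : A) ∈ 𝒜 0 ∧ (∀ {c₁ c₂ : ℤ} {a b : A}, a ∈ 𝒜 c₁ → b ∈ 𝒜 c₂ → a * b ∈ 𝒜 (c₁ + c₂)) ∧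
    DirectSum.IsInternal 𝒜

variable (k) in
/-- `gr` is a grading of the `A`-module `M` compatible with the algebra grading `𝒜`. -/
def IsModGrading [Ring A] [Algebra k A] [AddCommGroup M] [Module k M] [Module A M]
    (𝒜 : ℤ → Submodule k A) (gr : ℤ → Submodule k M) : Prop :=
  DirectSum.IsInternal gr ∧
    ∀ {c m : ℤ} {a : A} {x : M}, a ∈ 𝒜 c → x ∈ gr m → a • x ∈ gr (c + m)

end Grading

section KLRGrading

/-- The canonical grading property for `R(n)`-type quotients: images of `e(ν)` have degree 0,
`x_a e(ν)` has degree `(α_{ν_a}, α_{ν_a})`, and `τ_l e(ν)` has degree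
`-(α_{ν_l}, α_{ν_{l+1}})`.  Here `p : R(n) → A` is the canonical projection onto the
quotient under consideration. -/
def IsKLRGrading {n : ℕ} {A : Type} [Ring A] [Algebra k A] (p : Alg C n →ₐ[k] A)
    (𝒜 : ℤ → Submodule k A) : Prop :=
  IsAlgGrading k 𝒜 ∧
  (∀ ν : Fin n → I, p (Ee C ν) ∈ 𝒜 0) ∧
  (∀ (a : Fin n) (ν : Fin n → I), p (Xx C a * Ee C ν) ∈ 𝒜 (B C (ν a) (ν a))) ∧
  (∀ (l : ℕ) (h : l + 1 < n) (ν : Fin n → I),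
    p (Tt C l h * Ee C ν) ∈ 𝒜 (-(B C (ν ⟨l, Nat.lt_of_succ_lt h⟩) (ν ⟨l + 1, h⟩))))

end KLRGrading

end KLR
namespace KLR

open scoped TensorProduct

variable {k : Type} [Field k] {I : Type} [Fintype I] [DecidableEq I] (C : CartanDatum k I)

section IndGrading

variable (S B M : Type) [Ring S] [Algebra k S] [Ring B] [Algebra k B]
  [AddCommGroup M] [Module k M] [Module S M] [IsScalarTower k S M]

variable (k) in
/-- The induced grading on the balanced tensor product `B ⊗_S M`. -/
def otGr (φ : S →ₙₐ[k] B) (𝒜 : ℤ → Submodule k B) (gr : ℤ → Submodule k M)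
    (c : ℤ) : Submodule k (OT k S B M φ) :=
  Submodule.span k {z | ∃ (c₁ c₂ : ℤ) (b : B) (m : M),
    c₁ + c₂ = c ∧ b ∈ 𝒜 c₁ ∧ m ∈ gr c₂ ∧ z = OTmk k S B M φ (b ⊗ₜ[k] m)}

end IndGrading

section ESubGrading

variable (A N : Type) [Ring A] [Algebra k A] [AddCommGroup N] [Module k N]
  [Module A N] [IsScalarTower k A N]

variable (k) in
/-- The induced grading on the submodule `eN ⊆ N`. -/
def eSubGr (e : A) (gr : ℤ → Submodule k N) (c : ℤ) : Submodule k ↥(eSub k A N e) :=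
  (gr c).comap (eSub k A N e).subtype

end ESubGrading

section Instances

variable (n : ℕ) (β : I → ℕ) (Λ : I → ℕ)

noncomputable instance : Module (bAlg C n β) (cAlg C Λ n β) :=
  Module.compHom _ (toC C (Λ := Λ) (n := n) (β := β)).toRingHom

instance : IsScalarTower k (bAlg C n β) (cAlg C Λ n β) := by
  constructor
  intro c s m
  show (toC C (c • s)) * m = c • (toC C s * m)
  rw [map_smul, Algebra.smul_mul_assoc]

end Instances


end KLR
namespace KLR

open scoped TensorProduct

variable {k : Type} [Field k] {I : Type} [Fintype I] [DecidableEq I] (C : CartanDatum k I)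

/-- `⟨h_i, β⟩ = Σ_j k_j a_{ij}`. -/
def pairH (i : I) (β : I → ℕ) : ℤ := ∑ j, (β j : ℤ) * C.a i j

/-- `(α_i, β) = Σ_j k_j (α_i, α_j)`. -/
def pairB (i : I) (β : I → ℕ) : ℤ := ∑ j, (β j : ℤ) * B C i j

/-- The ordered product `τ_1 τ_2 ⋯ τ_n` in `R(β+α_i)`-type quotients. -/
noncomputable def tauProd (n : ℕ) (γ : I → ℕ) : bAlg C (n + 1) γ :=
  (List.ofFn (fun l : Fin n => toB C (Tt C l.val (Nat.succ_lt_succ l.isLt)))).prod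

/-- The right ideal `Ae` as a `k`-submodule. -/
noncomputable def rId {A : Type} [Ring A] [Algebra k A] (e : A) : Submodule k A :=
  LinearMap.range (LinearMap.mulRight k e)

/-- The left ideal `eA` as a `k`-submodule. -/
noncomputable def lId {A : Type} [Ring A] [Algebra k A] (e : A) : Submodule k A :=
  LinearMap.range (LinearMap.mulLeft k e)

variable (k) in
/-- Characterization of the module structure on `eN` over `S'` acting through
the (non-unital) homomorphism `φ : S' → A`. -/
def IsEAction {A N S' : Type} [Ring A] [Algebra k A] [AddCommGroup N] [Module k N]
    [Module A N] [IsScalarTower k A N] [Ring S'] [Algebra k S']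
    (e : A) (φ : S' →ₙₐ[k] A) (inst : Module S' ↥(eSub k A N e)) : Prop :=
  letI := inst
  ∀ (r : S') (x : ↥(eSub k A N e)), ((r • x : ↥(eSub k A N e)) : N) = φ r • (x : N)

end KLR

namespace KLR

variable {k : Type} [Field k] {I : Type} [Fintype I] [DecidableEq I] (C : CartanDatum k I)

/-- The image of `e(β,α_i)` in `R(β+α_i)`. -/
noncomputable def eRb (n : ℕ) (β : I → ℕ) (i : I) : bAlg C (n + 1) (addA β i) :=
  toB C (eR C n β i)

/-- The image of `e(α_i,β)` in `R(β+α_i)`. -/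
noncomputable def eLb (n : ℕ) (β : I → ℕ) (i : I) : bAlg C (n + 1) (addA β i) :=
  toB C (eL C n β i)

/-- The image of `e(β-α_i,α_i)` in `R(β)`. -/
noncomputable def eDb (n : ℕ) (β : I → ℕ) (i : I) : bAlg C n β :=
  toB C (eD C n β i)

/-- The image of `e(β,α_i)` in `R^Λ(β+α_i)`. -/
noncomputable def eRc (Λ : I → ℕ) (n : ℕ) (β : I → ℕ) (i : I) :
    cAlg C Λ (n + 1) (addA β i) :=
  toCB C Λ (eR C n β i)

/-- The image of `e(β-α_i,α_i)` in `R^Λ(β)`. -/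
noncomputable def eDc (Λ : I → ℕ) (n : ℕ) (β : I → ℕ) (i : I) : cAlg C Λ n β :=
  toCB C Λ (eD C n β i)

end KLR

namespace KLR

variable {k : Type} [Field k] {I : Type} [Fintype I] [DecidableEq I]

variable (k) in
/-- Bundled data of the canonical module structure on `eN` over `S'`, acting through
the non-unital homomorphism `φ : S' → A`, together with its scalar-tower property. -/
structure EData {A S' : Type} (N : Type) [Ring A] [Algebra k A] [AddCommGroup N]
    [Module k N] [Module A N] [IsScalarTower k A N] [Ring S'] [Algebra k S']
    (e : A) (φ : S' →ₙₐ[k] A) : Type where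
  inst : Module S' ↥(eSub k A N e)
  compat : IsEAction k e φ inst
  tower : letI := inst; IsScalarTower k S' ↥(eSub k A N e)

end KLR

namespace KLR
/-- `β - α_i` (truncated subtraction). -/
def subA {I : Type} [DecidableEq I] (β : I → ℕ) (i : I) : I → ℕ :=
  fun j => β j - if j = i then 1 else 0
end KLR

set_option linter.unusedSectionVars false
set_option linter.unusedSimpArgs false
set_option linter.unusedVariables false

namespace KLR

section RepField

variable (k : Type) [Field k]

/-- The field of rational functions in the variables `x_0, x_1, …`. -/
abbrev KK : Type := FractionRing (MvPolynomial ℕ k)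

/-- The variables. -/
noncomputable def xv (j : ℕ) : KK k := algebraMap (MvPolynomial ℕ k) (KK k) (MvPolynomial.X j)

/-- Permutation of variables. -/
noncomputable def act (w : Equiv.Perm ℕ) : KK k ≃ₐ[k] KK k :=
  IsFractionRing.fieldEquivOfAlgEquiv k (KK k) (KK k) (MvPolynomial.renameEquiv k w)

theorem act_xv (w : Equiv.Perm ℕ) (j : ℕ) : act k w (xv k j) = xv k (w j) := by
  simp [act, xv]

theorem act_act (w w' : Equiv.Perm ℕ) (f : KK k) :
    act k w (act k w' f) = act k (w * w') f := by
  have : (MvPolynomial.renameEquiv k (w * w')) =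
      (MvPolynomial.renameEquiv k w').trans (MvPolynomial.renameEquiv k w) := by
    ext p
    simp
  rw [act, act, act, this, IsFractionRing.fieldEquivOfAlgEquiv_trans _ _ (KK k)]
  rfl

theorem act_one (f : KK k) : act k 1 f = f := by
  have : (MvPolynomial.renameEquiv k (1 : Equiv.Perm ℕ)) = AlgEquiv.refl := by
    ext p
    simp
  rw [act, this, IsFractionRing.fieldEquivOfAlgEquiv_refl]
  rfl

theorem xv_injective : Function.Injective (xv k) := by
  intro a b h
  exact MvPolynomial.X_injective (IsFractionRing.injective (MvPolynomial ℕ k) (KK k) h)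

end RepField

variable {k : Type} [Field k] {I : Type} [Fintype I] [DecidableEq I] (C : CartanDatum k I)

theorem map_Qel {A A' : Type} [Ring A] [Algebra k A] [Ring A'] [Algebra k A']
    (g : A →ₐ[k] A') (i j : I) (u v : A) :
    g (Qel C i j u v) = Qel C i j (g u) (g v) := by
  unfold Qel
  split_ifs
  · simp
  · rw [map_sum]
    refine Finset.sum_congr rfl fun p _ => ?_
    rw [map_sum]
    refine Finset.sum_congr rfl fun q _ => ?_
    split_ifs <;> simp

theorem map_Qdiff {A A' : Type} [Ring A] [Algebra k A] [Ring A'] [Algebra k A']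
    (g : A →ₐ[k] A') (i j : I) (u v w : A) :
    g (Qdiff C i j u v w) = Qdiff C i j (g u) (g v) (g w) := by
  unfold Qdiff
  split_ifs
  · simp
  · rw [map_sum]
    refine Finset.sum_congr rfl fun p _ => ?_
    rw [map_sum]
    refine Finset.sum_congr rfl fun q _ => ?_
    split_ifs <;> simp [map_sum]

theorem Qel_symm {A : Type} [CommRing A] [Algebra k A] (i j : I) (u v : A) :
    Qel C i j u v = Qel C j i v u := by
  unfold Qel
  by_cases hij : i = j
  · rw [if_pos hij, if_pos hij.symm]
  · rw [if_neg hij, if_neg (Ne.symm hij), Finset.sum_comm]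
    refine Finset.sum_congr rfl fun p _ => ?_
    refine Finset.sum_congr rfl fun q _ => ?_
    have h1 : (C.d i * (q : ℤ) + C.d j * (p : ℤ) = -(C.d i * C.a i j)) ↔
        (C.d j * (p : ℤ) + C.d i * (q : ℤ) = -(C.d j * C.a j i)) := by
      rw [C.symmetrize i j, add_comm]
    simp only [h1, C.t_symm i j q p, mul_comm (u ^ q)]

theorem Qdiff_mul {A : Type} [CommRing A] [Algebra k A] (i j : I) (u v w : A) :
    (u - w) * Qdiff C i j u v w = Qel C i j u v - Qel C i j w v := by
  unfold Qel Qdiff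
  split_ifs
  · simp
  · rw [Finset.mul_sum, ← Finset.sum_sub_distrib]
    refine Finset.sum_congr rfl fun p _ => ?_
    rw [Finset.mul_sum, ← Finset.sum_sub_distrib]
    refine Finset.sum_congr rfl fun q _ => ?_
    split_ifs
    · rw [mul_smul_comm, ← smul_sub, ← mul_assoc, mul_comm (u - w), geom_sum₂_mul, sub_mul]
    · simp

theorem Qel_ne_zero {i j : I} (hij : i ≠ j) {l m : ℕ} (hlm : l ≠ m) :
    Qel C i j (xv k l) (xv k m) ≠ 0 := by
  have h0 : Qel C i j (xv k l) (xv k m) = algebraMap (MvPolynomial ℕ k) (KK k)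
      (Qel C i j (MvPolynomial.X l) (MvPolynomial.X m)) :=
    (map_Qel C (IsScalarTower.toAlgHom k (MvPolynomial ℕ k) (KK k)) i j _ _).symm
  rw [h0]
  intro h
  rw [map_eq_zero_iff _ (IsFractionRing.injective (MvPolynomial ℕ k) (KK k))] at h
  -- specialise `X m ↦ 0`, `X l ↦ T`
  have h2 := congrArg (MvPolynomial.aeval
    (fun a : ℕ => if a = l then (Polynomial.X : Polynomial k) else 0)) h
  rw [map_Qel, map_zero] at h2
  simp only [MvPolynomial.aeval_X, if_true, if_neg (Ne.symm hlm)] at h2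
  have h3 := congrArg (fun p => Polynomial.coeff p (-(C.a i j)).toNat) h2
  unfold Qel at h3
  rw [if_neg hij] at h3
  simp only [Polynomial.finsetSum_coeff, Polynomial.coeff_zero] at h3
  rw [Finset.sum_eq_single (-(C.a i j)).toNat, Finset.sum_eq_single 0] at h3
  · have : (C.d i * (((-(C.a i j)).toNat : ℕ) : ℤ) + C.d j * ((0 : ℕ) : ℤ)
        = -(C.d i * C.a i j)) := by
      rw [Int.toNat_of_nonneg (by have := C.a_nonpos i j hij; omega)]
      push_cast
      ring
    rw [if_pos this] at h3
    simp at h3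
    exact C.t_lead i j hij h3
  · intro q _ hq
    split_ifs
    · simp [hq]
    · simp
  · simp
  · intro p _ hp
    refine Finset.sum_eq_zero fun q _ => ?_
    split_ifs
    · rcases Nat.eq_zero_or_pos q with rfl | hq
      · simp [Polynomial.coeff_X_pow, Ne.symm hp]
      · simp [hq.ne']
    · simp
  · simp

/-- Auxiliary ordering of the index set. -/
noncomputable def ordI (i : I) : ℕ := (Fintype.equivFin I i).val

theorem ordI_injective : Function.Injective (ordI : I → ℕ) := by
  intro a b h
  exact (Fintype.equivFin I).injective (Fin.ext h)

/-- The polynomials `P_{ij}` with `P_{ij}(u,v) P_{ji}(v,u) = Q_{ij}(u,v)`. -/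
noncomputable def PP {A : Type} [Ring A] [Algebra k A] (i j : I) (u v : A) : A :=
  if ordI i < ordI j then Qel C i j u v else 1

theorem PP_mul {A : Type} [CommRing A] [Algebra k A] {i j : I} (hij : i ≠ j) (u v : A) :
    PP C i j u v * PP C j i v u = Qel C i j u v := by
  unfold PP
  rcases lt_trichotomy (ordI i) (ordI j) with h | h | h
  · rw [if_pos h, if_neg (not_lt.2 h.le), mul_one]
  · exact absurd (ordI_injective h) hij
  · rw [if_pos h, if_neg (not_lt.2 h.le), one_mul, Qel_symm]

/-- coefficient of the permutation part of `τ`. -/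
noncomputable def cc (a b : I) (u v : KK k) : KK k :=
  if a = b then (u - v)⁻¹ else PP C b a v u

/-- coefficient of the scalar part of `τ`. -/
noncomputable def dd (a b : I) (u v : KK k) : KK k :=
  if a = b then (u - v)⁻¹ else 0

theorem act_cc (w : Equiv.Perm ℕ) (a b : I) (u v : KK k) :
    act k w (cc C a b u v) = cc C a b (act k w u) (act k w v) := by
  unfold cc PP
  split_ifs
  · simp
  · exact map_Qel C (act k w).toAlgHom b a v u
  · simp

theorem act_dd (w : Equiv.Perm ℕ) (a b : I) (u v : KK k) :
    act k w (dd a b u v) = dd a b (act k w u) (act k w v) := by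
  unfold dd
  split_ifs <;> simp

theorem cc_ne_zero (a b : I) {l m : ℕ} (h : l ≠ m) : cc C a b (xv k l) (xv k m) ≠ 0 := by
  unfold cc PP
  split_ifs with h1
  · exact inv_ne_zero (sub_ne_zero.2 fun h' => h (xv_injective k h'))
  · exact Qel_ne_zero C (Ne.symm h1) h.symm
  · exact one_ne_zero

variable (k I) in
/-- The representation space. -/
abbrev VV : Type := (ℕ → I) → KK k

/-- simple transposition -/
def sw (l : ℕ) : Equiv.Perm ℕ := Equiv.swap l (l + 1)

/-- The operator of `τ_l`. -/
noncomputable def tauOp (l : ℕ) : Module.End k (VV k I) where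
  toFun f μ := cc C (μ l) (μ (l + 1)) (xv k l) (xv k (l + 1)) * act k (sw l) (f (μ ∘ sw l))
    - dd (μ l) (μ (l + 1)) (xv k l) (xv k (l + 1)) * f μ
  map_add' f g := by
    funext μ
    simp only [Pi.add_apply, map_add]
    ring
  map_smul' c f := by
    funext μ
    simp only [Pi.smul_apply, map_smul, RingHom.id_apply, smul_sub, mul_smul_comm]

theorem tauOp_apply (l : ℕ) (f : VV k I) (μ : ℕ → I) :
    tauOp C l f μ = cc C (μ l) (μ (l + 1)) (xv k l) (xv k (l + 1)) * act k (sw l) (f (μ ∘ sw l))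
    - dd (μ l) (μ (l + 1)) (xv k l) (xv k (l + 1)) * f μ := rfl

theorem sw_l (l : ℕ) : sw l l = l + 1 := by simp [sw]
theorem sw_l1 (l : ℕ) : sw l (l + 1) = l := by simp [sw]
theorem sw_ne {l j : ℕ} (h : j ≠ l) (h' : j ≠ l + 1) : sw l j = j := by
  simp [sw, Equiv.swap_apply_of_ne_of_ne h h']

theorem sw_sw (l : ℕ) : sw l * sw l = 1 := by simp [sw]

theorem sw_comp_sw (l : ℕ) (μ : ℕ → I) : (μ ∘ sw l) ∘ sw l = μ := by
  funext j
  show μ ((sw l * sw l) j) = μ j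
  rw [sw_sw]
  rfl

theorem comp_sw_eq {l : ℕ} {μ : ℕ → I} (h : μ l = μ (l + 1)) : μ ∘ sw l = μ := by
  funext j
  show μ (sw l j) = μ j
  by_cases h1 : j = l
  · rw [h1, sw_l, h]
  by_cases h2 : j = l + 1
  · rw [h2, sw_l1, h]
  · rw [sw_ne h1 h2]

theorem act_sw_sw (l : ℕ) (f : KK k) : act k (sw l) (act k (sw l) f) = f := by
  rw [act_act, sw_sw, act_one]

theorem xv_sub_ne {a b : ℕ} (h : a ≠ b) : xv k a - xv k b ≠ 0 :=
  sub_ne_zero.2 fun h' => h (xv_injective k h')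

theorem tauOp_sq (l : ℕ) (f : VV k I) (μ : ℕ → I) :
    tauOp C l (tauOp C l f) μ = Qel C (μ l) (μ (l + 1)) (xv k l) (xv k (l + 1)) * f μ := by
  simp only [tauOp_apply, map_sub, map_mul, act_cc, act_dd, act_xv, sw_l, sw_l1,
    Function.comp_apply, sw_comp_sw, act_sw_sw]
  by_cases h : μ l = μ (l + 1)
  · have h1 := xv_sub_ne (k := k) (show l ≠ l + 1 by omega)
    have h2 := xv_sub_ne (k := k) (show l + 1 ≠ l by omega)
    rw [comp_sw_eq h]
    simp only [cc, dd, h, if_true, Qel]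
    rw [← neg_sub (xv k l) (xv k (l + 1)), inv_neg]
    ring
  · simp only [cc, dd, h, Ne.symm h, if_false]
    rw [Qel_symm, ← PP_mul C (Ne.symm h)]
    ring

theorem sw_comm {l m : ℕ} (h : l + 1 < m ∨ m + 1 < l) : sw l * sw m = sw m * sw l := by
  ext j
  simp only [Equiv.Perm.mul_apply, sw, Equiv.swap_apply_def]
  split_ifs <;> omega

theorem sw_braid (l : ℕ) : sw (l + 1) * sw l * sw (l + 1) = sw l * sw (l + 1) * sw l := by
  ext j
  simp only [Equiv.Perm.mul_apply, sw, Equiv.swap_apply_def]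
  split_ifs <;> omega

theorem tauOp_comm {l m : ℕ} (h : l + 1 < m ∨ m + 1 < l) (f : VV k I) :
    tauOp C l (tauOp C m f) = tauOp C m (tauOp C l f) := by
  funext μ
  have e1 : (μ ∘ sw l) ∘ sw m = (μ ∘ sw m) ∘ sw l := by
    rw [Function.comp_assoc, Function.comp_assoc]
    congr 1
    exact congrArg DFunLike.coe (sw_comm h)
  have e2 : ∀ g, act k (sw l) (act k (sw m) g) = act k (sw m) (act k (sw l) g) := by
    intro g
    rw [act_act, act_act, sw_comm h]
  have a1 : sw l m = m := sw_ne (by omega) (by omega)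
  have a2 : sw l (m + 1) = m + 1 := sw_ne (by omega) (by omega)
  have a3 : sw m l = l := sw_ne (by omega) (by omega)
  have a4 : sw m (l + 1) = l + 1 := sw_ne (by omega) (by omega)
  simp only [tauOp_apply, map_sub, map_mul, act_cc, act_dd, act_xv, Function.comp_apply,
    a1, a2, a3, a4, e1, e2]
  ring

theorem tauOp_x (l m : ℕ) (f : VV k I) (μ : ℕ → I) :
    tauOp C l (fun ν => xv k m * f ν) μ - xv k (sw l m) * tauOp C l f μ =
      (if m = l ∧ μ l = μ (l + 1) then -1 else if m = l + 1 ∧ μ l = μ (l + 1) then 1 else 0)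
        * f μ := by
  simp only [tauOp_apply, map_mul, act_xv]
  by_cases h : μ l = μ (l + 1)
  · have h1 := xv_sub_ne (k := k) (show l ≠ l + 1 by omega)
    by_cases m1 : m = l
    · subst m1
      simp only [cc, dd, h, if_true, sw_l, and_self]
      field_simp
      ring
    by_cases m2 : m = l + 1
    · subst m2
      have : ¬ (l + 1 = l) := by omega
      simp only [cc, dd, h, if_true, sw_l1, this, false_and, and_self, if_false]
      field_simp
      ring
    · simp only [cc, dd, h, if_true, sw_ne m1 m2, m1, m2, false_and, if_false]
      ring
  · simp only [cc, dd, h, if_false, and_false]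
    ring

theorem tauOp_braid (l : ℕ) (f : VV k I) (μ : ℕ → I) :
    tauOp C (l + 1) (tauOp C l (tauOp C (l + 1) f)) μ
      - tauOp C l (tauOp C (l + 1) (tauOp C l f)) μ =
    (if μ l = μ (l + 2) then
      Qdiff C (μ l) (μ (l + 1)) (xv k l) (xv k (l + 1)) (xv k (l + 2)) else 0) * f μ := by
  have e1 : (((μ ∘ sw (l + 1)) ∘ sw l) ∘ sw (l + 1)) = (((μ ∘ sw l) ∘ sw (l + 1)) ∘ sw l) := by
    rw [Function.comp_assoc, Function.comp_assoc, Function.comp_assoc, Function.comp_assoc]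
    congr 1
    exact congrArg DFunLike.coe (sw_braid l)
  have e2 : ∀ g, act k (sw (l + 1)) (act k (sw l) (act k (sw (l + 1)) g))
      = act k (sw l) (act k (sw (l + 1)) (act k (sw l) g)) := by
    intro g
    rw [act_act, act_act, act_act, act_act, sw_braid]
  have a1 : sw l l = l + 1 := sw_l l
  have a2 : sw l (l + 1) = l := sw_l1 l
  have a3 : sw l (l + 2) = l + 2 := sw_ne (by omega) (by omega)
  have a4 : sw (l + 1) l = l := sw_ne (by omega) (by omega)
  have a5 : sw (l + 1) (l + 1) = l + 2 := sw_l (l + 1)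
  have a6 : sw (l + 1) (l + 2) = l + 1 := sw_l1 (l + 1)
  have h1 := xv_sub_ne (k := k) (show l ≠ l + 1 by omega)
  have h2 := xv_sub_ne (k := k) (show l + 1 ≠ l + 2 by omega)
  have h3 := xv_sub_ne (k := k) (show l ≠ l + 2 by omega)
  have h1' := xv_sub_ne (k := k) (show l + 1 ≠ l by omega)
  have h2' := xv_sub_ne (k := k) (show l + 2 ≠ l + 1 by omega)
  have h3' := xv_sub_ne (k := k) (show l + 2 ≠ l by omega)
  simp only [tauOp_apply, map_sub, map_mul, act_cc, act_dd, act_xv, Function.comp_apply,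
    show l + 1 + 1 = l + 2 from rfl,
    a1, a2, a3, a4, a5, a6, e1, e2, sw_comp_sw, act_sw_sw]
  by_cases hab : μ l = μ (l + 1)
  · by_cases hbc : μ (l + 1) = μ (l + 2)
    · -- all equal
      have hac := hab.trans hbc
      have s1 : μ ∘ sw l = μ := comp_sw_eq hab
      have s2 : μ ∘ sw (l + 1) = μ := comp_sw_eq hbc
      simp only [s1, s2, cc, dd, hab, hbc, if_true, Qdiff, act_sw_sw]
      field_simp
      ring
    · -- a = b ≠ c
      have hac : ¬ μ l = μ (l + 2) := fun h => hbc (hab ▸ h)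
      have s1 : μ ∘ sw l = μ := comp_sw_eq hab
      have s2 : ((μ ∘ sw (l + 1)) ∘ sw l) ∘ sw (l + 1) = (μ ∘ sw (l + 1)) ∘ sw l := by
        refine comp_sw_eq ?_
        simp only [Function.comp_apply, show l + 1 + 1 = l + 2 from rfl, a1, a2, a3, a4, a5, a6]
        exact hab
      rw [e1] at s2
      simp only [s1] at s2 ⊢
      simp only [s2, cc, dd, hab, hbc, hac, Ne.symm hbc, if_true, if_false]
      ring
  · by_cases hbc : μ (l + 1) = μ (l + 2)
    · have hac : ¬ μ l = μ (l + 2) := fun h => hab (h.trans hbc.symm)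
      have s1 : μ ∘ sw (l + 1) = μ := comp_sw_eq hbc
      have s2 : ((μ ∘ sw l) ∘ sw (l + 1)) ∘ sw l = (μ ∘ sw l) ∘ sw (l + 1) := by
        refine comp_sw_eq ?_
        simp only [Function.comp_apply, show l + 1 + 1 = l + 2 from rfl, a1, a2, a3, a4, a5, a6]
        exact hbc
      simp only [s1, s2, cc, dd, hab, hbc, hac, Ne.symm hab, if_true, if_false]
      rw [← hbc]
      simp only [hab, Ne.symm hab, if_false]
      ring
    · by_cases hac : μ l = μ (l + 2)
      · have s2 : ((μ ∘ sw l) ∘ sw (l + 1)) = ((μ ∘ sw l) ∘ sw (l + 1)) := rfl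
        have hQ := Qdiff_mul C (μ l) (μ (l + 1)) (xv k l) (xv k (l + 1)) (xv k (l + 2))
        rw [← PP_mul C hab, ← PP_mul C hab] at hQ
        have hQ' : Qdiff C (μ l) (μ (l + 1)) (xv k l) (xv k (l + 1)) (xv k (l + 2)) =
            (PP C (μ l) (μ (l + 1)) (xv k l) (xv k (l + 1)) *
              PP C (μ (l + 1)) (μ l) (xv k (l + 1)) (xv k l) -
            PP C (μ l) (μ (l + 1)) (xv k (l + 2)) (xv k (l + 1)) *
              PP C (μ (l + 1)) (μ l) (xv k (l + 1)) (xv k (l + 2))) / (xv k l - xv k (l + 2)) := by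
          rw [← hQ]
          field_simp
        simp only [cc, dd, hab, Ne.symm hab, hac.symm, if_true, if_false]
        rw [hQ']
        have s3 : ((μ ∘ sw (l + 1)) ∘ sw l) ∘ sw (l + 1) = ((μ ∘ sw (l + 1)) ∘ sw l) ∘ sw (l + 1) := rfl
        field_simp
        ring
      · simp only [cc, dd, hab, hbc, hac, Ne.symm hab, Ne.symm hbc, Ne.symm hac, if_false]
        ring

end KLR

set_option linter.unusedSectionVars false
set_option linter.unusedSimpArgs false
set_option linter.unusedVariables false

namespace KLR
section RepDef
variable {k : Type} [Field k] {I : Type} [Fintype I] [DecidableEq I] (C : CartanDatum k I)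

/-- Restriction of an infinite sequence. -/
def resn (n : ℕ) (μ : ℕ → I) : Fin n → I := fun a => μ a

variable (k) in
/-- Indicator function of the sequences extending `ν`. -/
noncomputable def indV {n : ℕ} (ν : Fin n → I) : VV k I := fun μ => if resn n μ = ν then 1 else 0

/-- Action of the generators. -/
noncomputable def genOp (n : ℕ) : Gen I n → Module.End k (VV k I)
  | Gen.e ν => Algebra.lmul k (VV k I) (indV k ν)
  | Gen.x a => Algebra.lmul k (VV k I) (fun _ => xv k a)
  | Gen.tau l _ => tauOp C l

/-- Lift to the free algebra. -/
noncomputable def freeRep (n : ℕ) : FA k I n →ₐ[k] Module.End k (VV k I) :=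
  FreeAlgebra.lift k (genOp C n)

theorem freeRep_e {n : ℕ} (ν : Fin n → I) (f : VV k I) (μ : ℕ → I) :
    freeRep C n (ge k ν) f μ = if resn n μ = ν then f μ else 0 := by
  simp [freeRep, ge, genOp, indV]

theorem freeRep_x {n : ℕ} (a : Fin n) :
    freeRep C n (gx k a) = Algebra.lmul k (VV k I) (fun _ => xv k a) := by
  simp [freeRep, gx, genOp]

theorem freeRep_x_apply {n : ℕ} (a : Fin n) (f : VV k I) (μ : ℕ → I) :
    freeRep C n (gx k a) f μ = xv k a * f μ := by
  simp [freeRep, gx, genOp]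

theorem freeRep_t {n : ℕ} (l : ℕ) (h : l + 1 < n) :
    freeRep C n (gt k l h) = tauOp C l := by
  simp [freeRep, gt, genOp]

theorem lmul_Qel (i j : I) (g h : VV k I) (f : VV k I) (μ : ℕ → I) :
    Qel C i j (Algebra.lmul k (VV k I) g) (Algebra.lmul k (VV k I) h) f μ =
      Qel C i j (g μ) (h μ) * f μ := by
  rw [← map_Qel]
  simp only [Algebra.coe_lmul_eq_mul, LinearMap.mul_apply_apply, Pi.mul_apply]
  congr 1
  exact map_Qel C (Pi.evalAlgHom k (fun _ : ℕ → I => KK k) μ) i j g h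

theorem lmul_Qdiff (i j : I) (g h g' : VV k I) (f : VV k I) (μ : ℕ → I) :
    Qdiff C i j (Algebra.lmul k (VV k I) g) (Algebra.lmul k (VV k I) h)
      (Algebra.lmul k (VV k I) g') f μ =
      Qdiff C i j (g μ) (h μ) (g' μ) * f μ := by
  rw [← map_Qdiff]
  simp only [Algebra.coe_lmul_eq_mul, LinearMap.mul_apply_apply, Pi.mul_apply]
  congr 1
  exact map_Qdiff C (Pi.evalAlgHom k (fun _ : ℕ → I => KK k) μ) i j g h g'

theorem resn_sw {n l : ℕ} (h : l + 1 < n) (μ : ℕ → I) :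
    resn n (μ ∘ sw l) =
      resn n μ ∘ Equiv.swap (⟨l, Nat.lt_of_succ_lt h⟩ : Fin n) ⟨l + 1, h⟩ := by
  funext a
  simp only [resn, Function.comp_apply, sw, Equiv.swap_apply_def, Fin.ext_iff]
  split_ifs <;> rfl

theorem comp_swap_eq_iff {n : ℕ} (a b : Fin n) (μ ν : Fin n → I) :
    μ ∘ Equiv.swap a b = ν ↔ μ = ν ∘ Equiv.swap a b := by
  constructor
  · rintro rfl
    funext j
    simp
  · rintro rfl
    funext j
    simp

theorem freeRep_rel {n : ℕ} {a b : FA k I n} (h : Rel C n a b) :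
    freeRep C n a = freeRep C n b := by
  refine LinearMap.ext fun f => funext fun μ => ?_
  cases h with
  | ee ν ν' =>
    rw [map_mul, Module.End.mul_apply, freeRep_e, freeRep_e]
    by_cases h : ν = ν'
    · subst h
      rw [if_pos rfl, freeRep_e]
      split_ifs <;> rfl
    · rw [if_neg h, map_zero]
      split_ifs with h1 h2
      · exact absurd (h1.symm.trans h2) h
      · rfl
      · rfl
  | esum =>
    rw [map_sum, map_one, LinearMap.sum_apply, Finset.sum_apply]
    simp [freeRep_e]
  | xx a b =>
    simp only [map_mul, Module.End.mul_apply, freeRep_x_apply]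
    ring
  | xe a ν =>
    simp only [map_mul, Module.End.mul_apply, freeRep_x_apply, freeRep_e]
    split_ifs <;> simp
  | taue l h ν =>
    simp only [map_mul, Module.End.mul_apply, freeRep_e, freeRep_t, tauOp_apply, resn_sw h,
      comp_swap_eq_iff]
    by_cases h1 : resn n μ = ν ∘ Equiv.swap (⟨l, Nat.lt_of_succ_lt h⟩ : Fin n) ⟨l + 1, h⟩
    · rw [if_pos h1, if_pos h1]
      by_cases hl : μ l = μ (l + 1)
      · have h2 : resn n (μ ∘ sw l) = resn n μ := by rw [comp_sw_eq hl]
        rw [resn_sw h, comp_swap_eq_iff, ← comp_swap_eq_iff] at h2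
        have : resn n μ = ν := by
          rw [← comp_swap_eq_iff] at h1
          rw [← h2, h1]
        rw [if_pos this]
      · simp only [dd, if_neg hl, zero_mul]
    · rw [if_neg h1, if_neg h1]
      by_cases hl : μ l = μ (l + 1)
      · have h2 : resn n (μ ∘ sw l) = resn n μ := by rw [comp_sw_eq hl]
        rw [resn_sw h] at h2
        have : ¬ resn n μ = ν := by
          rw [← comp_swap_eq_iff] at h1
          rwa [h2] at h1
        rw [if_neg this]
        simp
      · simp only [dd, if_neg hl, zero_mul, map_zero, mul_zero, sub_zero]
  | tautau l h l' h' hll =>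
    simp only [map_mul, Module.End.mul_apply, freeRep_t]
    rw [tauOp_comm C hll]
  | tausq l h ν =>
    rw [map_mul, map_mul, map_pow, pow_two, map_Qel, freeRep_x, freeRep_x, freeRep_t,
      Module.End.mul_apply, Module.End.mul_apply, Module.End.mul_apply, tauOp_sq, lmul_Qel,
      freeRep_e]
    by_cases h1 : resn n μ = ν
    · rw [if_pos h1, ← h1]
      rfl
    · rw [if_neg h1]
      simp
  | taux l h m ν =>
    have key := tauOp_x C l m (freeRep C n (ge k ν) f) μ
    have hm : ((Equiv.swap (⟨l, Nat.lt_of_succ_lt h⟩ : Fin n) ⟨l + 1, h⟩ m : Fin n) : ℕ)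
        = sw l m := by
      simp only [sw, Equiv.swap_apply_def, Fin.ext_iff]
      split_ifs <;> rfl
    rw [map_mul, map_sub, map_mul, map_mul, Module.End.mul_apply, LinearMap.sub_apply,
      Pi.sub_apply, Module.End.mul_apply, Module.End.mul_apply, freeRep_x_apply, freeRep_t, hm]
    have hx : freeRep C n (gx k m) (freeRep C n (ge k ν) f) =
        fun ν' => xv k m * (freeRep C n (ge k ν) f) ν' := by
      funext ν'
      rw [freeRep_x_apply]
    rw [hx, key]
    simp only [Fin.ext_iff]
    by_cases h1 : resn n μ = ν
    · have hl : μ l = ν ⟨l, Nat.lt_of_succ_lt h⟩ := by rw [← h1]; rfl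
      have hl' : μ (l + 1) = ν ⟨l + 1, h⟩ := by rw [← h1]; rfl
      rw [hl, hl']
      split_ifs
      · simp
      · simp
      · simp
    · have h0 : freeRep C n (ge k ν) f μ = 0 := by rw [freeRep_e, if_neg h1]
      rw [h0, mul_zero]
      split_ifs
      · rw [map_neg, LinearMap.neg_apply, Pi.neg_apply, h0, neg_zero]
      · rw [h0]
      · simp
  | braid l h ν =>
    rw [map_mul, map_sub, map_mul, map_mul, map_mul, map_mul, Module.End.mul_apply,
      LinearMap.sub_apply, Pi.sub_apply]
    simp only [Module.End.mul_apply, freeRep_t]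
    rw [tauOp_braid]
    by_cases h1 : resn n μ = ν
    · have hl : μ l = ν ⟨l, by omega⟩ := by rw [← h1]; rfl
      have hl' : μ (l + 1) = ν ⟨l + 1, by omega⟩ := by rw [← h1]; rfl
      have hl'' : μ (l + 2) = ν ⟨l + 2, h⟩ := by rw [← h1]; rfl
      rw [hl, hl', hl'']
      split_ifs
      · rw [map_mul, map_Qdiff, freeRep_x, freeRep_x, freeRep_x, Module.End.mul_apply,
          lmul_Qdiff]
      · simp
    · have h0 : freeRep C n (ge k ν) f μ = 0 := by rw [freeRep_e, if_neg h1]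
      rw [h0, mul_zero]
      split_ifs
      · rw [map_mul, map_Qdiff, freeRep_x, freeRep_x, freeRep_x, Module.End.mul_apply,
          lmul_Qdiff, h0, mul_zero]
      · simp

/-- The polynomial-type representation of `R(n)`. -/
noncomputable def rep (n : ℕ) : Alg C n →ₐ[k] Module.End k (VV k I) :=
  RingQuot.liftAlgHom k ⟨freeRep C n, fun _ _ h => freeRep_rel C h⟩

theorem rep_mk {n : ℕ} (a : FA k I n) :
    rep C n (RingQuot.mkAlgHom k (Rel C n) a) = freeRep C n a := by
  simp [rep]

theorem rep_e {n : ℕ} (ν : Fin n → I) (f : VV k I) (μ : ℕ → I) :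
    rep C n (Ee C ν) f μ = if resn n μ = ν then f μ else 0 := by
  rw [Ee, rep_mk, freeRep_e]

theorem rep_x {n : ℕ} (a : Fin n) (f : VV k I) (μ : ℕ → I) :
    rep C n (Xx C a) f μ = xv k a * f μ := by
  rw [Xx, rep_mk, freeRep_x_apply]

theorem rep_t {n : ℕ} (l : ℕ) (h : l + 1 < n) :
    rep C n (Tt C l h) = tauOp C l := by
  rw [Tt, rep_mk, freeRep_t]

end RepDef
end KLR

set_option linter.unusedSectionVars false
set_option linter.unusedSimpArgs false
set_option linter.unusedVariables false

namespace KLR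
section Relations
variable {k : Type} [Field k] {I : Type} [Fintype I] [DecidableEq I] (C : CartanDatum k I)
variable (N : ℕ)

/-- total version of `x_j`. -/
noncomputable def xA (j : ℕ) : Alg C N := if h : j < N then Xx C ⟨j, h⟩ else 0

/-- total version of `τ_l`. -/
noncomputable def tA (l : ℕ) : Alg C N := if h : l + 1 < N then Tt C l h else 0

variable {N}

theorem xA_of {j : ℕ} (h : j < N) : xA C N j = Xx C ⟨j, h⟩ := dif_pos h
theorem tA_of {l : ℕ} (h : l + 1 < N) : tA C N l = Tt C l h := dif_pos h
theorem xA_not {j : ℕ} (h : ¬ j < N) : xA C N j = 0 := dif_neg h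
theorem tA_not {l : ℕ} (h : ¬ l + 1 < N) : tA C N l = 0 := dif_neg h

theorem Ee_mul (ν ν' : Fin N → I) : Ee C ν * Ee C ν' = if ν = ν' then Ee C ν else 0 := by
  have := RingQuot.mkAlgHom_rel k (Rel.ee (C := C) ν ν')
  rw [map_mul] at this
  refine this.trans ?_
  split_ifs
  · rfl
  · exact map_zero _

theorem Ee_sum : ∑ ν : Fin N → I, Ee C ν = 1 := by
  have := RingQuot.mkAlgHom_rel k (Rel.esum (C := C) (n := N))
  rw [map_sum, map_one] at this
  exact this

theorem xA_comm (a b : ℕ) : xA C N a * xA C N b = xA C N b * xA C N a := by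
  by_cases ha : a < N
  · by_cases hb : b < N
    · rw [xA_of C ha, xA_of C hb]
      have := RingQuot.mkAlgHom_rel k (Rel.xx (C := C) (⟨a, ha⟩ : Fin N) ⟨b, hb⟩)
      rwa [map_mul, map_mul] at this
    · rw [xA_not C hb]; simp
  · rw [xA_not C ha]; simp

theorem xA_Ee (a : ℕ) (ν : Fin N → I) : xA C N a * Ee C ν = Ee C ν * xA C N a := by
  by_cases ha : a < N
  · rw [xA_of C ha]
    have := RingQuot.mkAlgHom_rel k (Rel.xe (C := C) (⟨a, ha⟩ : Fin N) ν)
    rwa [map_mul, map_mul] at this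
  · rw [xA_not C ha]; simp

/-- swapping of a finite sequence (total version) -/
def swS (l : ℕ) (ν : Fin N → I) : Fin N → I :=
  if h : l + 1 < N then ν ∘ Equiv.swap (⟨l, Nat.lt_of_succ_lt h⟩ : Fin N) ⟨l + 1, h⟩ else ν

theorem swS_swS (l : ℕ) (ν : Fin N → I) : swS l (swS l ν) = ν := by
  unfold swS
  split_ifs
  · funext j; simp
  · rfl

theorem tA_Ee (l : ℕ) (ν : Fin N → I) : tA C N l * Ee C ν = Ee C (swS l ν) * tA C N l := by
  by_cases h : l + 1 < N
  · rw [tA_of C h, swS, dif_pos h]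
    have := RingQuot.mkAlgHom_rel k (Rel.taue (C := C) l h ν)
    rwa [map_mul, map_mul] at this
  · rw [tA_not C h]; simp

theorem Ee_tA (l : ℕ) (ν : Fin N → I) : Ee C ν * tA C N l = tA C N l * Ee C (swS l ν) := by
  rw [tA_Ee, swS_swS]

theorem tA_comm {l m : ℕ} (hlm : l + 1 < m ∨ m + 1 < l) :
    tA C N l * tA C N m = tA C N m * tA C N l := by
  by_cases h : l + 1 < N
  · by_cases h' : m + 1 < N
    · rw [tA_of C h, tA_of C h']
      have := RingQuot.mkAlgHom_rel k (Rel.tautau (C := C) l h m h' hlm)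
      rwa [map_mul, map_mul] at this
    · rw [tA_not C h']; simp
  · rw [tA_not C h]; simp

theorem eq_of_Ee {a b : Alg C N} (h : ∀ ν, a * Ee C ν = b * Ee C ν) : a = b := by
  rw [← mul_one a, ← mul_one b, ← Ee_sum, Finset.mul_sum, Finset.mul_sum]
  exact Finset.sum_congr rfl fun ν _ => h ν

theorem tA_xA_Ee {l : ℕ} (h : l + 1 < N) {m : ℕ} (hm : m < N) (ν : Fin N → I) :
    (tA C N l * xA C N m - xA C N (sw l m) * tA C N l) * Ee C ν =
      if m = l ∧ ν ⟨l, Nat.lt_of_succ_lt h⟩ = ν ⟨l + 1, h⟩ then -(Ee C ν)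
      else if m = l + 1 ∧ ν ⟨l, Nat.lt_of_succ_lt h⟩ = ν ⟨l + 1, h⟩ then Ee C ν else 0 := by
  have hm' : sw l m < N := by
    simp only [sw, Equiv.swap_apply_def]
    split_ifs <;> omega
  have e1 : (Equiv.swap (⟨l, Nat.lt_of_succ_lt h⟩ : Fin N) ⟨l + 1, h⟩ ⟨m, hm⟩)
      = ⟨sw l m, hm'⟩ := by
    apply Fin.ext
    simp only [sw, Equiv.swap_apply_def, Fin.ext_iff]
    split_ifs <;> rfl
  have := RingQuot.mkAlgHom_rel k (Rel.taux (C := C) l h ⟨m, hm⟩ ν)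
  rw [e1, map_mul, map_sub, map_mul, map_mul] at this
  rw [tA_of C h, xA_of C hm, xA_of C hm']
  refine this.trans ?_
  simp only [Fin.ext_iff]
  split_ifs
  · rw [map_neg]; rfl
  · rfl
  · rw [map_zero]

theorem tA_xA_far {l m : ℕ} (h1 : m ≠ l) (h2 : m ≠ l + 1) :
    tA C N l * xA C N m = xA C N m * tA C N l := by
  by_cases h : l + 1 < N
  · by_cases hm : m < N
    · refine eq_of_Ee C fun ν => ?_
      have := tA_xA_Ee C h hm ν
      rw [if_neg (by tauto), if_neg (by tauto), sw_ne h1 h2, sub_mul] at this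
      exact sub_eq_zero.1 this
    · rw [xA_not C hm]; simp
  · rw [tA_not C h]; simp

/-- The subalgebra generated by all `e(ν)`, `x_j` for `j < p` and `τ_l` for `l + 1 < m`. -/
def GG (C : CartanDatum k I) (N m p : ℕ) : Subalgebra k (Alg C N) :=
  Algebra.adjoin k (Set.range (fun ν : Fin N → I => Ee C ν) ∪ ((fun j => xA C N j) '' Set.Iio p) ∪
    ((fun l => tA C N l) '' {l | l + 1 < m}))

theorem Ee_mem (m p : ℕ) (ν : Fin N → I) : Ee C ν ∈ GG C N m p :=
  Algebra.subset_adjoin (Or.inl (Or.inl ⟨ν, rfl⟩))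

theorem xA_mem {m p j : ℕ} (h : j < p) : xA C N j ∈ GG C N m p :=
  Algebra.subset_adjoin (Or.inl (Or.inr ⟨j, h, rfl⟩))

theorem tA_mem {m p l : ℕ} (h : l + 1 < m) : tA C N l ∈ GG C N m p :=
  Algebra.subset_adjoin (Or.inr ⟨l, h, rfl⟩)

theorem GG_mono {m m' p p' : ℕ} (h : m ≤ m') (h' : p ≤ p') : GG C N m p ≤ GG C N m' p' := by
  refine Algebra.adjoin_mono ?_
  refine Set.union_subset_union (Set.union_subset_union le_rfl ?_) ?_
  · exact Set.image_mono (Set.Iio_subset_Iio h')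
  · exact Set.image_mono fun l hl => lt_of_lt_of_le hl h

/-- left-stability induction -/
theorem GG_stable {m p : ℕ} (W : Submodule k (Alg C N))
    (he : ∀ ν, ∀ u ∈ W, Ee C ν * u ∈ W)
    (hx : ∀ j < p, ∀ u ∈ W, xA C N j * u ∈ W)
    (ht : ∀ l, l + 1 < m → ∀ u ∈ W, tA C N l * u ∈ W) {d : Alg C N} (hd : d ∈ GG C N m p) :
    ∀ u ∈ W, d * u ∈ W := by
  refine Algebra.adjoin_induction (p := fun d _ => ∀ u ∈ W, d * u ∈ W) ?_ ?_ ?_ ?_ hd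
  · rintro g ((⟨ν, rfl⟩ | ⟨j, hj, rfl⟩) | ⟨l, hl, rfl⟩)
    · exact he ν
    · exact hx j hj
    · exact ht l hl
  · intro c u hu
    rw [← Algebra.smul_def]
    exact W.smul_mem c hu
  · intro a b _ _ ha hb u hu
    rw [add_mul]
    exact W.add_mem (ha u hu) (hb u hu)
  · intro a b _ _ ha hb u hu
    rw [mul_assoc]
    exact ha _ (hb u hu)

theorem mem_of_Ee {Y : Subalgebra k (Alg C N)} (hY : ∀ ν, Ee C ν ∈ Y) {a : Alg C N}
    (h : ∀ ν, a * Ee C ν ∈ Y) : a ∈ Y := by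
  rw [← mul_one a, ← Ee_sum, Finset.mul_sum]
  exact Y.sum_mem fun ν _ => h ν

theorem tA_xA_one (l : ℕ) {m p : ℕ} :
    tA C N l * xA C N l - xA C N (l + 1) * tA C N l ∈ GG C N m p := by
  by_cases h : l + 1 < N
  · refine mem_of_Ee C (Ee_mem C m p) fun ν => ?_
    have := tA_xA_Ee C h (show l < N by omega) ν
    rw [sw_l] at this
    rw [this]
    split_ifs
    · exact neg_mem (Ee_mem C m p ν)
    · exact Ee_mem C m p ν
    · exact zero_mem _
  · rw [tA_not C h]; simp

theorem tA_xA_two (l : ℕ) {m p : ℕ} :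
    tA C N l * xA C N (l + 1) - xA C N l * tA C N l ∈ GG C N m p := by
  by_cases h : l + 1 < N
  · refine mem_of_Ee C (Ee_mem C m p) fun ν => ?_
    have := tA_xA_Ee C h (show l + 1 < N by omega) ν
    rw [sw_l1] at this
    rw [this]
    split_ifs
    · exact neg_mem (Ee_mem C m p ν)
    · exact Ee_mem C m p ν
    · exact zero_mem _
  · rw [tA_not C h]; simp

theorem Qel_mem {Y : Subalgebra k (Alg C N)} {u v : Alg C N} (hu : u ∈ Y) (hv : v ∈ Y) (i j : I) :
    Qel C i j u v ∈ Y := by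
  unfold Qel
  split_ifs
  · exact zero_mem _
  · refine Y.sum_mem fun p _ => Y.sum_mem fun q _ => ?_
    split_ifs
    · exact Y.smul_mem (Y.mul_mem (Y.pow_mem hu _) (Y.pow_mem hv _)) _
    · exact zero_mem _

theorem Qdiff_mem {Y : Subalgebra k (Alg C N)} {u v w : Alg C N} (hu : u ∈ Y) (hv : v ∈ Y)
    (hw : w ∈ Y) (i j : I) : Qdiff C i j u v w ∈ Y := by
  unfold Qdiff
  split_ifs
  · exact zero_mem _
  · refine Y.sum_mem fun p _ => Y.sum_mem fun q _ => ?_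
    split_ifs
    · exact Y.smul_mem (Y.mul_mem (Y.sum_mem fun c _ =>
        Y.mul_mem (Y.pow_mem hu _) (Y.pow_mem hw _)) (Y.pow_mem hv _)) _
    · exact zero_mem _

theorem tA_sq_mem (l : ℕ) {m p : ℕ} (hp : l + 1 < p) : tA C N l * tA C N l ∈ GG C N m p := by
  by_cases h : l + 1 < N
  · refine mem_of_Ee C (Ee_mem C m p) fun ν => ?_
    have := RingQuot.mkAlgHom_rel k (Rel.tausq (C := C) l h ν)
    rw [map_mul, map_mul, map_pow, pow_two, map_Qel] at this
    rw [tA_of C h]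
    refine (congrArg (· ∈ GG C N m p) this).mpr ?_
    refine (GG C N m p).mul_mem (Qel_mem C ?_ ?_ _ _) (Ee_mem C m p ν)
    · have := xA_mem C (N := N) (m := m) (p := p) (j := l) (by omega)
      rwa [xA_of C (show l < N by omega)] at this
    · have := xA_mem C (N := N) (m := m) (p := p) (j := l + 1) (by omega)
      rwa [xA_of C h] at this
  · rw [tA_not C h]; simp

theorem tA_braid_mem (l : ℕ) {m p : ℕ} (hp : l + 2 < p) :
    tA C N (l + 1) * tA C N l * tA C N (l + 1) - tA C N l * tA C N (l + 1) * tA C N l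
      ∈ GG C N m p := by
  by_cases h : l + 2 < N
  · refine mem_of_Ee C (Ee_mem C m p) fun ν => ?_
    have := RingQuot.mkAlgHom_rel k (Rel.braid (C := C) l h ν)
    rw [map_mul, map_sub, map_mul, map_mul, map_mul, map_mul] at this
    rw [tA_of C (show l + 1 < N by omega), tA_of C (show l + 1 + 1 < N by omega)]
    refine (congrArg (· ∈ GG C N m p) this).mpr ?_
    split_ifs
    · rw [map_mul, map_Qdiff]
      refine (GG C N m p).mul_mem (Qdiff_mem C ?_ ?_ ?_ _ _) (Ee_mem C m p ν)
      · have := xA_mem C (N := N) (m := m) (p := p) (j := l) (by omega)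
        rwa [xA_of C (show l < N by omega)] at this
      · have := xA_mem C (N := N) (m := m) (p := p) (j := l + 1) (by omega)
        rwa [xA_of C (show l + 1 < N by omega)] at this
      · have := xA_mem C (N := N) (m := m) (p := p) (j := l + 2) (by omega)
        rwa [xA_of C h] at this
    · rw [map_zero]; exact zero_mem _
  · rw [tA_not C (show ¬ (l + 1 + 1 < N) from h)]; simp

theorem GG_comm_x {m p j : ℕ} (hj : m ≤ j) {r : Alg C N} (hr : r ∈ GG C N m p) :
    xA C N j * r = r * xA C N j := by
  refine Algebra.adjoin_induction (p := fun r _ => xA C N j * r = r * xA C N j) ?_ ?_ ?_ ?_ hr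
  · rintro g ((⟨ν, rfl⟩ | ⟨a, ha, rfl⟩) | ⟨l, hl, rfl⟩)
    · exact xA_Ee C j ν
    · exact xA_comm C j a
    · have hl : l + 1 < m := hl
      exact (tA_xA_far C (by omega) (by omega)).symm
  · intro c
    exact (Algebra.commutes c _).symm
  · intro a b _ _ ha hb
    rw [mul_add, add_mul, ha, hb]
  · intro a b _ _ ha hb
    rw [← mul_assoc, ha, mul_assoc, hb, mul_assoc]

theorem GG_top : GG C N N N = ⊤ := by
  rw [eq_top_iff]
  rintro a -
  obtain ⟨b, rfl⟩ := RingQuot.mkAlgHom_surjective k (Rel C N) a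
  induction b using FreeAlgebra.induction with
  | grade0 c => rw [AlgHom.commutes]; exact (GG C N N N).algebraMap_mem c
  | grade1 g =>
    cases g with
    | e ν => exact Ee_mem C N N ν
    | x a =>
      have := xA_mem C (N := N) (m := N) (p := N) a.2
      rwa [xA_of C a.2] at this
    | tau l h =>
      have := tA_mem C (N := N) (m := N) (p := N) h
      rwa [tA_of C h] at this
  | mul a b ha hb => rw [map_mul]; exact mul_mem ha hb
  | add a b ha hb => rw [map_add]; exact add_mem ha hb

end Relations
end KLR

set_option linter.unusedSectionVars false
set_option linter.unusedSimpArgs false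
set_option linter.unusedVariables false

namespace KLR
section Spanning
variable {k : Type} [Field k] {I : Type} [Fintype I] [DecidableEq I] (C : CartanDatum k I)
variable {N : ℕ}

theorem GG_mul_t (m : ℕ) {d : Alg C N} (hd : d ∈ GG C N m (m + 1)) :
    ∃ d2 ∈ GG C N (m + 1) (m + 2), d * tA C N m - tA C N m * d2 ∈ GG C N (m + 1) (m + 2) := by
  refine Algebra.adjoin_induction (p := fun d _ => ∃ d2 ∈ GG C N (m + 1) (m + 2),
    d * tA C N m - tA C N m * d2 ∈ GG C N (m + 1) (m + 2)) ?_ ?_ ?_ ?_ hd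
  · rintro g ((⟨ν, rfl⟩ | ⟨a, ha, rfl⟩) | ⟨l, hl, rfl⟩)
    · exact ⟨_, Ee_mem C _ _ (swS m ν), by rw [Ee_tA, sub_self]; exact zero_mem _⟩
    · have ha : a < m + 1 := ha
      by_cases h : a = m
      · subst h
        refine ⟨_, xA_mem C (j := a + 1) (by omega), ?_⟩
        have := neg_mem (tA_xA_two C (N := N) a (m := a + 1) (p := a + 2))
        rwa [neg_sub] at this
      · refine ⟨_, xA_mem C (j := a) (by omega), ?_⟩
        show xA C N a * tA C N m - _ ∈ _
        rw [tA_xA_far C (by omega) (by omega), sub_self]; exact zero_mem _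
    · have hl : l + 1 < m := hl
      refine ⟨_, tA_mem C (l := l) (by omega), ?_⟩
      show tA C N l * tA C N m - _ ∈ _
      rw [tA_comm C (by omega), sub_self]; exact zero_mem _
  · intro c
    exact ⟨_, Subalgebra.algebraMap_mem _ c, by rw [Algebra.commutes, sub_self]; exact zero_mem _⟩
  · rintro a b _ _ ⟨a2, h1, h2⟩ ⟨b2, h3, h4⟩
    refine ⟨a2 + b2, add_mem h1 h3, ?_⟩
    convert add_mem h2 h4 using 1
    (simp only [mul_sub, sub_mul, mul_add, add_mul, mul_assoc, one_mul]; try abel)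
  · rintro a b ha _ ⟨a2, h1, h2⟩ ⟨b2, h3, h4⟩
    have ha' : a ∈ GG C N (m + 1) (m + 2) := GG_mono C (by omega) (by omega) ha
    refine ⟨a2 * b2, mul_mem h1 h3, ?_⟩
    convert add_mem (mul_mem ha' h4) (mul_mem h2 h3) using 1
    (simp only [mul_sub, sub_mul, mul_add, add_mul, mul_assoc, one_mul]; try abel)

theorem GG_t_comm (m : ℕ) {r : Alg C N} (hr : r ∈ GG C N m m) :
    ∃ r2 ∈ GG C N m m, tA C N m * r = r2 * tA C N m := by
  refine Algebra.adjoin_induction (p := fun r _ => ∃ r2 ∈ GG C N m m,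
    tA C N m * r = r2 * tA C N m) ?_ ?_ ?_ ?_ hr
  · rintro g ((⟨ν, rfl⟩ | ⟨a, ha, rfl⟩) | ⟨l, hl, rfl⟩)
    · exact ⟨_, Ee_mem C _ _ (swS m ν), tA_Ee C m ν⟩
    · have ha : a < m := ha
      exact ⟨_, xA_mem C ha, tA_xA_far C (by omega) (by omega)⟩
    · have hl : l + 1 < m := hl
      exact ⟨_, tA_mem C hl, tA_comm C (by omega)⟩
  · intro c
    exact ⟨_, Subalgebra.algebraMap_mem _ c, (Algebra.commutes c _).symm⟩
  · rintro a b _ _ ⟨a2, h1, h2⟩ ⟨b2, h3, h4⟩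
    exact ⟨a2 + b2, add_mem h1 h3, by rw [mul_add, add_mul, h2, h4]⟩
  · rintro a b _ _ ⟨a2, h1, h2⟩ ⟨b2, h3, h4⟩
    exact ⟨a2 * b2, mul_mem h1 h3, by rw [← mul_assoc, h2, mul_assoc, h4, mul_assoc]⟩

variable (N) in
/-- previous tau -/
noncomputable def tp : ℕ → Alg C N
  | 0 => 0
  | m + 1 => tA C N m

variable (N) in
def YS (m : ℕ) : Set (Alg C N) :=
  {u | u ∈ GG C N m (m + 1) ∨ ∃ r ∈ GG C N m m, ∃ d ∈ GG C N m (m + 1), u = r * tp C N m * d}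

theorem YS_d {m : ℕ} {u : Alg C N} (h : u ∈ GG C N m (m + 1)) :
    u ∈ Submodule.span k (YS C N m) := Submodule.subset_span (Or.inl h)

theorem YS_r {m : ℕ} {r d : Alg C N} (hr : r ∈ GG C N (m + 1) (m + 1))
    (hd : d ∈ GG C N (m + 1) (m + 2)) :
    r * tA C N m * d ∈ Submodule.span k (YS C N (m + 1)) :=
  Submodule.subset_span (Or.inr ⟨r, hr, d, hd, rfl⟩)

/-- stability under left mult. reduces to span generators -/
theorem span_mul_stable {A : Type} [Ring A] [Algebra k A] {Z : Set A} {W : Submodule k A} {g : A}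
    (h : ∀ u ∈ Z, g * u ∈ W) : ∀ u ∈ Submodule.span k Z, g * u ∈ W := by
  intro u hu
  refine Submodule.span_induction (p := fun u _ => g * u ∈ W) h ?_ ?_ ?_ hu
  · rw [mul_zero]; exact zero_mem _
  · intro a b _ _ ha hb; rw [mul_add]; exact add_mem ha hb
  · intro c a _ ha; rw [mul_smul_comm]; exact W.smul_mem c ha

theorem tRt (m : ℕ) {r : Alg C N} (hr : r ∈ Submodule.span k (YS C N m)) :
    ∀ d ∈ GG C N (m + 1) (m + 2),
    tA C N m * r * tA C N m * d ∈ Submodule.span k (YS C N (m + 1)) := by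
  set t := tA C N m with ht
  have key1 : ∀ d' ∈ GG C N m (m + 1), ∀ d ∈ GG C N (m + 1) (m + 2),
      t * d' * t * d ∈ Submodule.span k (YS C N (m + 1)) := by
    intro d' hd' d hd
    obtain ⟨d2, h2, h3⟩ := GG_mul_t C m hd'
    have e : t * d' * t * d = t * t * d2 * d + 1 * t * ((d' * t - t * d2) * d) := by (simp only [mul_sub, sub_mul, mul_add, add_mul, mul_assoc, one_mul]; try abel)
    rw [e]
    exact add_mem (YS_d C (mul_mem (mul_mem (tA_sq_mem C m (by omega)) h2) hd))
      (YS_r C (one_mem _) (mul_mem h3 hd))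
  refine Submodule.span_induction (p := fun r _ => ∀ d ∈ GG C N (m + 1) (m + 2),
    t * r * t * d ∈ Submodule.span k (YS C N (m + 1))) ?_ ?_ ?_ ?_ hr
  · rintro u (hu | ⟨r, hr, d', hd', rfl⟩) d hd
    · exact key1 u hu d hd
    · obtain ⟨r2, hr2, h⟩ := GG_t_comm C m hr
      cases m with
      | zero => simp [tp]
      | succ m =>
        obtain ⟨d2, h2, h3⟩ := GG_mul_t C (m + 1) hd'
        have hb := tA_braid_mem C (N := N) m (m := m + 2) (p := m + 3) (by omega)
        rw [← ht] at h h3 hb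
        simp only [tp]
        set t' := tA C N m
        have ht' : t' ∈ GG C N (m + 2) (m + 2) := tA_mem C (by omega)
        have ht'' : t' ∈ GG C N (m + 2) (m + 3) := tA_mem C (by omega)
        have hr3 : r2 ∈ GG C N (m + 2) (m + 2) := GG_mono C (by omega) (by omega) hr2
        have hr4 : r2 ∈ GG C N (m + 2) (m + 3) := GG_mono C (by omega) (by omega) hr2
        have e : t * (r * t' * d') * t * d =
            r2 * (t * t' * t - t' * t * t') * d2 * d + (r2 * t') * t * (t' * d2 * d)
            + r2 * t * (t' * (d' * t - t * d2) * d) := by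
          have : t * (r * t' * d') * t * d = (t * r) * t' * d' * t * d := by (simp only [mul_sub, sub_mul, mul_add, add_mul, mul_assoc, one_mul]; try abel)
          rw [this, h]; (simp only [mul_sub, sub_mul, mul_add, add_mul, mul_assoc, one_mul]; try abel)
        rw [e]
        refine add_mem (add_mem ?_ ?_) ?_
        · exact YS_d C (mul_mem (mul_mem (mul_mem hr4 hb) h2) hd)
        · exact YS_r C (mul_mem hr3 ht') (mul_mem (mul_mem ht'' h2) hd)
        · exact YS_r C hr3 (mul_mem (mul_mem ht'' h3) hd)
  · intro d hd; simp
  · intro a b _ _ ha hb d hd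
    have := add_mem (ha d hd) (hb d hd)
    convert this using 1
    (simp only [mul_sub, sub_mul, mul_add, add_mul, mul_assoc, one_mul]; try abel)
  · intro c a _ ha d hd
    have := Submodule.smul_mem _ c (ha d hd)
    convert this using 1
    simp only [mul_smul_comm, smul_mul_assoc]

theorem span1 (m : ℕ) : ∀ r ∈ GG C N (m + 1) (m + 1), r ∈ Submodule.span k (YS C N m) := by
  induction m with
  | zero =>
    intro r hr
    refine YS_d C ?_
    refine (Algebra.adjoin_mono ?_ : GG C N 1 1 ≤ GG C N 0 1) hr
    refine Set.union_subset_union le_rfl ?_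
    refine Set.image_mono fun l hl => ?_
    simp at hl
  | succ m ih =>
    intro r hr
    rw [← mul_one r]
    refine GG_stable C (Submodule.span k (YS C N (m + 1))) ?_ ?_ ?_ hr 1 (YS_d C (one_mem _))
    · intro ν
      refine span_mul_stable ?_
      rintro u (hu | ⟨r, hr, d, hd, rfl⟩)
      · exact YS_d C (mul_mem (Ee_mem C _ _ ν) hu)
      · rw [← mul_assoc, ← mul_assoc]; exact YS_r C (mul_mem (Ee_mem C _ _ ν) hr) hd
    · intro j hj
      refine span_mul_stable ?_
      rintro u (hu | ⟨r, hr, d, hd, rfl⟩)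
      · exact YS_d C (mul_mem (xA_mem C hj) hu)
      · by_cases h : j = m + 1
        · subst h
          simp only [tp]
          have h1 := tA_xA_one C (N := N) m (m := m + 1) (p := m + 2)
          have e : xA C N (m + 1) * (r * tA C N m * d) = r * tA C N m * (xA C N m * d)
              - r * (tA C N m * xA C N m - xA C N (m + 1) * tA C N m) * d := by
            have : xA C N (m + 1) * (r * tA C N m * d) = (xA C N (m + 1) * r) * tA C N m * d := by
              (simp only [mul_sub, sub_mul, mul_add, add_mul, mul_assoc, one_mul]; try abel)
            rw [this, GG_comm_x C le_rfl hr]; (simp only [mul_sub, sub_mul, mul_add, add_mul, mul_assoc, one_mul]; try abel)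
          rw [e]
          refine sub_mem (YS_r C hr (mul_mem (xA_mem C (by omega)) hd)) ?_
          exact YS_d C (mul_mem (mul_mem (GG_mono C (by omega) (by omega) hr) h1) hd)
        · rw [← mul_assoc, ← mul_assoc]; exact YS_r C (mul_mem (xA_mem C (by omega)) hr) hd
    · intro l hl
      refine span_mul_stable ?_
      rintro u (hu | ⟨r, hr, d, hd, rfl⟩)
      · by_cases h : l = m
        · subst h
          have := YS_r C (one_mem (GG C N (l + 1) (l + 1))) hu
          rwa [one_mul] at this
        · exact YS_d C (mul_mem (tA_mem C (by omega)) hu)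
      · by_cases h : l = m
        · subst h
          have := tRt C l (ih r hr) d hd
          simp only [tp]
          convert this using 1
          (simp only [mul_sub, sub_mul, mul_add, add_mul, mul_assoc, one_mul]; try abel)
        · rw [← mul_assoc, ← mul_assoc]; exact YS_r C (mul_mem (tA_mem C (by omega)) hr) hd

variable (N) in
/-- the products `τ_a τ_{a+1} ⋯ τ_{m-1}` -/
noncomputable def vA (a : ℕ) : ℕ → Alg C N
  | 0 => 1
  | m + 1 => if a ≤ m then vA a m * tA C N m else 1

theorem vA_self (m : ℕ) : vA C N m m = 1 := by
  cases m <;> simp [vA]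

theorem vA_succ {a m : ℕ} (h : a ≤ m) : vA C N a (m + 1) = vA C N a m * tA C N m := by
  simp [vA, h]

theorem vA_mem (a m p : ℕ) : vA C N a m ∈ GG C N (m + 1) p := by
  induction m with
  | zero => exact one_mem _
  | succ m ih =>
    by_cases h : a ≤ m
    · rw [vA_succ C h]
      exact mul_mem (GG_mono C (by omega) le_rfl ih) (tA_mem C (by omega))
    · simp only [vA, h, if_false]; exact one_mem _

theorem span2 (m : ℕ) : ∀ r ∈ GG C N (m + 1) (m + 1),
    r ∈ Submodule.span k {u | ∃ a ≤ m, ∃ d ∈ GG C N m (m + 1), u = vA C N a m * d} := by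
  induction m with
  | zero =>
    intro r hr
    have := span1 C 0 r hr
    refine Submodule.span_le.2 ?_ this
    rintro u (hu | ⟨r, hr, d, hd, rfl⟩)
    · exact Submodule.subset_span ⟨0, le_rfl, u, hu, by simp [vA]⟩
    · simp [tp]
  | succ m ih =>
    intro r hr
    have hD : ∀ d ∈ GG C N (m + 1) (m + 2), d ∈ Submodule.span k
        {u | ∃ a ≤ m + 1, ∃ d ∈ GG C N (m + 1) (m + 1 + 1), u = vA C N a (m + 1) * d} :=
      fun d hd => Submodule.subset_span ⟨m + 1, le_rfl, d, hd, by rw [vA_self, one_mul]⟩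
    have := span1 C (m + 1) r hr
    refine Submodule.span_le.2 ?_ this
    rintro u (hu | ⟨r, hr, d, hd, rfl⟩)
    · exact hD u hu
    · have := ih r hr
      simp only [tp]
      refine Submodule.span_induction (p := fun r _ => r * tA C N m * d ∈ Submodule.span k
        {u | ∃ a ≤ m + 1, ∃ d ∈ GG C N (m + 1) (m + 1 + 1), u = vA C N a (m + 1) * d})
        ?_ ?_ ?_ ?_ this
      · rintro u ⟨a, ha, d', hd', rfl⟩
        obtain ⟨d2, h2, h3⟩ := GG_mul_t C m hd'
        have e : vA C N a m * d' * tA C N m * d = vA C N a (m + 1) * (d2 * d)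
            + vA C N a m * (d' * tA C N m - tA C N m * d2) * d := by
          rw [vA_succ C ha]; (simp only [mul_sub, sub_mul, mul_add, add_mul, mul_assoc, one_mul]; try abel)
        rw [e]
        refine add_mem ?_ ?_
        · exact Submodule.subset_span ⟨a, by omega, _, mul_mem h2 hd, rfl⟩
        · exact hD _ (mul_mem (mul_mem (vA_mem C a m _) h3) hd)
      · simp
      · intro a b _ _ ha hb
        rw [add_mul, add_mul]; exact add_mem ha hb
      · intro c a _ ha
        rw [smul_mul_assoc, smul_mul_assoc]; exact Submodule.smul_mem _ _ ha

/-- `D_m = R(m)[x_m]` -/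
theorem span3 (m : ℕ) : ∀ d ∈ GG C N m (m + 1),
    d ∈ Submodule.span k {u | ∃ c : ℕ, ∃ r ∈ GG C N m m, u = xA C N m ^ c * r} := by
  intro d hd
  rw [← mul_one d]
  have hc : ∀ (c : ℕ) (r : Alg C N), r ∈ GG C N m m → xA C N m ^ c * r = r * xA C N m ^ c :=
    fun c r hr => ((Commute.pow_left (GG_comm_x C le_rfl hr) c : Commute _ _)).eq
  have hg : ∀ g ∈ GG C N m m, ∀ u ∈ {u | ∃ c : ℕ, ∃ r ∈ GG C N m m, u = xA C N m ^ c * r},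
    g * u ∈ Submodule.span k {u | ∃ c : ℕ, ∃ r ∈ GG C N m m, u = xA C N m ^ c * r} := by
    rintro g hg u ⟨c, r, hr, rfl⟩
    rw [← mul_assoc, ← hc c g hg, mul_assoc]
    exact Submodule.subset_span ⟨c, _, mul_mem hg hr, rfl⟩
  refine GG_stable C _ ?_ ?_ ?_ hd 1 (Submodule.subset_span ⟨0, 1, one_mem _, by simp⟩)
  · intro ν
    exact span_mul_stable (hg _ (Ee_mem C _ _ ν))
  · intro j hj
    by_cases h : j = m
    · subst h
      refine span_mul_stable ?_
      rintro u ⟨c, r, hr, rfl⟩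
      rw [← mul_assoc, ← pow_succ']
      exact Submodule.subset_span ⟨c + 1, _, hr, rfl⟩
    · exact span_mul_stable (hg _ (xA_mem C (by omega)))
  · intro l hl
    exact span_mul_stable (hg _ (tA_mem C hl))

theorem tA_xpow (m c : ℕ) :
    tA C N m * xA C N (m + 1) ^ c - xA C N m ^ c * tA C N m ∈ GG C N (m + 1) (m + 2) := by
  induction c with
  | zero => simp
  | succ c ih =>
    have h := tA_xA_two C (N := N) m (m := m + 1) (p := m + 2)
    have e : tA C N m * xA C N (m + 1) ^ (c + 1) - xA C N m ^ (c + 1) * tA C N m =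
      (tA C N m * xA C N (m + 1) ^ c - xA C N m ^ c * tA C N m) * xA C N (m + 1)
      + xA C N m ^ c * (tA C N m * xA C N (m + 1) - xA C N m * tA C N m) := by
      rw [pow_succ, pow_succ]; (simp only [mul_sub, sub_mul, mul_add, add_mul, mul_assoc, one_mul]; try abel)
    rw [e]
    exact add_mem (mul_mem ih (xA_mem C (by omega)))
      (mul_mem (pow_mem (xA_mem C (by omega)) _) h)

/-- The span used for `E F`: `R(m+2) = R(m+1) τ R(m+1) + R(m+1)[X]`. -/
theorem span4 (m : ℕ) : ∀ r ∈ GG C N (m + 2) (m + 2),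
    r ∈ Submodule.span k ({u | ∃ r ∈ GG C N (m + 1) (m + 1), ∃ s ∈ GG C N (m + 1) (m + 1),
      u = r * tA C N m * s} ∪ {u | ∃ c : ℕ, ∃ r ∈ GG C N (m + 1) (m + 1),
        u = xA C N (m + 1) ^ c * r}) := by
  intro r hr
  have hD : ∀ d ∈ GG C N (m + 1) (m + 2), d ∈ Submodule.span k
      ({u | ∃ r ∈ GG C N (m + 1) (m + 1), ∃ s ∈ GG C N (m + 1) (m + 1),
      u = r * tA C N m * s} ∪ {u | ∃ c : ℕ, ∃ r ∈ GG C N (m + 1) (m + 1),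
        u = xA C N (m + 1) ^ c * r}) :=
    fun d hd => Submodule.span_mono Set.subset_union_right (span3 C (m + 1) d hd)
  have := span1 C (m + 1) r hr
  refine Submodule.span_le.2 ?_ this
  rintro u (hu | ⟨r, hr, d, hd, rfl⟩)
  · exact hD u hu
  · simp only [tp]
    refine span_mul_stable (W := Submodule.span k _) ?_ d (span3 C (m + 1) d hd)
    rintro u ⟨c, s, hs, rfl⟩
    have e : r * tA C N m * (xA C N (m + 1) ^ c * s) =
      (r * xA C N m ^ c) * tA C N m * s +
      r * (tA C N m * xA C N (m + 1) ^ c - xA C N m ^ c * tA C N m) * s := by (simp only [mul_sub, sub_mul, mul_add, add_mul, mul_assoc, one_mul]; try abel)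
    rw [e]
    refine add_mem (Submodule.subset_span (Or.inl ⟨_, mul_mem hr (pow_mem (xA_mem C (by omega)) c),
      s, hs, rfl⟩)) (hD _ ?_)
    exact mul_mem (mul_mem (GG_mono C le_rfl (by omega) hr) (tA_xpow C m c))
      (GG_mono C le_rfl (by omega) hs)

/-- `R(m+1)` is spanned by `v_a x_m^c r`. -/
theorem span5 (m : ℕ) : ∀ r ∈ GG C N (m + 1) (m + 1),
    r ∈ Submodule.span k {u | ∃ a ≤ m, ∃ c : ℕ, ∃ r ∈ GG C N m m,
      u = vA C N a m * xA C N m ^ c * r} := by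
  intro r hr
  refine Submodule.span_le.2 ?_ (span2 C m r hr)
  rintro u ⟨a, ha, d, hd, rfl⟩
  refine span_mul_stable (W := Submodule.span k _) ?_ d (span3 C m d hd)
  rintro u ⟨c, s, hs, rfl⟩
  exact Submodule.subset_span ⟨a, ha, c, s, hs, by rw [mul_assoc]⟩

end Spanning
end KLR

set_option linter.unusedSectionVars false
set_option linter.unusedSimpArgs false
set_option linter.unusedVariables false

namespace KLR
section Faithful
variable {k : Type} [Field k] {I : Type} [Fintype I] [DecidableEq I] (C : CartanDatum k I)
variable {N : ℕ}

variable (k I) in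
noncomputable def xOp (j : ℕ) : Module.End k (VV k I) := Algebra.lmul k (VV k I) (fun _ => xv k j)

theorem xOp_apply (j : ℕ) (f : VV k I) (μ : ℕ → I) : xOp k I j f μ = xv k j * f μ := by
  simp [xOp]

theorem xOp_pow_apply (j c : ℕ) (f : VV k I) (μ : ℕ → I) :
    (xOp k I j ^ c) f μ = xv k j ^ c * f μ := by
  rw [xOp, ← map_pow]; simp

theorem rep_xA {j : ℕ} (h : j < N) : rep C N (xA C N j) = xOp k I j := by
  refine LinearMap.ext fun f => funext fun μ => ?_
  rw [xA_of C h, rep_x, xOp_apply]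

theorem rep_tA {l : ℕ} (h : l + 1 < N) : rep C N (tA C N l) = tauOp C l := by
  rw [tA_of C h, rep_t]

noncomputable def pOp (l : ℕ) : Module.End k (VV k I) where
  toFun f μ := cc C (μ l) (μ (l + 1)) (xv k l) (xv k (l + 1)) * act k (sw l) (f (μ ∘ sw l))
  map_add' f g := by
    funext μ
    simp [mul_add]
  map_smul' c f := by
    funext μ
    simp

noncomputable def qOp (l : ℕ) : Module.End k (VV k I) :=
  Algebra.lmul k (VV k I) (fun μ => -dd (μ l) (μ (l + 1)) (xv k l) (xv k (l + 1)))

theorem pOp_apply (l : ℕ) (f : VV k I) (μ : ℕ → I) : pOp C l f μ =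
  cc C (μ l) (μ (l + 1)) (xv k l) (xv k (l + 1)) * act k (sw l) (f (μ ∘ sw l)) := rfl

theorem tauOp_eq (l : ℕ) : tauOp C l = pOp C l + qOp l := by
  refine LinearMap.ext fun f => funext fun μ => ?_
  simp [tauOp_apply, pOp_apply, qOp, sub_eq_add_neg]

theorem pOp_x (l j : ℕ) : pOp C l * xOp k I j = xOp k I (sw l j) * pOp C l := by
  refine LinearMap.ext fun f => funext fun μ => ?_
  simp only [Module.End.mul_apply, pOp_apply, xOp_apply, map_mul, act_xv]
  ring

theorem qOp_x (l j : ℕ) : (qOp l : Module.End k (VV k I)) * xOp k I j = xOp k I j * qOp l := by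
  rw [qOp, xOp, ← map_mul, ← map_mul, mul_comm]

theorem pOp_injective (l : ℕ) : Function.Injective (pOp C l) := by
  rw [← LinearMap.ker_eq_bot, LinearMap.ker_eq_bot']
  intro f hf
  funext μ
  have := congrFun hf (μ ∘ sw l)
  rw [pOp_apply, sw_comp_sw] at this
  simpa [cc_ne_zero C _ _ (Nat.ne_of_lt (Nat.lt_succ_self l))] using this

theorem repV {a m : ℕ} (ham : a ≤ m) (hm : m < N) : ∃ g : ℕ → Module.End k (VV k I),
    rep C N (vA C N a m) = ∑ b ∈ Finset.range (m + 1), g b ∧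
    (∀ b, g b * xOp k I m = xOp k I b * g b) ∧
    (∀ b j, m < j → g b * xOp k I j = xOp k I j * g b) ∧
    (∀ b, b < a → g b = 0) ∧ Function.Injective (g a) := by
  induction m, ham using Nat.le_induction with
  | base =>
    refine ⟨fun b => if b = a then 1 else 0, ?_, ?_, ?_, ?_, ?_⟩
    · rw [vA_self, map_one, Finset.sum_ite_eq' ]; simp
    · intro b
      by_cases h : b = a
      · subst h; simp
      · simp [h]
    · intro b j _
      by_cases h : b = a
      · subst h; simp
      · simp [h]
    · intro b hb
      simp [hb.ne]
    · simp only [if_true]; exact Function.injective_id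
  | succ m ham ih =>
    obtain ⟨g, h1, h2, h3, h4, h5⟩ := ih (by omega)
    refine ⟨fun b => if b = m + 1 then (∑ b ∈ Finset.range (m + 1), g b) * qOp m
      else g b * pOp C m, ?_, ?_, ?_, ?_, ?_⟩
    · rw [vA_succ C ham, map_mul, rep_tA C hm, h1, tauOp_eq, Finset.sum_range_succ _ (m + 1)]
      simp only [if_true]
      rw [mul_add]
      congr 1
      rw [Finset.sum_mul]
      refine Finset.sum_congr rfl fun b hb => ?_
      rw [if_neg (by have := Finset.mem_range.1 hb; omega)]
    · intro b
      by_cases h : b = m + 1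
      · subst h
        simp only [if_true]
        rw [mul_assoc, qOp_x, ← mul_assoc, Finset.sum_mul, ← mul_assoc,
          Finset.mul_sum]
        congr 1
        exact Finset.sum_congr rfl fun b _ => h3 b _ (by omega)
      · simp only [h, if_false]
        rw [mul_assoc, pOp_x, sw_l1, ← mul_assoc, h2, mul_assoc]
    · intro b j hj
      by_cases h : b = m + 1
      · subst h
        simp only [if_true]
        rw [mul_assoc, qOp_x, ← mul_assoc, Finset.sum_mul, ← mul_assoc,
          Finset.mul_sum]
        congr 1
        exact Finset.sum_congr rfl fun b _ => h3 b _ (by omega)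
      · simp only [h, if_false]
        rw [mul_assoc, pOp_x, sw_ne (by omega) (by omega), ← mul_assoc, h3 b j (by omega),
          mul_assoc]
    · intro b hb
      simp only [show b ≠ m + 1 by omega, if_false, h4 b hb, zero_mul]
    · simp only [show a ≠ m + 1 by omega, if_false]
      exact h5.comp (pOp_injective C m)

theorem freeV {m : ℕ} (hm : m < N) (d : ℕ → Alg C N) (hd : ∀ a, d a ∈ GG C N m (m + 1))
    (h : rep C N (∑ a ∈ Finset.range (m + 1), vA C N a m * d a) = 0) :
    ∀ a ≤ m, rep C N (d a) = 0 := by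
  have hg : ∀ a, ∃ g : ℕ → Module.End k (VV k I), a ≤ m →
    rep C N (vA C N a m) = ∑ b ∈ Finset.range (m + 1), g b ∧
    (∀ b, g b * xOp k I m = xOp k I b * g b) ∧
    (∀ b, b < a → g b = 0) ∧ Function.Injective (g a) := by
    intro a
    by_cases ha : a ≤ m
    · obtain ⟨g, h1, h2, _, h4, h5⟩ := repV C ha hm
      exact ⟨g, fun _ => ⟨h1, h2, h4, h5⟩⟩
    · exact ⟨0, fun h => absurd h ha⟩
  choose g hg using hg
  have hpow : ∀ a ≤ m, ∀ b M, g a b * xOp k I m ^ M = xOp k I b ^ M * g a b := by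
    intro a ha b M
    induction M with
    | zero => simp
    | succ M ih => rw [pow_succ, ← mul_assoc, ih, mul_assoc, (hg a ha).2.1, ← mul_assoc, ← pow_succ]
  have hdx : ∀ a M, rep C N (d a) * xOp k I m ^ M = xOp k I m ^ M * rep C N (d a) := by
    intro a M
    have := congrArg (rep C N) (GG_comm_x C le_rfl (hd a))
    rw [map_mul, map_mul, rep_xA C hm] at this
    exact ((Commute.pow_left (show Commute _ _ from this) M)).eq.symm
  set H : ℕ → Module.End k (VV k I) := fun b => ∑ a ∈ Finset.range (m + 1), g a b * rep C N (d a)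
    with hH
  have h1 : ∀ M, ∑ b ∈ Finset.range (m + 1), xOp k I b ^ M * H b = 0 := by
    intro M
    have e := congrArg (· * xOp k I m ^ M) h
    simp only [zero_mul, map_sum, map_mul] at e
    rw [← e, Finset.sum_mul]
    simp only [hH, Finset.mul_sum]
    rw [Finset.sum_comm]
    refine Finset.sum_congr rfl fun a ha => ?_
    have ha : a ≤ m := by have := Finset.mem_range.1 ha; omega
    rw [mul_assoc, hdx, ← mul_assoc, (hg a ha).1, Finset.sum_mul, Finset.sum_mul]
    refine Finset.sum_congr rfl fun b _ => ?_
    rw [hpow a ha, mul_assoc]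
  have h2 : ∀ b ≤ m, H b = 0 := by
    intro b hb
    refine LinearMap.ext fun f => funext fun μ => ?_
    have := Matrix.eq_zero_of_forall_pow_sum_mul_pow_eq_zero (n := m + 1)
      (f := fun j : Fin (m + 1) => xv k j) (v := fun j => H j f μ)
      (fun i j hij => Fin.ext (xv_injective k hij)) (fun M => by
        have e := congrFun (LinearMap.congr_fun (h1 M) f) μ
        rw [← Fin.sum_univ_eq_sum_range (fun b => xOp k I b ^ (M : ℕ) * H b)] at e
        simp only [LinearMap.sum_apply, Finset.sum_apply, Module.End.mul_apply,
          xOp_pow_apply] at e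
        refine Eq.trans ?_ e
        exact Finset.sum_congr rfl fun j _ => mul_comm _ _)
    exact congrFun this ⟨b, by omega⟩
  intro a
  induction a using Nat.strong_induction_on with
  | _ a ih =>
    intro ha
    have e := h2 a ha
    simp only [hH] at e
    rw [Finset.sum_eq_single a] at e
    · refine LinearMap.ext fun f => ?_
      have := LinearMap.congr_fun e f
      refine (hg a ha).2.2.2 ?_
      rw [Module.End.mul_apply] at this
      rw [this]; simp
    · intro b hb hne
      have hb : b ≤ m := by have := Finset.mem_range.1 hb; omega
      rcases lt_or_gt_of_ne hne with h' | h'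
      · rw [ih b h' hb, mul_zero]
      · rw [(hg b hb).2.2.1 a h', zero_mul]
    · intro h'; exact absurd (Finset.mem_range.2 (by omega)) h'

/-- permutation of variables as operator -/
noncomputable def thOp (w : Equiv.Perm ℕ) (f : VV k I) : VV k I := fun μ => act k w (f μ)

theorem thOp_comm {m : ℕ} (hm : m ≤ N) (w : Equiv.Perm ℕ) (hw : ∀ j < m, w j = j) {r : Alg C N}
    (hr : r ∈ GG C N m m) :
    ∀ f, thOp w (rep C N r f) = rep C N r (thOp w f) := by
  refine Algebra.adjoin_induction (p := fun r _ => ∀ f, thOp w (rep C N r f) = rep C N r (thOp w f))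
    ?_ ?_ ?_ ?_ hr
  · rintro g ((⟨ν, rfl⟩ | ⟨a, ha, rfl⟩) | ⟨l, hl, rfl⟩) f <;> funext μ
    · simp only [thOp, rep_e]
      split_ifs
      · rfl
      · exact map_zero _
    · have ha : a < m := ha
      simp only [rep_xA C (show a < N by omega), thOp, xOp_apply, map_mul, act_xv, hw a ha]
    · have hl : l + 1 < m := hl
      have e : w * sw l = sw l * w := by
        have e1 : w * sw l * w⁻¹ = sw l := by
          rw [sw, Equiv.mul_swap_eq_swap_mul]
          rw [hw l (by omega), hw _ hl]; simp
        calc w * sw l = (w * sw l * w⁻¹) * w := by group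
          _ = _ := by rw [e1]
      simp only [rep_tA C (show l + 1 < N by omega), thOp, tauOp_apply, map_sub, map_mul, act_cc,
        act_dd, act_xv, hw l (by omega), hw _ hl, act_act, e]
  · intro c f
    rw [AlgHom.commutes]
    funext μ
    simp [thOp, Module.algebraMap_end_apply]
  · intro a b _ _ ha hb f
    rw [map_add, LinearMap.add_apply, LinearMap.add_apply, ← ha, ← hb]
    funext μ
    simp [thOp]
  · intro a b _ _ ha hb f
    rw [map_mul, Module.End.mul_apply, Module.End.mul_apply, ha, hb]

theorem freeS {m : ℕ} (hm : m < N) (r : ℕ → Alg C N) (hr : ∀ c, r c ∈ GG C N m m) (K : Finset ℕ)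
    (h : rep C N (∑ c ∈ K, xA C N m ^ c * r c) = 0) : ∀ c ∈ K, rep C N (r c) = 0 := by
  have key : ∀ j f μ, ∑ c ∈ K, xv k (m + 1 + j) ^ c * rep C N (r c) f μ = 0 := by
    intro j f μ
    set w : Equiv.Perm ℕ := Equiv.swap m (m + 1 + j)
    have hw : ∀ j < m, w j = j := fun a ha =>
      Equiv.swap_apply_of_ne_of_ne (by omega) (by omega)
    have hww : thOp w (thOp w f) = f := by
      funext μ
      simp [thOp, act_act, w, act_one]
    have e := congrArg (act k w) (congrFun (LinearMap.congr_fun h (thOp w f)) μ)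
    simp only [map_sum, map_mul, map_pow, rep_xA C hm, LinearMap.sum_apply, Finset.sum_apply,
      Module.End.mul_apply, xOp_pow_apply, act_xv] at e
    rw [show w m = m + 1 + j from Equiv.swap_apply_left _ _] at e
    simp only [LinearMap.zero_apply, Pi.zero_apply, map_zero] at e
    rw [← e]
    refine Finset.sum_congr rfl fun c _ => ?_
    have := congrFun (thOp_comm C hm.le w hw (hr c) (thOp w f)) μ
    rw [hww] at this
    rw [← this]; rfl
  intro c hc
  refine LinearMap.ext fun f => funext fun μ => ?_
  set P : Polynomial (KK k) := ∑ c ∈ K, Polynomial.monomial c (rep C N (r c) f μ) with hP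
  have hP0 : P = 0 := by
    refine Polynomial.eq_zero_of_infinite_isRoot P ?_
    refine Set.infinite_of_injective_forall_mem (f := fun j : ℕ => xv k (m + 1 + j))
      (fun a b hab => by have := xv_injective k hab; omega) fun j => ?_
    show P.eval _ = 0
    rw [hP, Polynomial.eval_finsetSum, ← key j f μ]
    refine Finset.sum_congr rfl fun c _ => ?_
    rw [Polynomial.eval_monomial, mul_comm]
  have := congrArg (fun p => Polynomial.coeff p c) hP0
  simpa [hP, Polynomial.finsetSum_coeff, Polynomial.coeff_monomial, hc] using this

theorem exists_V {m : ℕ} {r : Alg C N} (hr : r ∈ GG C N (m + 1) (m + 1)) :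
    ∃ d : ℕ → Alg C N, (∀ a, d a ∈ GG C N m (m + 1)) ∧
      r = ∑ a ∈ Finset.range (m + 1), vA C N a m * d a := by
  refine Submodule.span_induction (p := fun r _ => ∃ d : ℕ → Alg C N,
    (∀ a, d a ∈ GG C N m (m + 1)) ∧
      r = ∑ a ∈ Finset.range (m + 1), vA C N a m * d a) ?_ ?_ ?_ ?_ (span2 C m r hr)
  · rintro u ⟨a, ha, d, hd, rfl⟩
    refine ⟨fun b => if b = a then d else 0, fun b => ?_, ?_⟩
    · dsimp only; split_ifs
      · exact hd
      · exact zero_mem _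
    · simp [Nat.lt_succ_of_le ha]
  · exact ⟨0, fun _ => zero_mem _, by simp⟩
  · rintro a b _ _ ⟨d, h1, rfl⟩ ⟨d', h2, rfl⟩
    refine ⟨d + d', fun a => add_mem (h1 a) (h2 a), ?_⟩
    simp [mul_add, Finset.sum_add_distrib]
  · rintro c a _ ⟨d, h1, rfl⟩
    refine ⟨c • d, fun a => Subalgebra.smul_mem _ (h1 a) c, ?_⟩
    simp [Finset.smul_sum]

theorem exists_S {m : ℕ} {d : Alg C N} (hd : d ∈ GG C N m (m + 1)) :
    ∃ r : ℕ → Alg C N, (∀ a, r a ∈ GG C N m m) ∧ ∃ K : Finset ℕ,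
      d = ∑ c ∈ K, xA C N m ^ c * r c := by
  suffices ∃ r : ℕ → Alg C N, (∀ a, r a ∈ GG C N m m) ∧ ∃ K : ℕ, ∀ L, K ≤ L →
      d = ∑ c ∈ Finset.range L, xA C N m ^ c * r c ∧ ∀ c, K ≤ c → r c = 0 by
    obtain ⟨r, h1, K, h2⟩ := this
    exact ⟨r, h1, Finset.range K, (h2 K le_rfl).1⟩
  refine Submodule.span_induction (p := fun d _ => ∃ r : ℕ → Alg C N,
    (∀ a, r a ∈ GG C N m m) ∧ ∃ K : ℕ, ∀ L, K ≤ L →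
      d = ∑ c ∈ Finset.range L, xA C N m ^ c * r c ∧ ∀ c, K ≤ c → r c = 0)
      ?_ ?_ ?_ ?_ (span3 C m d hd)
  · rintro u ⟨a, d, hd, rfl⟩
    refine ⟨fun b => if b = a then d else 0, fun b => ?_, a + 1, fun L hL => ⟨?_, ?_⟩⟩
    · dsimp only; split_ifs
      · exact hd
      · exact zero_mem _
    · simp [show a < L by omega]
    · intro c hc
      simp [show c ≠ a by omega]
  · exact ⟨0, fun _ => zero_mem _, 0, fun L _ => ⟨by simp, fun _ _ => rfl⟩⟩
  · rintro a b _ _ ⟨d, h1, K, h2⟩ ⟨d', h3, K', h4⟩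
    refine ⟨d + d', fun a => add_mem (h1 a) (h3 a), max K K', fun L hL => ⟨?_, fun c hc => ?_⟩⟩
    · rw [(h2 L (le_trans (le_max_left _ _) hL)).1, (h4 L (le_trans (le_max_right _ _) hL)).1]
      simp [mul_add, Finset.sum_add_distrib]
    · rw [Pi.add_apply, (h2 K le_rfl).2 c (le_trans (le_max_left _ _) hc),
        (h4 K' le_rfl).2 c (le_trans (le_max_right _ _) hc), add_zero]
  · rintro c a _ ⟨d, h1, K, h2⟩
    refine ⟨c • d, fun a => Subalgebra.smul_mem _ (h1 a) c, K, fun L hL => ⟨?_, fun c' hc => ?_⟩⟩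
    · rw [(h2 L hL).1]
      simp [Finset.smul_sum]
    · rw [Pi.smul_apply, (h2 K le_rfl).2 c' hc, smul_zero]

theorem GG_zero {r : Alg C N} (hr : r ∈ GG C N 0 0) :
    ∃ c : (Fin N → I) → k, r = ∑ ν, c ν • Ee C ν := by
  refine Algebra.adjoin_induction (p := fun r _ => ∃ c : (Fin N → I) → k, r = ∑ ν, c ν • Ee C ν)
    ?_ ?_ ?_ ?_ hr
  · rintro g ((⟨ν, rfl⟩ | ⟨a, ha, rfl⟩) | ⟨l, hl, rfl⟩)
    · refine ⟨fun ν' => if ν' = ν then 1 else 0, ?_⟩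
      simp
    · simp at ha
    · simp at hl
  · intro c
    exact ⟨fun _ => c, by rw [← Finset.smul_sum, Ee_sum, Algebra.algebraMap_eq_smul_one]⟩
  · rintro a b _ _ ⟨c, rfl⟩ ⟨c', rfl⟩
    exact ⟨c + c', by simp [add_smul, Finset.sum_add_distrib]⟩
  · rintro a b _ _ ⟨c, rfl⟩ ⟨c', rfl⟩
    refine ⟨c * c', ?_⟩
    rw [Finset.sum_mul_sum]
    refine Finset.sum_congr rfl fun ν _ => ?_
    simp only [smul_mul_smul_comm, Ee_mul]
    rw [Finset.sum_eq_single ν]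
    · simp
    · intro b _ hb
      simp [hb.symm]
    · simp

theorem rep_faithful_aux [Nonempty I] (m : ℕ) (hm : m ≤ N) : ∀ r ∈ GG C N m m,
    rep C N r = 0 → r = 0 := by
  induction m with
  | zero =>
    intro r hr h0
    obtain ⟨c, rfl⟩ := GG_zero C hr
    refine Finset.sum_eq_zero fun ν _ => ?_
    set μ : ℕ → I := fun j => if h : j < N then ν ⟨j, h⟩ else Classical.arbitrary I
    have hμ : resn N μ = ν := by
      funext a; simp [resn, μ]
    have := congrFun (LinearMap.congr_fun h0 (fun _ => 1)) μ
    simp only [map_sum, map_smul, LinearMap.sum_apply, LinearMap.smul_apply, Finset.sum_apply,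
      Pi.smul_apply, rep_e, hμ] at this
    simp at this
    rw [this, zero_smul]
  | succ m ih =>
    intro r hr h0
    obtain ⟨d, hd, rfl⟩ := exists_V C hr
    have h1 := freeV C (by omega) d hd h0
    refine Finset.sum_eq_zero fun a ha => ?_
    have ha : a ≤ m := by have := Finset.mem_range.1 ha; omega
    have h2 := h1 a ha
    suffices d a = 0 by rw [this, mul_zero]
    obtain ⟨r, hr, K, h3⟩ := exists_S C (hd a)
    rw [h3] at h2 ⊢
    have h4 := freeS C (by omega) r hr K h2
    refine Finset.sum_eq_zero fun c hc => ?_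
    rw [ih (by omega) _ (hr c) (h4 c hc), mul_zero]

theorem rep_faithful [Nonempty I] {r : Alg C N} (h : rep C N r = 0) : r = 0 :=
  rep_faithful_aux C N le_rfl r (by rw [GG_top]; trivial) h

/-- freeness over the smaller algebra -/
theorem free_main [Nonempty I] {m : ℕ} (hm : m < N) (r : (Fin (m + 1) × ℕ) →₀ Alg C N)
    (hr : ∀ p, r p ∈ GG C N m m)
    (h : r.sum (fun p y => vA C N p.1 m * xA C N m ^ p.2 * y) = 0) : r = 0 := by
  classical
  set K := r.support.image Prod.snd with hK
  have e : r.sum (fun p y => vA C N p.1 m * xA C N m ^ p.2 * y) =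
      ∑ a : Fin (m + 1), vA C N a m * ∑ c ∈ K, xA C N m ^ c * r (a, c) := by
    rw [Finsupp.sum_of_support_subset (s := Finset.univ ×ˢ K)]
    · rw [Finset.sum_product]
      refine Finset.sum_congr rfl fun a _ => ?_
      rw [Finset.mul_sum]
      refine Finset.sum_congr rfl fun c _ => ?_
      rw [mul_assoc]
    · intro p hp
      exact Finset.mem_product.2 ⟨Finset.mem_univ _, Finset.mem_image_of_mem _ hp⟩
    · simp
  set d : ℕ → Alg C N := fun a => if h : a < m + 1 then
    ∑ c ∈ K, xA C N m ^ c * r (⟨a, h⟩, c) else 0 with hd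
  have hdm : ∀ a, d a ∈ GG C N m (m + 1) := by
    intro a
    simp only [hd]
    split_ifs
    · exact Subalgebra.sum_mem _ fun c _ => mul_mem (pow_mem (xA_mem C (by omega)) c)
        (GG_mono C le_rfl (by omega) (hr _))
    · exact zero_mem _
  have h1 : rep C N (∑ a ∈ Finset.range (m + 1), vA C N a m * d a) = 0 := by
    rw [← map_zero (rep C N), ← h, e, ← Fin.sum_univ_eq_sum_range (fun a => vA C N a m * d a)]
    congr 1
    refine Finset.sum_congr rfl fun a _ => ?_
    simp only [hd, dif_pos a.2]
  have h2 := freeV C hm d hdm h1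
  ext p
  by_cases hp : p.2 ∈ K
  · have h3 := h2 p.1 (by have := p.1.2; omega)
    simp only [hd, dif_pos p.1.2] at h3
    have h4 := freeS C hm (fun c => r (p.1, c)) (fun c => hr _) K h3 p.2 hp
    exact rep_faithful C h4
  · by_contra h5
    exact hp (Finset.mem_image_of_mem _ (Finsupp.mem_support_iff.2 h5))

end Faithful
end KLR

set_option linter.unusedSectionVars false
set_option linter.unusedSimpArgs false
set_option linter.unusedVariables false

namespace KLR
section Transfer
variable {k : Type} [Field k] {I : Type} [Fintype I] [DecidableEq I] (C : CartanDatum k I)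

theorem content_eq_sum {m : ℕ} (ν : Fin m → I) (j : I) :
    content ν j = ∑ a, if ν a = j then 1 else 0 := by
  rw [content, Finset.card_filter]

theorem content_perm {m : ℕ} (ν : Fin m → I) (σ : Equiv.Perm (Fin m)) :
    content (ν ∘ σ) = content ν := by
  funext j
  rw [content_eq_sum, content_eq_sum]
  exact Equiv.sum_comp σ (fun a => if ν a = j then 1 else 0)

theorem content_swS {N : ℕ} (l : ℕ) (ν : Fin N → I) : content (swS l ν) = content ν := by
  unfold swS
  split_ifs
  · exact content_perm ν _
  · rfl

theorem content_snoc {n : ℕ} (ν : Fin n → I) (i : I) :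
    content (Fin.snoc ν i : Fin (n + 1) → I) = addA (content ν) i := by
  funext j
  rw [content_eq_sum, Fin.sum_univ_castSucc, addA, content_eq_sum]
  simp [Fin.snoc_castSucc, Fin.snoc_last, eq_comm]

theorem addA_injective (i : I) : Function.Injective (fun β : I → ℕ => addA β i) := by
  intro a b h
  funext j
  have := congrFun h j
  simp only [addA] at this
  omega

theorem mem_seqs {n : ℕ} {β : I → ℕ} {ν : Fin n → I} : ν ∈ seqs β n ↔ content ν = β := by
  simp [seqs]

/-- an element commuting with all generators -/
theorem comm_of_gen {N m p : ℕ} {z : Alg C N} (he : ∀ ν, z * Ee C ν = Ee C ν * z)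
    (hx : ∀ j < p, z * xA C N j = xA C N j * z)
    (ht : ∀ l, l + 1 < m → z * tA C N l = tA C N l * z) {r : Alg C N} (hr : r ∈ GG C N m p) :
    z * r = r * z := by
  refine Algebra.adjoin_induction (p := fun r _ => z * r = r * z) ?_ ?_ ?_ ?_ hr
  · rintro g ((⟨ν, rfl⟩ | ⟨a, ha, rfl⟩) | ⟨l, hl, rfl⟩)
    · exact he ν
    · exact hx a ha
    · exact ht l hl
  · intro c
    exact (Algebra.commutes c _).symm
  · intro a b _ _ ha hb
    rw [mul_add, add_mul, ha, hb]
  · intro a b _ _ ha hb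
    rw [← mul_assoc, ha, mul_assoc, hb, mul_assoc]

theorem Ee_comm {N : ℕ} (ν ν' : Fin N → I) : Ee C ν * Ee C ν' = Ee C ν' * Ee C ν := by
  rw [Ee_mul, Ee_mul]
  by_cases h : ν = ν'
  · subst h; rfl
  · rw [if_neg h, if_neg (Ne.symm h)]

/-- sums of idempotents over a set of sequences -/
noncomputable def eS {N : ℕ} (s : Finset (Fin N → I)) : Alg C N := ∑ ν ∈ s, Ee C ν

theorem eS_Ee {N : ℕ} (s : Finset (Fin N → I)) (ν : Fin N → I) :
    eS C s * Ee C ν = if ν ∈ s then Ee C ν else 0 := by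
  rw [eS, Finset.sum_mul]
  simp only [Ee_mul]
  by_cases h : ν ∈ s
  · rw [Finset.sum_eq_single ν]
    · simp [h]
    · intro b _ hb; simp [hb]
    · intro h'; exact absurd h h'
  · rw [if_neg h]
    refine Finset.sum_eq_zero fun b hb => ?_
    rw [if_neg]; rintro rfl; exact h hb

theorem eS_mul {N : ℕ} (s t : Finset (Fin N → I)) : eS C s * eS C t = eS C (t.filter (· ∈ s)) := by
  conv_lhs => rw [eS.eq_def C t, Finset.mul_sum]
  simp only [eS_Ee]
  rw [eS, Finset.sum_filter]

theorem eS_comm_Ee {N : ℕ} (s : Finset (Fin N → I)) (ν : Fin N → I) :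
    eS C s * Ee C ν = Ee C ν * eS C s := by
  rw [eS, Finset.sum_mul, Finset.mul_sum]
  exact Finset.sum_congr rfl fun b _ => Ee_comm C b ν

theorem eS_xA {N : ℕ} (s : Finset (Fin N → I)) (j : ℕ) :
    eS C s * xA C N j = xA C N j * eS C s := by
  rw [eS, Finset.sum_mul, Finset.mul_sum]
  exact Finset.sum_congr rfl fun b _ => (xA_Ee C j b).symm

theorem eS_tA {N : ℕ} (s : Finset (Fin N → I)) (l : ℕ) (h : ∀ ν ∈ s, swS l ν ∈ s) :
    eS C s * tA C N l = tA C N l * eS C s := by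
  rw [eS, Finset.sum_mul, Finset.mul_sum]
  simp only [tA_Ee]
  refine Finset.sum_nbij' (swS l) (swS l) h h (fun a _ => swS_swS l a) (fun a _ => swS_swS l a) ?_
  intro a _
  rw [swS_swS]

theorem eIdem_central {N : ℕ} (β : I → ℕ) (r : Alg C N) :
    eIdem C N β * r = r * eIdem C N β := by
  refine comm_of_gen C (m := N) (p := N) (eS_comm_Ee C _) (fun j _ => eS_xA C _ j)
    (fun l _ => eS_tA C _ l ?_) (by rw [GG_top]; trivial)
  intro ν hν
  rw [mem_seqs] at hν ⊢
  rw [content_swS, hν]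

theorem eIdem_idem {N : ℕ} (β : I → ℕ) : eIdem C N β * eIdem C N β = eIdem C N β := by
  have := eS_mul C (seqs β N) (seqs β N)
  rwa [Finset.filter_true_of_mem (fun _ h => h)] at this

theorem eS_mem {N : ℕ} (s : Finset (Fin N → I)) (m p : ℕ) : eS C s ∈ GG C N m p :=
  Subalgebra.sum_mem _ fun ν _ => Ee_mem C m p ν

variable {C}

theorem toB_mk {n : ℕ} {β : I → ℕ} (a : FA k I n) :
    (toB C (RingQuot.mkAlgHom k (Rel C n) a) : bAlg C n β) = RingQuot.mkAlgHom k (URel C n β) a := by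
  simp [toB]

theorem toB_surj {n : ℕ} {β : I → ℕ} : Function.Surjective (toB C : Alg C n →ₐ[k] bAlg C n β) := by
  intro s
  obtain ⟨a, rfl⟩ := RingQuot.mkAlgHom_surjective k (URel C n β) s
  exact ⟨_, toB_mk a⟩

theorem toB_eIdem {n : ℕ} {β : I → ℕ} : (toB C (eIdem C n β) : bAlg C n β) = 1 := by
  have := RingQuot.mkAlgHom_rel k (URel.unit (C := C) (n := n) (β := β))
  rw [map_one, map_sum] at this
  rw [← this, eIdem, map_sum]
  exact Finset.sum_congr rfl fun ν _ => toB_mk _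

theorem toB_ker {n : ℕ} {β : I → ℕ} {r : Alg C n} (h : (toB C r : bAlg C n β) = 0) :
    eIdem C n β * r = 0 := by
  set E := eIdem C n β
  let W : Submodule (Alg C n) (Alg C n) := Submodule.span (Alg C n) {E}
  have hW : ∀ w : W, E * (w : Alg C n) = w := by
    rintro ⟨w, hw⟩
    obtain ⟨a, rfl⟩ := Submodule.mem_span_singleton.1 hw
    show E * (a * E) = a * E
    rw [← mul_assoc, eIdem_central, mul_assoc, eIdem_idem]
  let L : Alg C n →ₐ[k] Module.End k W := Algebra.lsmul k k W
  have hL : ∀ (r : Alg C n) (w : W), ((L r w : W) : Alg C n) = r * w := fun r w => rfl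
  let L' : bAlg C n β →ₐ[k] Module.End k W := RingQuot.liftAlgHom k
    ⟨L.comp (RingQuot.mkAlgHom k (Rel C n)), by
      intro x y hxy
      cases hxy with
      | base hb =>
        rw [AlgHom.comp_apply, AlgHom.comp_apply, RingQuot.mkAlgHom_rel k hb]
      | unit =>
        refine LinearMap.ext fun w => Subtype.ext ?_
        rw [AlgHom.comp_apply, hL, map_one, map_sum]
        exact hW w⟩
  have hL' : ∀ r : Alg C n, L' (toB C r) = L r := by
    intro r
    obtain ⟨a, rfl⟩ := RingQuot.mkAlgHom_surjective k (Rel C n) r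
    rw [toB_mk]
    simp [L']
  have h1 := hL' r
  rw [h, map_zero] at h1
  have h2 := hL r ⟨E, Submodule.mem_span_singleton_self E⟩
  rw [← h1] at h2
  rw [eIdem_central]
  exact h2.symm

end Transfer
end KLR

set_option linter.unusedSectionVars false
set_option linter.unusedSimpArgs false
set_option linter.unusedVariables false

namespace KLR
section Up
variable {k : Type} [Field k] {I : Type} [Fintype I] [DecidableEq I] {C : CartanDatum k I}

/-- induction over all of `R(n)` -/
theorem alg_ind {n : ℕ} {P : Alg C n → Prop} (he : ∀ ν, P (Ee C ν))
    (hx : ∀ j < n, P (xA C n j)) (ht : ∀ l, l + 1 < n → P (tA C n l))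
    (hc : ∀ c : k, P (algebraMap k _ c)) (ha : ∀ a b, P a → P b → P (a + b))
    (hm : ∀ a b, P a → P b → P (a * b)) (r : Alg C n) : P r := by
  have hr : r ∈ GG C n n n := by rw [GG_top]; trivial
  refine Algebra.adjoin_induction (p := fun r _ => P r) ?_ hc (fun a b _ _ => ha a b)
    (fun a b _ _ => hm a b) hr
  rintro g ((⟨ν, rfl⟩ | ⟨a, ha, rfl⟩) | ⟨l, hl, rfl⟩)
  · exact he ν
  · exact hx a ha
  · exact ht l hl

theorem GG_ind {N m p : ℕ} {P : Alg C N → Prop} (he : ∀ ν, P (Ee C ν))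
    (hx : ∀ j < p, P (xA C N j)) (ht : ∀ l, l + 1 < m → P (tA C N l))
    (hc : ∀ c : k, P (algebraMap k _ c)) (ha : ∀ a b, P a → P b → P (a + b))
    (hm : ∀ a b, P a → P b → P (a * b)) {r : Alg C N} (hr : r ∈ GG C N m p) : P r := by
  refine Algebra.adjoin_induction (p := fun r _ => P r) ?_ hc (fun a b _ _ => ha a b)
    (fun a b _ _ => hm a b) hr
  rintro g ((⟨ν, rfl⟩ | ⟨a, ha, rfl⟩) | ⟨l, hl, rfl⟩)
  · exact he ν
  · exact hx a ha
  · exact ht l hl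

/-- the index set of `eR` -/
def sR (n : ℕ) (δ : I → ℕ) (i : I) : Finset (Fin (n + 1) → I) :=
  (seqs (addA δ i) (n + 1)).filter (fun ν => ν (Fin.last n) = i)

theorem eR_eq (n : ℕ) (δ : I → ℕ) (i : I) : eR C n δ i = eS C (sR n δ i) := rfl

theorem eR_idem (n : ℕ) (δ : I → ℕ) (i : I) : eR C n δ i * eR C n δ i = eR C n δ i := by
  rw [eR_eq, eS_mul, Finset.filter_true_of_mem (fun _ h => h)]

theorem eR_comm (n : ℕ) (δ : I → ℕ) (i : I) {p : ℕ} {r : Alg C (n + 1)}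
    (hr : r ∈ GG C (n + 1) n p) : eR C n δ i * r = r * eR C n δ i := by
  refine comm_of_gen C (eS_comm_Ee C (sR n δ i)) (fun j _ => eS_xA C _ j)
    (fun l hl => eS_tA C _ l ?_) hr
  intro ν hν
  rw [sR, Finset.mem_filter, mem_seqs] at hν ⊢
  refine ⟨by rw [content_swS, hν.1], ?_⟩
  rw [swS, dif_pos (by omega), Function.comp_apply, Equiv.swap_apply_of_ne_of_ne, hν.2]
  · simp [Fin.ext_iff]; omega
  · simp [Fin.ext_iff]; omega

theorem eIdem_eR (n : ℕ) (δ : I → ℕ) (i : I) :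
    eIdem C (n + 1) (addA δ i) * eR C n δ i = eR C n δ i := by
  rw [eR_eq]
  show eS C _ * eS C _ = _
  rw [eS_mul, Finset.filter_true_of_mem]
  intro ν hν
  rw [sR, Finset.mem_filter] at hν
  exact hν.1

theorem eD_eq (n : ℕ) (δ : I → ℕ) (i : I) : eD C (n + 1) (addA δ i) i = eR C n δ i := by
  rw [eD, eR]
  refine Finset.sum_congr (Finset.filter_congr ?_) fun _ _ => rfl
  intro ν _
  rw [dif_pos (Nat.succ_pos n)]
  rfl

variable {n : ℕ} {δ γ : I → ℕ} {i : I} {φ : bAlg C n δ →ₙₐ[k] bAlg C (n + 1) γ}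

theorem phi_one (hφ : IsUpRb C i φ) : φ 1 = toB C (eR C n δ i) := by
  rw [← toB_eIdem, eIdem, map_sum, map_sum, eR, map_sum]
  simp only [hφ.1]
  refine Finset.sum_bij' (fun ν _ => (Fin.snoc ν i : Fin (n + 1) → I)) (fun ν _ => Fin.init ν)
    ?_ ?_ ?_ ?_ ?_
  · intro ν hν
    rw [mem_seqs] at hν
    rw [Finset.mem_filter, mem_seqs, content_snoc, hν]
    simp
  · intro ν hν
    rw [Finset.mem_filter, mem_seqs] at hν
    rw [mem_seqs]
    apply addA_injective i
    show addA _ i = addA _ i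
    rw [← content_snoc]
    conv_lhs => rw [← hν.2]
    rw [Fin.snoc_init_self, hν.1]
  · intro ν _; simp
  · intro ν hν
    rw [Finset.mem_filter, mem_seqs] at hν
    rw [← hν.2, Fin.snoc_init_self]
  · intro ν _; rfl

theorem phi_mul_one (s : bAlg C n δ) : φ s * φ 1 = φ s := by rw [← map_mul, mul_one]
theorem phi_one_mul (s : bAlg C n δ) : φ 1 * φ s = φ s := by rw [← map_mul, one_mul]

theorem phi_of_GG (hφ : IsUpRb C i φ) {r : Alg C (n + 1)} (hr : r ∈ GG C (n + 1) n n) :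
    ∃ s, φ s = toB C r * φ 1 := by
  have key : r ∈ GG C (n + 1) n n ∧ ∃ s, φ s = toB C r * φ 1 := by
    refine GG_ind (P := fun r => r ∈ GG C (n + 1) n n ∧ ∃ s, φ s = toB C r * φ 1)
      ?_ ?_ ?_ ?_ ?_ ?_ hr
    · intro ν
      refine ⟨Ee_mem C _ _ ν, ?_⟩
      by_cases h : ν (Fin.last n) = i
      · refine ⟨toB C (Ee C (Fin.init ν)), ?_⟩
        rw [← phi_mul_one, hφ.1, ← h, Fin.snoc_init_self]
      · refine ⟨0, ?_⟩
        rw [map_zero, phi_one hφ, ← map_mul, eR_eq, ← eS_comm_Ee, eS_Ee, if_neg, map_zero]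
        rw [sR, Finset.mem_filter]
        exact fun h' => h h'.2
    · intro j hj
      refine ⟨xA_mem C hj, toB C (xA C n j), ?_⟩
      rw [xA_of C hj, hφ.2.1, phi_one hφ, ← map_mul, xA_of C (by omega : j < n + 1)]
      rfl
    · intro l hl
      refine ⟨tA_mem C hl, toB C (tA C n l), ?_⟩
      rw [tA_of C hl, hφ.2.2, phi_one hφ, ← map_mul, tA_of C (by omega : l + 1 < n + 1)]
    · intro c
      refine ⟨Subalgebra.algebraMap_mem _ c, c • 1, ?_⟩
      rw [map_smul, AlgHom.commutes, Algebra.smul_def]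
    · rintro a b ⟨ha, s, hs⟩ ⟨hb, s', hs'⟩
      refine ⟨add_mem ha hb, s + s', ?_⟩
      rw [map_add, map_add, add_mul, hs, hs']
    · rintro a b ⟨ha, s, hs⟩ ⟨hb, s', hs'⟩
      refine ⟨mul_mem ha hb, s * s', ?_⟩
      rw [map_mul, map_mul, hs, mul_assoc, phi_one_mul, hs', mul_assoc]
  exact key.2

/-- the operator `f ↦ (μ ↦ f (μ with n-th entry j))` -/
def upOp (k : Type) [Field k] {I : Type} (n : ℕ) (j : I) (f : VV k I) : VV k I :=
  fun μ => f (Function.update μ n j)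

theorem update_sw {l n : ℕ} (h : l + 1 < n) (μ : ℕ → I) (j : I) :
    Function.update μ n j ∘ sw l = Function.update (μ ∘ sw l) n j := by
  funext a
  simp only [Function.comp_apply, Function.update_apply]
  by_cases ha : a = n
  · subst ha
    rw [sw_ne (by omega) (by omega), if_pos rfl]
  · rw [if_neg ha, if_neg]
    intro h'
    by_cases h1 : a = l
    · subst h1; rw [sw_l] at h'; omega
    · by_cases h2 : a = l + 1
      · subst h2; rw [sw_l1] at h'; omega
      · rw [sw_ne h1 h2] at h'; exact ha h'

theorem upOp_comm (j : I) (r : Alg C n) :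
    ∀ f, upOp k n j (rep C n r f) = rep C n r (upOp k n j f) := by
  refine alg_ind (P := fun r => ∀ f, upOp k n j (rep C n r f) = rep C n r (upOp k n j f))
    ?_ ?_ ?_ ?_ ?_ ?_ r
  · intro ν f
    funext μ
    simp only [upOp, rep_e]
    have : resn n (Function.update μ n j) = resn n μ := by
      funext a
      simp only [resn]
      rw [Function.update_of_ne (by have := a.2; omega)]
    rw [this]
  · intro a ha f
    funext μ
    simp only [upOp, rep_xA C ha, xOp_apply]
  · intro l hl f
    funext μ
    simp only [upOp, rep_tA C hl, tauOp_apply]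
    rw [update_sw hl, Function.update_of_ne (by omega), Function.update_of_ne (by omega)]
  · intro c f
    rw [AlgHom.commutes]; rfl
  · intro a b ha hb f
    rw [map_add, LinearMap.add_apply, LinearMap.add_apply, ← ha, ← hb]
    rfl
  · intro a b ha hb f
    rw [map_mul, Module.End.mul_apply, Module.End.mul_apply, ← hb, ← ha]

theorem exists_lift (hφ : IsUpRb C i φ) (r0 : Alg C n) :
    ∃ r1 ∈ GG C (n + 1) n n, φ (toB C r0) = toB C r1 * φ 1 ∧ rep C (n + 1) r1 = rep C n r0 := by
  refine alg_ind (P := fun r0 => ∃ r1 ∈ GG C (n + 1) n n, φ (toB C r0) = toB C r1 * φ 1 ∧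
    rep C (n + 1) r1 = rep C n r0) ?_ ?_ ?_ ?_ ?_ ?_ r0
  · intro ν
    refine ⟨∑ j, Ee C (Fin.snoc ν j), sum_mem fun j _ => Ee_mem C _ _ _, ?_, ?_⟩
    · rw [phi_one hφ, ← map_mul, Finset.sum_mul, Finset.sum_eq_single i]
      · rw [map_mul, ← phi_one hφ, ← hφ.1, phi_mul_one]
      · intro j _ hj
        rw [eR_eq, ← eS_comm_Ee, eS_Ee, if_neg]
        rw [sR, Finset.mem_filter, Fin.snoc_last]
        exact fun h => hj h.2
      · simp
    · refine LinearMap.ext fun f => funext fun μ => ?_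
      rw [map_sum, LinearMap.sum_apply, Finset.sum_apply, rep_e]
      simp only [rep_e]
      have : ∀ j, resn (n + 1) μ = (Fin.snoc ν j : Fin (n + 1) → I) ↔ j = μ n ∧ resn n μ = ν := by
        intro j
        have h0 : resn (n + 1) μ = (Fin.snoc (resn n μ) (μ n) : Fin (n + 1) → I) := by
          funext a
          refine Fin.lastCases ?_ ?_ a
          · simp [resn]
          · intro b; simp [resn]
        rw [h0]
        constructor
        · intro h
          have h1 := congrArg Fin.init h
          have h2 := congrFun h (Fin.last n)
          simp at h1 h2
          exact ⟨h2.symm, h1⟩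
        · rintro ⟨rfl, rfl⟩; rfl
      simp only [this]
      by_cases h : resn n μ = ν
      · simp [h]
      · simp [h]
  · intro j hj
    refine ⟨xA C (n + 1) j, xA_mem C hj, ?_, ?_⟩
    · rw [xA_of C hj, hφ.2.1, phi_one hφ, ← map_mul, xA_of C (by omega : j < n + 1)]
      rfl
    · rw [rep_xA C hj, rep_xA C (by omega)]
  · intro l hl
    refine ⟨tA C (n + 1) l, tA_mem C hl, ?_, ?_⟩
    · rw [tA_of C hl, hφ.2.2, phi_one hφ, ← map_mul, tA_of C (by omega : l + 1 < n + 1)]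
    · rw [rep_tA C hl, rep_tA C (by omega)]
  · intro c
    refine ⟨algebraMap k _ c, Subalgebra.algebraMap_mem _ c, ?_, ?_⟩
    · rw [AlgHom.commutes, AlgHom.commutes, Algebra.algebraMap_eq_smul_one, map_smul,
        Algebra.smul_def]
    · rw [AlgHom.commutes, AlgHom.commutes]
  · rintro a b ⟨r, hr, h1, h2⟩ ⟨r', hr', h1', h2'⟩
    refine ⟨r + r', add_mem hr hr', ?_, ?_⟩
    · rw [map_add, map_add, map_add, add_mul, h1, h1']
    · rw [map_add, map_add, h2, h2']
  · rintro a b ⟨r, hr, h1, h2⟩ ⟨r', hr', h1', h2'⟩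
    refine ⟨r * r', mul_mem hr hr', ?_, ?_⟩
    · rw [map_mul, map_mul, map_mul, h1, mul_assoc, phi_one_mul, h1', mul_assoc]
    · rw [map_mul, map_mul, h2, h2']

theorem rep_eS {N : ℕ} (s : Finset (Fin N → I)) (f : VV k I) (μ : ℕ → I) :
    rep C N (eS C s) f μ = if resn N μ ∈ s then f μ else 0 := by
  rw [eS, map_sum, LinearMap.sum_apply, Finset.sum_apply]
  simp [rep_e]

theorem phi_inj (hγ : γ = addA δ i) (hφ : IsUpRb C i φ) (s : bAlg C n δ) (h : φ s = 0) :
    s = 0 := by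
  subst hγ
  have : Nonempty I := ⟨i⟩
  obtain ⟨r0, rfl⟩ := toB_surj s
  obtain ⟨r1, hr1, h1, h2⟩ := exists_lift hφ r0
  rw [h, phi_one hφ, ← map_mul] at h1
  have h3 := toB_ker h1.symm
  rw [← mul_assoc, eIdem_central, mul_assoc, eIdem_eR] at h3
  have h4 : rep C n (r0 * eIdem C n δ) = 0 := by
    have h5 : ∀ f μ, μ n = i → rep C n (r0 * eIdem C n δ) f μ = 0 := by
      intro f μ hμ
      have h6 := congrFun (LinearMap.congr_fun (congrArg (rep C (n + 1)) h3) f) μ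
      rw [map_mul, Module.End.mul_apply, h2, map_zero] at h6
      rw [map_mul, Module.End.mul_apply]
      have h7 := congrFun (upOp_comm (C := C) i r0 (rep C (n + 1) (eR C n δ i) f)) μ
      have h8 := congrFun (upOp_comm (C := C) i r0 (rep C n (eIdem C n δ) f)) μ
      have hu : Function.update μ n i = μ := by rw [← hμ, Function.update_eq_self]
      simp only [upOp] at h7 h8
      rw [hu] at h7 h8
      refine h8.trans (Eq.trans ?_ (h7.symm.trans h6))
      refine congrFun (congrArg (rep C n r0) ?_) μ
      funext μ'
      simp only [upOp]
      show rep C n (eS C _) f _ = rep C (n + 1) (eS C (sR n δ i)) f _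
      rw [rep_eS, rep_eS]
      have : ∀ μ' : ℕ → I, μ' n = i →
          (resn n μ' ∈ seqs δ n ↔ resn (n + 1) μ' ∈ sR n δ i) := by
        intro μ' hm
        have h0 : resn (n + 1) μ' = (Fin.snoc (resn n μ') i : Fin (n + 1) → I) := by
          funext a
          refine Fin.lastCases ?_ ?_ a
          · simp [resn, hm]
          · intro b; simp [resn]
        rw [h0, sR, Finset.mem_filter, mem_seqs, mem_seqs, content_snoc, Fin.snoc_last]
        constructor
        · intro h; exact ⟨by rw [h], rfl⟩
        · intro h; exact addA_injective i h.1
      simp only [this _ (Function.update_self n i μ')]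
    refine LinearMap.ext fun f => funext fun μ => ?_
    have h5' := h5 (upOp k n (μ n) f) (Function.update μ n i) (by simp)
    rw [← upOp_comm] at h5'
    simpa [upOp] using h5'
  have h5 := rep_faithful C h4
  have h6 := congrArg (toB C (β := δ)) h5
  rwa [map_mul, toB_eIdem, mul_one, map_zero] at h6

theorem phi_lift (hφ : IsUpRb C i φ) (s : bAlg C n δ) :
    ∃ r ∈ GG C (n + 1) n n, φ s = toB C r ∧ r * eR C n δ i = r := by
  obtain ⟨r0, rfl⟩ := toB_surj s
  obtain ⟨r1, hr1, h1, h2⟩ := exists_lift hφ r0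
  refine ⟨r1 * eR C n δ i, mul_mem hr1 (eS_mem C _ _ _), ?_, ?_⟩
  · rw [h1, phi_one hφ, map_mul]
  · rw [mul_assoc, eR_idem]

end Up
end KLR

set_option linter.unusedSectionVars false
set_option linter.unusedSimpArgs false
set_option linter.unusedVariables false

namespace KLR
section Basis
variable {k : Type} [Field k] {I : Type} [Fintype I] [DecidableEq I] {C : CartanDatum k I}
variable {n : ℕ} {δ γ : I → ℕ} {i : I} {φ : bAlg C n δ →ₙₐ[k] bAlg C (n + 1) γ}

variable (C n γ) in
/-- the free generators of `R(n+1)` over `R(n)` -/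
noncomputable def wB (p : Fin (n + 1) × ℕ) : bAlg C (n + 1) γ :=
  toB C (vA C (n + 1) p.1 n * xA C (n + 1) n ^ p.2)

theorem span_phi (hφ : IsUpRb C i φ) (b : bAlg C (n + 1) γ) :
    b * φ 1 ∈ Submodule.span k {u | ∃ p s, u = wB C n γ p * φ s} := by
  obtain ⟨r, rfl⟩ := toB_surj b
  have hr := span5 (C := C) (N := n + 1) n r (by rw [GG_top]; trivial)
  induction hr using Submodule.span_induction with
  | mem u hu =>
    obtain ⟨a, ha, c, r, hr, rfl⟩ := hu
    obtain ⟨s, hs⟩ := phi_of_GG hφ hr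
    refine Submodule.subset_span ⟨(⟨a, by omega⟩, c), s, ?_⟩
    rw [hs, wB, ← mul_assoc, ← map_mul]
  | zero => rw [map_zero, zero_mul]; exact zero_mem _
  | add a b _ _ ha hb => rw [map_add, add_mul]; exact add_mem ha hb
  | smul c a _ ha => rw [map_smul, smul_mul_assoc]; exact Submodule.smul_mem _ _ ha

theorem free_phi (hγ : γ = addA δ i) (hφ : IsUpRb C i φ)
    (σ : (Fin (n + 1) × ℕ) →₀ bAlg C n δ)
    (h : σ.sum (fun p s => wB C n γ p * φ s) = 0) : σ = 0 := by
  subst hγ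
  have : Nonempty I := ⟨i⟩
  classical
  choose g0 hg0 hg1 hg2 using phi_lift hφ
  let g : bAlg C n δ → Alg C (n + 1) := fun s => if s = 0 then 0 else g0 s
  have gz : g 0 = 0 := if_pos rfl
  have g1 : ∀ s, g s ∈ GG C (n + 1) n n := by
    intro s
    by_cases hs : s = 0
    · rw [hs, gz]; exact zero_mem _
    · simp only [g, if_neg hs]; exact hg0 s
  have g2 : ∀ s, φ s = toB C (g s) := by
    intro s
    by_cases hs : s = 0
    · rw [hs, gz, map_zero, map_zero]
    · simp only [g, if_neg hs]; exact hg1 s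
  have g3 : ∀ s, g s * eR C n δ i = g s := by
    intro s
    by_cases hs : s = 0
    · rw [hs, gz, zero_mul]
    · simp only [g, if_neg hs]; exact hg2 s
  let F := Finsupp.mapRange g gz σ
  have hF : F = 0 := by
    refine free_main C (N := n + 1) (m := n) (by omega) F (fun p => by
      simp only [F, Finsupp.mapRange_apply]; exact g1 _) ?_
    have e1 : toB C (β := addA δ i)
        (F.sum (fun p y => vA C (n + 1) p.1 n * xA C (n + 1) n ^ p.2 * y)) = 0 := by
      rw [← h]
      simp only [F]
      rw [Finsupp.sum_mapRange_index (by simp), Finsupp.sum, Finsupp.sum, map_sum]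
      refine Finset.sum_congr rfl fun p _ => ?_
      rw [map_mul, g2]; rfl
    have e2 := toB_ker e1
    rw [← e2]
    simp only [F]
    rw [Finsupp.sum_mapRange_index (by simp), Finsupp.sum, eIdem_central, Finset.sum_mul]
    refine Finset.sum_congr rfl fun p _ => ?_
    rw [mul_assoc _ (g _), ← g3, mul_assoc (g _), ← eIdem_central, eIdem_eR]
  ext p
  apply phi_inj rfl hφ
  rw [g2]
  have : F p = 0 := by rw [hF]; rfl
  rw [← Finsupp.mapRange_apply (f := g) (hf := gz)]
  show toB C (F p) = 0
  rw [this, map_zero]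

theorem exists_kappa (hγ : γ = addA δ i) (hφ : IsUpRb C i φ) :
    ∃ κ : Fin (n + 1) × ℕ → (bAlg C (n + 1) γ →ₗ[k] bAlg C n δ),
      (∀ p b s, κ p (b * φ s) = κ p b * s) ∧
      (∀ p q s, κ p (wB C n γ q * φ s) = if p = q then s else 0) := by
  let φl : bAlg C n δ →ₗ[k] bAlg C (n + 1) γ :=
    { toFun := φ, map_add' := map_add φ, map_smul' := fun c s => map_smul φ c s }
  let L : ((Fin (n + 1) × ℕ) →₀ bAlg C n δ) →ₗ[k] bAlg C (n + 1) γ :=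
    Finsupp.lsum k (fun p => (LinearMap.mulLeft k (wB C n γ p)).comp φl)
  have hL : ∀ σ, L σ = σ.sum (fun p s => wB C n γ p * φ s) := fun σ => rfl
  have hLs : ∀ p s, L (Finsupp.single p s) = wB C n γ p * φ s := by
    intro p s
    rw [hL, Finsupp.sum_single_index (by simp)]
  have hinj : Function.Injective L := by
    rw [injective_iff_map_eq_zero]
    exact fun σ hσ => free_phi hγ hφ σ hσ
  have hran : ∀ b, b * φ 1 ∈ LinearMap.range L := by
    intro b
    refine (Submodule.span_le.2 ?_) (span_phi hφ b)
    rintro u ⟨p, s, rfl⟩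
    exact ⟨_, hLs p s⟩
  let eL := LinearEquiv.ofInjective L hinj
  let K : bAlg C (n + 1) γ →ₗ[k] ((Fin (n + 1) × ℕ) →₀ bAlg C n δ) :=
    eL.symm.toLinearMap.comp ((LinearMap.mulRight k (φ 1)).codRestrict (LinearMap.range L) hran)
  have hK : ∀ b, L (K b) = b * φ 1 := by
    intro b
    have := congrArg Subtype.val (eL.apply_symm_apply
      ((LinearMap.mulRight k (φ 1)).codRestrict (LinearMap.range L) hran b))
    exact this
  have hLr : ∀ σ s, L σ * φ s = L (Finsupp.mapRange (· * s) (zero_mul s) σ) := by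
    intro σ s
    rw [hL, hL, Finsupp.sum_mapRange_index (by simp), Finsupp.sum, Finsupp.sum, Finset.sum_mul]
    refine Finset.sum_congr rfl fun p _ => ?_
    rw [map_mul, mul_assoc]
  refine ⟨fun p => (Finsupp.lapply p).comp K, ?_, ?_⟩
  · intro p b s
    have : K (b * φ s) = Finsupp.mapRange (· * s) (zero_mul s) (K b) := by
      apply hinj
      rw [← hLr, hK, hK, mul_assoc, mul_assoc, phi_mul_one, phi_one_mul]
    show K (b * φ s) p = _
    rw [this]; rfl
  · intro p q s
    have : K (wB C n γ q * φ s) = Finsupp.single q s := by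
      apply hinj
      rw [hK, hLs, mul_assoc, phi_mul_one]
    show K _ p = _
    rw [this, Finsupp.single_apply]
    by_cases h : q = p
    · simp [h]
    · simp [h, Ne.symm h]

/-- explicit values of `φ` -/
theorem phi_xA (hφ : IsUpRb C i φ) {j : ℕ} (hj : j < n) :
    φ (toB C (xA C n j)) = toB C (xA C (n + 1) j) * φ 1 := by
  rw [xA_of C hj, hφ.2.1, phi_one hφ, ← map_mul, xA_of C (by omega : j < n + 1)]
  rfl

theorem phi_tA (hφ : IsUpRb C i φ) {l : ℕ} (hl : l + 1 < n) :
    φ (toB C (tA C n l)) = toB C (tA C (n + 1) l) * φ 1 := by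
  rw [tA_of C hl, hφ.2.2, phi_one hφ, ← map_mul, tA_of C (by omega : l + 1 < n + 1)]

theorem phi_mul {a b : Alg C n} {a' b' : Alg C (n + 1)}
    (ha : φ (toB C a) = toB C a' * φ 1) (hb : φ (toB C b) = toB C b' * φ 1) :
    φ (toB C (a * b)) = toB C (a' * b') * φ 1 := by
  rw [map_mul, map_mul, map_mul, ha, mul_assoc, phi_one_mul, hb, mul_assoc]

theorem phi_xpow (hφ : IsUpRb C i φ) {j : ℕ} (hj : j < n) (c : ℕ) :
    φ (toB C (xA C n j ^ c)) = toB C (xA C (n + 1) j ^ c) * φ 1 := by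
  induction c with
  | zero => simp
  | succ c ih => rw [pow_succ, pow_succ]; exact phi_mul ih (phi_xA hφ hj)

theorem phi_vA (hφ : IsUpRb C i φ) {a m : ℕ} (ham : a ≤ m) (hm : m < n) :
    φ (toB C (vA C n a m)) = toB C (vA C (n + 1) a m) * φ 1 := by
  induction m, ham using Nat.le_induction with
  | base => rw [vA_self, vA_self]; simp
  | succ m h ih =>
    rw [vA_succ C h, vA_succ C h]
    exact phi_mul (ih (by omega)) (phi_tA hφ hm)

theorem phi_eS (hφ : IsUpRb C i φ) (s : Finset (Fin n → I)) :
    φ (toB C (eS C s)) = toB C (eS C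
      (Finset.univ.filter fun ν : Fin (n + 1) → I => Fin.init ν ∈ s ∧ ν (Fin.last n) = i)) := by
  rw [eS, map_sum, map_sum, eS, map_sum]
  simp only [hφ.1]
  refine Finset.sum_bij' (fun ν _ => (Fin.snoc ν i : Fin (n + 1) → I)) (fun ν _ => Fin.init ν)
    ?_ ?_ ?_ ?_ ?_
  · intro ν hν
    simpa using hν
  · intro ν hν
    simp only [Finset.mem_filter] at hν
    exact hν.2.1
  · intro ν _; simp
  · intro ν hν
    simp only [Finset.mem_filter] at hν
    rw [← hν.2.2, Fin.snoc_init_self]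
  · intro ν _; rfl

end Basis
end KLR

set_option linter.unusedSectionVars false
set_option linter.unusedSimpArgs false
set_option linter.unusedVariables false

namespace KLR
section Two
variable {k : Type} [Field k] {I : Type} [Fintype I] [DecidableEq I] {C : CartanDatum k I}
variable {n : ℕ} {β δ : I → ℕ} {i : I}
  {φ : bAlg C (n + 1) β →ₙₐ[k] bAlg C (n + 2) (addA β i)}
  {φ' : bAlg C n δ →ₙₐ[k] bAlg C (n + 1) β}

theorem X_comm {m : ℕ} {δ γ : I → ℕ} {ψ : bAlg C m δ →ₙₐ[k] bAlg C (m + 1) γ}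
    (hψ : IsUpRb C i ψ) (s : bAlg C m δ) :
    toB C (xA C (m + 1) m) * ψ s = ψ s * toB C (xA C (m + 1) m) := by
  obtain ⟨r, hr, h, -⟩ := phi_lift hψ s
  rw [h, ← map_mul, ← map_mul, GG_comm_x C le_rfl hr]

theorem swS_self {N l : ℕ} (h : l + 1 < N) (μ : Fin N → I)
    (hμ : μ ⟨l, by omega⟩ = μ ⟨l + 1, h⟩) : swS l μ = μ := by
  rw [swS, dif_pos h]
  funext a
  rw [Function.comp_apply, Equiv.swap_apply_def]
  split_ifs with h1 h2
  · rw [h1, hμ]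
  · rw [h2, hμ]
  · rfl

theorem tau_comm (hφ : IsUpRb C i φ) (hφ' : IsUpRb C i φ') (t : bAlg C n δ) :
    toB C (tA C (n + 2) n) * φ (φ' t) = φ (φ' t) * toB C (tA C (n + 2) n) := by
  have he : ∀ ν : Fin n → I, toB C (tA C (n + 2) n) * φ (φ' (toB C (Ee C ν))) =
      φ (φ' (toB C (Ee C ν))) * toB C (tA C (n + 2) n) := by
    intro ν
    rw [hφ'.1, hφ.1, ← map_mul, ← map_mul, tA_Ee, swS_self (by omega)]
    have h1 : (⟨n, by omega⟩ : Fin (n + 2)) = Fin.castSucc (Fin.last n) := rfl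
    have h2 : (⟨n + 1, by omega⟩ : Fin (n + 2)) = Fin.last (n + 1) := rfl
    rw [h1, h2, Fin.snoc_castSucc, Fin.snoc_last, Fin.snoc_last]
  have h1 : toB C (tA C (n + 2) n) * φ (φ' 1) = φ (φ' 1) * toB C (tA C (n + 2) n) := by
    rw [← toB_eIdem, eIdem, map_sum, map_sum, map_sum, Finset.mul_sum, Finset.sum_mul]
    exact Finset.sum_congr rfl fun ν _ => he ν
  obtain ⟨r, rfl⟩ := toB_surj t
  refine alg_ind (P := fun r => toB C (tA C (n + 2) n) * φ (φ' (toB C r)) =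
      φ (φ' (toB C r)) * toB C (tA C (n + 2) n)) he ?_ ?_ ?_ ?_ ?_ r
  · intro j hj
    have : φ (φ' (toB C (xA C n j))) = toB C (xA C (n + 2) j) * φ (φ' 1) := by
      rw [phi_xA hφ' hj, map_mul, phi_xA hφ (by omega), mul_assoc, phi_one_mul]
    rw [this, mul_assoc, ← h1, ← mul_assoc, ← mul_assoc, ← map_mul, ← map_mul,
      tA_xA_far C (by omega) (by omega)]
  · intro l hl
    have : φ (φ' (toB C (tA C n l))) = toB C (tA C (n + 2) l) * φ (φ' 1) := by
      rw [phi_tA hφ' hl, map_mul, phi_tA hφ (by omega), mul_assoc, phi_one_mul]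
    rw [this, mul_assoc, ← h1, ← mul_assoc, ← mul_assoc, ← map_mul, ← map_mul,
      tA_comm C (by omega)]
  · intro c
    rw [AlgHom.commutes, Algebra.algebraMap_eq_smul_one, map_smul, map_smul, mul_smul_comm,
      smul_mul_assoc, h1]
  · intro a b ha hb
    rw [map_add, map_add, map_add, mul_add, add_mul, ha, hb]
  · intro a b ha hb
    rw [map_mul, map_mul, map_mul, ← mul_assoc, ha, mul_assoc, hb, mul_assoc]

/-- the index set of `φ(e')` -/
def sT (n : ℕ) (β : I → ℕ) (i : I) : Finset (Fin (n + 2) → I) :=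
  Finset.univ.filter fun ν : Fin (n + 2) → I =>
    (Fin.init ν : Fin (n + 1) → I) ∈ (seqs β (n + 1)).filter (fun ν => if h : 0 < n + 1 then
      ν ⟨n + 1 - 1, Nat.sub_lt h one_pos⟩ = i else False) ∧ ν (Fin.last (n + 1)) = i

theorem mem_sT (ν : Fin (n + 2) → I) : ν ∈ sT n β i ↔ content ν = addA β i ∧
    ν ⟨n, by omega⟩ = i ∧ ν (Fin.last (n + 1)) = i := by
  rw [sT, Finset.mem_filter, Finset.mem_filter, mem_seqs, dif_pos (Nat.succ_pos n)]
  have h0 : ν (Fin.last (n + 1)) = i → (content (Fin.init ν : Fin (n + 1) → I) = β ↔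
      content ν = addA β i) := by
    intro h
    constructor
    · intro h'
      rw [← h', ← content_snoc]
      conv_rhs => rw [← h]
      rw [Fin.snoc_init_self]
    · intro h'
      apply addA_injective i
      show addA _ _ = addA _ _
      rw [← content_snoc]
      conv_lhs => rw [← h]
      rw [Fin.snoc_init_self, h']
  constructor
  · rintro ⟨-, ⟨h1, h2⟩, h3⟩
    exact ⟨(h0 h3).1 h1, h2, h3⟩
  · rintro ⟨h1, h2, h3⟩
    exact ⟨Finset.mem_univ _, ⟨(h0 h3).2 h1, h2⟩, h3⟩

theorem phi_e' (hφ : IsUpRb C i φ) : φ (eDb C (n + 1) β i) = toB C (eS C (sT n β i)) := by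
  exact phi_eS hφ _

theorem eTe : eR C (n + 1) β i * tA C (n + 2) n * eR C (n + 1) β i =
    tA C (n + 2) n * eS C (sT n β i) := by
  refine eq_of_Ee C fun ν => ?_
  rw [mul_assoc, mul_assoc (tA C (n + 2) n), eS_Ee, eR_eq, eS_Ee]
  have hl : (swS n ν) (Fin.last (n + 1)) = ν ⟨n, by omega⟩ := by
    rw [swS, dif_pos (by omega), Function.comp_apply]
    congr 1
    exact Equiv.swap_apply_right _ _
  by_cases h1 : ν ∈ sR (n + 1) β i
  · have h1' := h1
    rw [sR, Finset.mem_filter, mem_seqs] at h1'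
    rw [if_pos h1, mul_assoc, tA_Ee, ← mul_assoc, eS_Ee]
    by_cases h2 : ν ⟨n, by omega⟩ = i
    · rw [if_pos, if_pos, ← tA_Ee]
      · rw [mem_sT]; exact ⟨h1'.1, h2, h1'.2⟩
      · rw [sR, Finset.mem_filter, mem_seqs, content_swS, hl]
        exact ⟨h1'.1, h2⟩
    · rw [if_neg, if_neg, zero_mul, mul_zero]
      · rw [mem_sT]; exact fun h => h2 h.2.1
      · rw [sR, Finset.mem_filter, hl]; exact fun h => h2 h.2
  · rw [if_neg h1, if_neg, mul_zero, mul_zero]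
    rw [mem_sT]
    intro h
    apply h1
    rw [sR, Finset.mem_filter, mem_seqs]
    exact ⟨h.1, h.2.2⟩

theorem eTe' (hφ : IsUpRb C i φ) : φ 1 * toB C (tA C (n + 2) n) * φ 1 =
    toB C (tA C (n + 2) n) * φ (eDb C (n + 1) β i) := by
  rw [phi_one hφ, phi_e' hφ, ← map_mul, ← map_mul, ← map_mul, eTe]

theorem e_span (hφ : IsUpRb C i φ) (b : bAlg C (n + 2) (addA β i)) :
    φ 1 * b * φ 1 ∈ Submodule.span k
      ({u | ∃ s y, u = φ s * toB C (tA C (n + 2) n) * φ (eDb C (n + 1) β i * y)} ∪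
       {u | ∃ (j : ℕ) (s : _), u = toB C (xA C (n + 2) (n + 1)) ^ j * φ s}) := by
  obtain ⟨r, rfl⟩ := toB_surj b
  have hr := span4 (C := C) (N := n + 2) n r (by rw [GG_top]; trivial)
  have comm : ∀ r ∈ GG C (n + 2) (n + 1) (n + 1), φ 1 * toB C r = toB C r * φ 1 := by
    intro r hr
    rw [phi_one hφ, ← map_mul, ← map_mul, eR_comm _ _ _ hr]
  have e2 : φ 1 * φ 1 = φ 1 := phi_mul_one 1
  induction hr using Submodule.span_induction with
  | mem u hu =>
    rcases hu with ⟨r, hr, s, hs, rfl⟩ | ⟨c, r, hr, rfl⟩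
    · obtain ⟨r', hr'⟩ := phi_of_GG hφ hr
      obtain ⟨s', hs'⟩ := phi_of_GG hφ hs
      refine Submodule.subset_span (Or.inl ⟨r', s', ?_⟩)
      have h1 : φ (eDb C (n + 1) β i * s') = φ (eDb C (n + 1) β i) * φ s' := map_mul _ _ _
      set τ : bAlg C (n + 2) (addA β i) := toB C (tA C (n + 2) n)
      have h2 : φ r' * τ * φ (eDb C (n + 1) β i * s') = φ r' * (φ 1 * τ * φ 1) * φ s' := by
        rw [h1, eTe' hφ, ← mul_assoc, ← mul_assoc]
      have h3 : φ r' * (φ 1 * τ * φ 1) * φ s' = (φ r' * φ 1) * τ * (φ 1 * φ s') := by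
        simp only [mul_assoc]
      have h4 : φ 1 * toB C (r * tA C (n + 2) n * s) * φ 1 =
          (φ 1 * toB C r) * τ * (toB C s * φ 1) := by
        rw [map_mul, map_mul]; simp only [mul_assoc]; rfl
      rw [h2, h3, h4, comm r hr, ← hr', ← hs', phi_mul_one, phi_one_mul]
    · obtain ⟨r', hr'⟩ := phi_of_GG hφ hr
      refine Submodule.subset_span (Or.inr ⟨c, r', ?_⟩)
      have hX : Commute (toB C (xA C (n + 2) (n + 1)) ^ c) (φ 1) :=
        Commute.pow_left (X_comm hφ 1) c
      rw [map_mul, mul_assoc, mul_assoc, ← hr', map_pow, ← mul_assoc, ← hX.eq, mul_assoc,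
        phi_one_mul]
  | zero => rw [map_zero, mul_zero, zero_mul]; exact zero_mem _
  | add a b _ _ ha hb => rw [map_add, mul_add, add_mul]; exact add_mem ha hb
  | smul c a _ ha =>
    rw [map_smul, mul_smul_comm, smul_mul_assoc]; exact Submodule.smul_mem _ _ ha

theorem wB_last {m : ℕ} {γ : I → ℕ} (j : ℕ) :
    wB C m γ (Fin.last m, j) = toB C (xA C (m + 1) m) ^ j := by
  rw [wB, Fin.val_last, vA_self, one_mul, map_pow]

theorem wB_tau (hφ : IsUpRb C i φ) (a : Fin (n + 1)) (c : ℕ) :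
    ∃ z ∈ Submodule.span k {u | ∃ (j : ℕ) (s : _), u = toB C (xA C (n + 2) (n + 1)) ^ j * φ s},
    φ (wB C n β (a, c)) * toB C (tA C (n + 2) n) * φ (eDb C (n + 1) β i) =
      wB C (n + 1) (addA β i) (a.castSucc, c) * φ (eDb C (n + 1) β i) - z := by
  have h1 : φ (wB C n β (a, c)) =
      toB C (vA C (n + 2) a n * xA C (n + 2) n ^ c) * φ 1 :=
    phi_mul (phi_vA hφ (by have := a.2; omega) (by omega)) (phi_xpow hφ (by omega) c)
  refine ⟨toB C (vA C (n + 2) a n * (tA C (n + 2) n * xA C (n + 2) (n + 1) ^ c -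
    xA C (n + 2) n ^ c * tA C (n + 2) n)) * φ (eDb C (n + 1) β i), ?_, ?_⟩
  · have hd := mul_mem (vA_mem C (N := n + 2) a n (n + 2)) (tA_xpow C (N := n + 2) n c)
    have h3 := span3 C (N := n + 2) (n + 1) _ hd
    generalize vA C (n + 2) a n * (tA C (n + 2) n * xA C (n + 2) (n + 1) ^ c -
      xA C (n + 2) n ^ c * tA C (n + 2) n) = d at h3
    induction h3 using Submodule.span_induction with
    | mem u hu =>
      obtain ⟨c, r, hr, rfl⟩ := hu
      obtain ⟨s, hs⟩ := phi_of_GG hφ hr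
      refine Submodule.subset_span ⟨c, s * eDb C (n + 1) β i, ?_⟩
      rw [map_mul, map_mul, hs, map_pow, mul_assoc, mul_assoc, phi_one_mul]
    | zero => rw [map_zero, zero_mul]; exact zero_mem _
    | add a b _ _ ha hb => rw [map_add, add_mul]; exact add_mem ha hb
    | smul c a _ ha =>
      rw [map_smul, smul_mul_assoc]; exact Submodule.smul_mem _ _ ha
  · have h2 : φ 1 * toB C (tA C (n + 2) n) * φ (eDb C (n + 1) β i) =
        toB C (tA C (n + 2) n) * φ (eDb C (n + 1) β i) := by
      conv_lhs => rw [← phi_one_mul (eDb C (n + 1) β i), ← mul_assoc, eTe' hφ]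
      rw [mul_assoc, ← map_mul]
      congr 2
      rw [eDb, ← map_mul]
      congr 1
      show eS C _ * eS C _ = _
      rw [eS_mul, Finset.filter_true_of_mem (fun _ h => h)]
      rfl
    have h4 : wB C (n + 1) (addA β i) (a.castSucc, c) =
        toB C (vA C (n + 2) a n * tA C (n + 2) n * xA C (n + 2) (n + 1) ^ c) := by
      rw [wB]
      show toB C (vA C (n + 2) a (n + 1) * _) = _
      rw [vA_succ C (by have := a.2; omega)]
    rw [h1, h4, mul_assoc, mul_assoc, ← mul_assoc (φ 1), h2, ← sub_mul, ← map_sub, mul_sub,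
      mul_assoc, sub_sub_cancel, ← mul_assoc, ← map_mul, mul_assoc]

end Two
end KLR

set_option linter.unusedSectionVars false
set_option linter.unusedSimpArgs false
set_option linter.unusedVariables false
set_option linter.style.haveILetI false

namespace KLR
section Abs
open TensorProduct
variable {k : Type} [Field k]

/-- abstract facts on the tower of algebras -/
structure Pack2 {S B : Type} [Ring S] [Algebra k S] [Ring B] [Algebra k B]
    (φ : S →ₙₐ[k] B) (e X : B) : Prop where
  one : φ 1 = e
  xcomm : ∀ s, X * φ s = φ s * X
  lam : ∃ lam : ℕ → (B →ₗ[k] S), (∀ j b s, lam j (b * φ s) = lam j b * s) ∧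
    (∀ j j' s, lam j (X ^ j' * φ s) = if j = j' then s else 0)

structure Pack1 {T S B P : Type} [Ring T] [Algebra k T] [Ring S] [Algebra k S] [Ring B] [Algebra k B]
    [DecidableEq P]
    (φ : S →ₙₐ[k] B) (φ' : T →ₙₐ[k] S) (e X θ : B) (e' : S) (w : P → S) : Prop where
  pack2 : Pack2 φ e X
  one' : φ' 1 = e'
  eth : e * θ = θ
  thcomm : ∀ t, θ * φ (φ' t) = φ (φ' t) * θ
  span : ∀ b, e * b * e ∈ Submodule.span k ({u | ∃ s y, u = φ s * θ * φ (e' * y)} ∪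
       {u | ∃ (j : ℕ) (s : _), u = X ^ j * φ s})
  span' : ∀ s, s * e' ∈ Submodule.span k {u | ∃ p t, u = w p * φ' t}
  kap : ∃ κ : P → (B →ₗ[k] S), (∀ p b s, κ p (b * φ s) = κ p b * s) ∧
    (∀ p q, κ p (φ (w q) * θ) = if p = q then e' else 0) ∧ (∀ p j s, κ p (X ^ j * φ s) = 0)

section OTgen
variable {S B M : Type} [Ring S] [Algebra k S] [Ring B] [Algebra k B]
  [AddCommGroup M] [Module k M] [Module S M] [IsScalarTower k S M] {φ : S →ₙₐ[k] B}

/-- `k`-bilinear symbol -/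
noncomputable def sy (φ : S →ₙₐ[k] B) (b : B) (m : M) : OT k S B M φ := OTmk k S B M φ (b ⊗ₜ[k] m)

theorem sy_add_left (b b' : B) (m : M) : sy φ (b + b') m = sy φ b m + sy φ b' m := by
  rw [sy, add_tmul]; rfl
theorem sy_add_right (b : B) (m m' : M) : sy φ b (m + m') = sy φ b m + sy φ b m' := by
  rw [sy, tmul_add]; rfl
theorem sy_smul_left (c : k) (b : B) (m : M) : sy φ (c • b) m = c • sy φ b m := by
  rw [sy, ← smul_tmul']; rfl
theorem sy_smul_right (c : k) (b : B) (m : M) : sy φ b (c • m) = c • sy φ b m := by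
  rw [sy, tmul_smul]; rfl
theorem sy_zero_left (m : M) : sy φ (0 : B) m = 0 := by
  rw [sy, zero_tmul]; rfl
theorem sy_zero_right (b : B) : sy φ b (0 : M) = 0 := by
  rw [sy, tmul_zero]; rfl
theorem sy_bal (b : B) (s : S) (m : M) : sy φ (b * φ s) m = sy φ b (s • m) := by
  refine (Submodule.Quotient.eq _).2 (Submodule.subset_span ⟨b, s, m, rfl⟩)
theorem smul_sy (a b : B) (m : M) : a • sy φ b m = sy φ (a * b) m := rfl
theorem sy_one (b : B) (m : M) : sy φ (b * φ 1) m = sy φ b m := by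
  rw [sy_bal, one_smul]

theorem ot_ind {P : OT k S B M φ → Prop} (h : ∀ b m, P (sy φ b m)) (ha : ∀ x y, P x → P y → P (x + y))
    (h0 : P 0) (z : OT k S B M φ) : P z := by
  obtain ⟨z, rfl⟩ := Submodule.Quotient.mk_surjective _ z
  induction z using TensorProduct.induction_on with
  | zero => exact h0
  | tmul b m => exact h b m
  | add x y hx hy => exact ha _ _ hx hy

theorem exists_fun (κ : B →ₗ[k] S) (hκ : ∀ b s, κ (b * φ s) = κ b * s) :
    ∃ K : OT k S B M φ →ₗ[k] M, ∀ b m, K (sy φ b m) = κ b • m := by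
  let K0 : B ⊗[k] M →ₗ[k] M := TensorProduct.lift ((Algebra.lsmul k k M).toLinearMap.comp κ)
  have hK0 : ∀ b m, K0 (b ⊗ₜ m) = κ b • m := fun b m => rfl
  have h : (TRel k S B M φ).restrictScalars k ≤ LinearMap.ker K0 := by
    intro z hz
    have key : ∀ b : B, K0 (b • z) = 0 := by
      refine Submodule.span_induction (p := fun z _ => ∀ b : B, K0 (b • z) = 0) ?_ ?_ ?_ ?_ hz
      · rintro z ⟨b, r, m, rfl⟩ b'
        rw [smul_sub, smul_tmul', smul_tmul', map_sub, hK0, hK0, smul_eq_mul, smul_eq_mul,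
          ← mul_assoc, hκ, mul_smul, sub_self]
      · intro b; rw [smul_zero, map_zero]
      · intro x y _ _ hx hy b; rw [smul_add, map_add, hx, hy, add_zero]
      · intro a x _ hx b; rw [smul_smul, hx]
    have := key 1
    rwa [one_smul] at this
  refine ⟨(Submodule.liftQ _ K0 h).comp
    (Submodule.Quotient.restrictScalarsEquiv k (TRel k S B M φ)).symm.toLinearMap, ?_⟩
  intro b m
  exact hK0 b m

theorem mem_eSub {e : B} {z : OT k S B M φ} (h : e • z = z) : z ∈ eSub k B (OT k S B M φ) e :=
  ⟨z, h⟩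

end OTgen

section Psi2
variable {S B M : Type} [Ring S] [Algebra k S] [Ring B] [Algebra k B]
  [AddCommGroup M] [Module k M] [Module S M] [IsScalarTower k S M] {φ : S →ₙₐ[k] B} {e X : B}

theorem Pack2.xpow (pk : Pack2 φ e X) (j : ℕ) (s : S) : X ^ j * φ s = φ s * X ^ j :=
  (Commute.pow_left (pk.xcomm s) j : Commute _ _).eq

theorem Pack2.mem (pk : Pack2 φ e X) (j : ℕ) (m : M) :
    sy φ (X ^ j * φ 1) m ∈ eSub k B (OT k S B M φ) e := by
  refine mem_eSub ?_
  rw [smul_sy, ← pk.one, ← mul_assoc, ← pk.xpow, mul_assoc, ← map_mul, one_mul]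

/-- the map `M[t] → E F M` -/
noncomputable def Psi2 (pk : Pack2 φ e X) (d : EData k (OT k S B M φ) e φ) :
    letI := d.inst
    (ℕ →₀ M) →ₗ[S] ↥(eSub k B (OT k S B M φ) e) :=
  letI := d.inst
  Finsupp.lsum ℕ (fun j =>
    { toFun := fun m => ⟨sy φ (X ^ j * φ 1) m, pk.mem j m⟩
      map_add' := fun m m' => Subtype.ext (sy_add_right _ _ _)
      map_smul' := fun s m => Subtype.ext (by
        rw [d.compat, RingHom.id_apply]
        show sy φ (X ^ j * φ 1) (s • m) = φ s • sy φ (X ^ j * φ 1) m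
        rw [smul_sy, ← sy_bal, mul_assoc, ← map_mul, one_mul, ← mul_assoc, ← pk.xpow, mul_assoc,
          ← map_mul, mul_one]) })

theorem Psi2_single (pk : Pack2 φ e X) (d : EData k (OT k S B M φ) e φ) (j : ℕ) (m : M) :
    letI := d.inst
    (Psi2 pk d (Finsupp.single j m)).val = sy φ (X ^ j * φ 1) m := by
  letI := d.inst
  rw [Psi2, Finsupp.lsum_single]
  rfl

theorem Psi2_fun (pk : Pack2 φ e X) (d : EData k (OT k S B M φ) e φ)
    (K : OT k S B M φ →ₗ[k] M) (v : ℕ →₀ M) :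
    letI := d.inst
    K (Psi2 pk d v).val = v.sum fun j m => K (sy φ (X ^ j * φ 1) m) := by
  letI := d.inst
  induction v using Finsupp.induction_linear with
  | zero => simp
  | add v v' h h' =>
    rw [map_add, Submodule.coe_add, map_add, h, h', Finsupp.sum_add_index']
    · intro j; rw [sy_zero_right, map_zero]
    · intro j m m'; rw [sy_add_right, map_add]
  | single j m =>
    rw [Psi2_single, Finsupp.sum_single_index]
    rw [sy_zero_right, map_zero]

theorem Psi2_inj (pk : Pack2 φ e X) (d : EData k (OT k S B M φ) e φ) (v : ℕ →₀ M) :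
    letI := d.inst
    Psi2 pk d v = 0 → v = 0 := by
  letI := d.inst
  intro h
  obtain ⟨lam, h1, h2⟩ := pk.lam
  ext j
  obtain ⟨K, hK⟩ := exists_fun (M := M) (lam j) (h1 j)
  have := Psi2_fun pk d K v
  rw [h, Submodule.coe_zero, map_zero] at this
  simp only [hK, h2] at this
  rw [Finsupp.zero_apply, this]
  simp only [ite_smul, one_smul, zero_smul]
  rw [Finsupp.sum_ite_eq]
  split_ifs with h
  · rfl
  · simpa using h

end Psi2
end Abs
end KLR

set_option linter.unusedSectionVars false
set_option linter.unusedSimpArgs false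
set_option linter.unusedVariables false
set_option linter.style.haveILetI false

namespace KLR
section Abs
open TensorProduct
variable {k : Type} [Field k]

section Zero
variable {S B M : Type} [Ring S] [Algebra k S] [Ring B] [Algebra k B]
  [AddCommGroup M] [Module k M] [Module S M] [IsScalarTower k S M] {φ : S →ₙₐ[k] B} {e X : B}

theorem eSub_ind (he : φ 1 = e) {P : OT k S B M φ → Prop}
    (h : ∀ b m, P (sy φ (e * b * e) m)) (ha : ∀ x y, P x → P y → P (x + y))
    (h0 : P 0) (z : ↥(eSub k B (OT k S B M φ) e)) : P z := by
  obtain ⟨_, z, rfl⟩ := z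
  show P (e • z)
  refine ot_ind (P := fun z => P (e • z)) ?_ ?_ ?_ z
  · intro b m
    have := h b m
    rwa [← he, sy_one, ← smul_sy, he] at this
  · intro x y hx hy
    rw [smul_add]; exact ha _ _ hx hy
  · rw [smul_zero]; exact h0

theorem Psi2_surj (pk : Pack2 φ e X)
    (hs : ∀ b, e * b * e ∈ Submodule.span k {u | ∃ (j : ℕ) (s : _), u = X ^ j * φ s})
    (d : EData k (OT k S B M φ) e φ) :
    letI := d.inst
    Function.Surjective (Psi2 pk d) := by
  letI := d.inst
  letI := d.tower
  intro z
  suffices h : ∃ v, (Psi2 pk d v).val = z.val by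
    obtain ⟨v, hv⟩ := h
    exact ⟨v, Subtype.ext hv⟩
  refine eSub_ind pk.one (P := fun z => ∃ v, (Psi2 pk d v).val = z) ?_ ?_ ?_ z
  · intro b m
    refine Submodule.span_induction (p := fun u _ => ∃ v, (Psi2 pk d v).val = sy φ u m)
      ?_ ?_ ?_ ?_ (hs b)
    · rintro u ⟨j, s, rfl⟩
      refine ⟨Finsupp.single j (s • m), ?_⟩
      rw [Psi2_single, sy_one, sy_bal]
    · exact ⟨0, by rw [map_zero, sy_zero_left]; rfl⟩
    · rintro x y _ _ ⟨v, hv⟩ ⟨v', hv'⟩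
      exact ⟨v + v', by rw [map_add, sy_add_left, ← hv, ← hv']; rfl⟩
    · rintro c x _ ⟨v, hv⟩
      refine ⟨(algebraMap k S c) • v, ?_⟩
      rw [map_smul, sy_smul_left, ← hv, algebraMap_smul]
      rfl
  · rintro x y ⟨v, hv⟩ ⟨v', hv'⟩
    exact ⟨v + v', by rw [map_add, ← hv, ← hv']; rfl⟩
  · exact ⟨0, by rw [map_zero]; rfl⟩

/-- the isomorphism for `β = 0` -/
noncomputable def Phi0 (pk : Pack2 φ e X)
    (hs : ∀ b, e * b * e ∈ Submodule.span k {u | ∃ (j : ℕ) (s : _), u = X ^ j * φ s})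
    (d : EData k (OT k S B M φ) e φ) :
    letI := d.inst
    ↥(eSub k B (OT k S B M φ) e) ≃ₗ[S] (ℕ →₀ M) :=
  letI := d.inst
  (LinearEquiv.ofBijective (Psi2 pk d)
    ⟨(injective_iff_map_eq_zero _).2 (Psi2_inj pk d), Psi2_surj pk hs d⟩).symm

theorem Phi0_symm (pk : Pack2 φ e X)
    (hs : ∀ b, e * b * e ∈ Submodule.span k {u | ∃ (j : ℕ) (s : _), u = X ^ j * φ s})
    (d : EData k (OT k S B M φ) e φ) (v : ℕ →₀ M) :
    letI := d.inst
    (Phi0 pk hs d).symm v = Psi2 pk d v := by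
  rfl

theorem Psi2_gr (pk : Pack2 φ e X) (d : EData k (OT k S B M φ) e φ)
    {𝒜B : ℤ → Submodule k B} {gr : ℤ → Submodule k M} {dg : ℤ}
    (hX : ∀ j : ℕ, X ^ j * φ 1 ∈ 𝒜B (j * dg)) (m : ℤ) (j : ℕ) (x : M) (hx : x ∈ gr (m - j * dg)) :
    letI := d.inst
    Psi2 pk d (Finsupp.single j x) ∈ eSubGr k B (OT k S B M φ) e (otGr k S B M φ 𝒜B gr) m := by
  letI := d.inst
  show (Psi2 pk d (Finsupp.single j x)).val ∈ otGr k S B M φ 𝒜B gr m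
  rw [Psi2_single]
  exact Submodule.subset_span ⟨j * dg, m - j * dg, _, x, by ring, hX j, hx, rfl⟩

theorem Psi2_nat (pk : Pack2 φ e X) (d : EData k (OT k S B M φ) e φ) {M' : Type}
    [AddCommGroup M'] [Module k M'] [Module S M'] [IsScalarTower k S M']
    (d' : EData k (OT k S B M' φ) e φ) (f : M →ₗ[S] M')
    (gF : OT k S B M φ →ₗ[k] OT k S B M' φ)
    (hgF : ∀ b m, gF (OTmk k S B M φ (b ⊗ₜ[k] m)) = OTmk k S B M' φ (b ⊗ₜ[k] f m))
    (v : ℕ →₀ M) :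
    letI := d.inst; letI := d'.inst
    gF (Psi2 pk d v).val = (Psi2 pk d' (Finsupp.mapRange f f.map_zero v)).val := by
  letI := d.inst; letI := d'.inst
  induction v using Finsupp.induction_linear with
  | zero =>
    rw [Finsupp.mapRange_zero, map_zero, map_zero]; exact map_zero gF
  | add v v' h h' =>
    rw [Finsupp.mapRange_add (fun a b => map_add f a b), map_add, map_add, Submodule.coe_add,
      Submodule.coe_add, map_add, h, h']
  | single j m =>
    rw [Finsupp.mapRange_single, Psi2_single, Psi2_single]
    exact hgF _ _

end Zero

section Gen
variable {T S B P M : Type} [Ring T] [Algebra k T] [Ring S] [Algebra k S] [Ring B] [Algebra k B]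
    [DecidableEq P] [AddCommGroup M] [Module k M] [Module S M] [IsScalarTower k S M]
    {φ : S →ₙₐ[k] B} {φ' : T →ₙₐ[k] S} {e X θ : B} {e' : S} {w : P → S}

theorem Pack1.idem (pk : Pack1 φ φ' e X θ e' w) : e' * e' = e' := by
  rw [← pk.one', ← map_mul, one_mul]

theorem Pack1.e_phi (pk : Pack1 φ φ' e X θ e' w) (s : S) : e * φ s = φ s := by
  rw [← pk.pack2.one, ← map_mul, one_mul]

theorem eSub_smul (he : e' * e' = e') (x : ↥(eSub k S M e')) : e' • x.val = x.val := by
  obtain ⟨_, y, rfl⟩ := x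
  show e' • (e' • y) = e' • y
  rw [smul_smul, he]

/-- first step for `F E M → E F M` -/
noncomputable def psi1 (pk : Pack1 φ φ' e X θ e' w) :
    ↥(eSub k S M e') →ₗ[k] ↥(eSub k B (OT k S B M φ) e) where
  toFun x := ⟨sy φ θ x.val, mem_eSub (by rw [smul_sy, pk.eth])⟩
  map_add' x y := Subtype.ext (sy_add_right _ _ _)
  map_smul' c x := Subtype.ext (sy_smul_right _ _ _)

/-- the map `F E M → E F M` before passing to the quotient -/
noncomputable def psiT (pk : Pack1 φ φ' e X θ e' w) (d2 : EData k (OT k S B M φ) e φ) :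
    letI := d2.inst
    S ⊗[k] ↥(eSub k S M e') →ₗ[S] ↥(eSub k B (OT k S B M φ) e) :=
  letI := d2.inst
  haveI := d2.tower
  TensorProduct.AlgebraTensorModule.lift (LinearMap.toSpanSingleton S _ (psi1 pk))

theorem psiT_tmul (pk : Pack1 φ φ' e X θ e' w) (d2 : EData k (OT k S B M φ) e φ)
    (s : S) (x : ↥(eSub k S M e')) :
    letI := d2.inst
    (psiT pk d2 (s ⊗ₜ[k] x)).val = sy φ (φ s * θ) x.val := by
  letI := d2.inst
  haveI := d2.tower
  rw [psiT, TensorProduct.AlgebraTensorModule.lift_tmul]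
  show (s • psi1 pk x).val = _
  rw [d2.compat]
  rfl

/-- the map `F E M → E F M` -/
noncomputable def Psi1 (pk : Pack1 φ φ' e X θ e' w) (d1 : EData k M e' φ')
    (d2 : EData k (OT k S B M φ) e φ) :
    letI := d1.inst; letI := d1.tower; letI := d2.inst
    OT k T S ↥(eSub k S M e') φ' →ₗ[S] ↥(eSub k B (OT k S B M φ) e) :=
  letI := d1.inst; letI := d1.tower; letI := d2.inst
  Submodule.liftQ _ (psiT pk d2) (by
    refine Submodule.span_le.2 ?_
    rintro z ⟨s, t, x, rfl⟩
    rw [SetLike.mem_coe, LinearMap.mem_ker, map_sub, sub_eq_zero]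
    refine Subtype.ext ?_
    rw [psiT_tmul, psiT_tmul, d1.compat, ← sy_bal, map_mul, mul_assoc, mul_assoc, pk.thcomm])

theorem Psi1_sy (pk : Pack1 φ φ' e X θ e' w) (d1 : EData k M e' φ')
    (d2 : EData k (OT k S B M φ) e φ) (s : S) (x : ↥(eSub k S M e')) :
    letI := d1.inst; letI := d1.tower; letI := d2.inst
    (Psi1 pk d1 d2 (sy φ' s x)).val = sy φ (φ s * θ) x.val := by
  exact psiT_tmul pk d2 s x

/-- the total map -/
noncomputable def Psi (pk : Pack1 φ φ' e X θ e' w) (d1 : EData k M e' φ')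
    (d2 : EData k (OT k S B M φ) e φ) :
    letI := d1.inst; letI := d1.tower; letI := d2.inst
    (OT k T S ↥(eSub k S M e') φ' × (ℕ →₀ M)) →ₗ[S] ↥(eSub k B (OT k S B M φ) e) :=
  letI := d1.inst; letI := d1.tower; letI := d2.inst
  (Psi1 pk d1 d2).coprod (Psi2 pk.pack2 d2)

theorem Psi_apply (pk : Pack1 φ φ' e X θ e' w) (d1 : EData k M e' φ')
    (d2 : EData k (OT k S B M φ) e φ) :
    letI := d1.inst; letI := d1.tower; letI := d2.inst
    ∀ u v, Psi pk d1 d2 (u, v) = Psi1 pk d1 d2 u + Psi2 pk.pack2 d2 v := by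
  intros; rfl

theorem Psi_surj (pk : Pack1 φ φ' e X θ e' w) (d1 : EData k M e' φ')
    (d2 : EData k (OT k S B M φ) e φ) :
    letI := d1.inst; letI := d1.tower; letI := d2.inst
    Function.Surjective (Psi pk d1 d2) := by
  letI := d1.inst; letI := d1.tower; letI := d2.inst; letI := d2.tower
  intro z
  suffices h : ∃ v, (Psi pk d1 d2 v).val = z.val by
    obtain ⟨v, hv⟩ := h
    exact ⟨v, Subtype.ext hv⟩
  refine eSub_ind pk.pack2.one (P := fun z => ∃ v, (Psi pk d1 d2 v).val = z) ?_ ?_ ?_ z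
  · intro b m
    refine Submodule.span_induction (p := fun u _ => ∃ v, (Psi pk d1 d2 v).val = sy φ u m)
      ?_ ?_ ?_ ?_ (pk.span b)
    · rintro u (⟨s, y, rfl⟩ | ⟨j, s, rfl⟩)
      · refine ⟨(sy φ' s ⟨(e' * y) • m, ⟨y • m, (mul_smul e' y m).symm⟩⟩, 0), ?_⟩
        rw [Psi_apply, map_zero, add_zero, Psi1_sy, sy_bal]
      · refine ⟨(0, Finsupp.single j (s • m)), ?_⟩
        rw [Psi_apply, map_zero, zero_add, Psi2_single, sy_one, sy_bal]
    · exact ⟨0, by rw [map_zero, sy_zero_left]; rfl⟩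
    · rintro x y _ _ ⟨v, hv⟩ ⟨v', hv'⟩
      exact ⟨v + v', by rw [map_add, sy_add_left, ← hv, ← hv']; rfl⟩
    · rintro c x _ ⟨v, hv⟩
      refine ⟨(algebraMap k S c) • v, ?_⟩
      rw [map_smul, sy_smul_left, ← hv, algebraMap_smul]
      rfl
  · rintro x y ⟨v, hv⟩ ⟨v', hv'⟩
    exact ⟨v + v', by rw [map_add, ← hv, ← hv']; rfl⟩
  · exact ⟨0, by rw [map_zero]; rfl⟩

theorem FE_repr (pk : Pack1 φ φ' e X θ e' w) (d1 : EData k M e' φ') :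
    letI := d1.inst; letI := d1.tower
    ∀ u : OT k T S ↥(eSub k S M e') φ', ∃ σ : P →₀ ↥(eSub k S M e'),
      u = σ.sum fun p x => sy φ' (w p) x := by
  letI := d1.inst; letI := d1.tower
  intro u
  have hadd : ∀ x y : OT k T S ↥(eSub k S M e') φ',
      (∃ σ : P →₀ ↥(eSub k S M e'), x = σ.sum fun p x => sy φ' (w p) x) →
      (∃ σ : P →₀ ↥(eSub k S M e'), y = σ.sum fun p x => sy φ' (w p) x) →
      (∃ σ : P →₀ ↥(eSub k S M e'), x + y = σ.sum fun p x => sy φ' (w p) x) := by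
    rintro _ _ ⟨σ, rfl⟩ ⟨σ', rfl⟩
    refine ⟨σ + σ', ?_⟩
    rw [Finsupp.sum_add_index']
    · intro p; exact sy_zero_right _
    · intro p a b; exact sy_add_right _ _ _
  refine ot_ind (P := fun u => ∃ σ : P →₀ ↥(eSub k S M e'),
      u = σ.sum fun p x => sy φ' (w p) x) ?_ hadd ?_ u
  · intro s x
    rw [← sy_one s x, pk.one']
    refine Submodule.span_induction (p := fun s _ => ∃ σ : P →₀ ↥(eSub k S M e'),
      sy φ' s x = σ.sum fun p x => sy φ' (w p) x) ?_ ?_ ?_ ?_ (pk.span' s)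
    · rintro _ ⟨p, t, rfl⟩
      refine ⟨Finsupp.single p (t • x), ?_⟩
      rw [Finsupp.sum_single_index (by exact sy_zero_right _), sy_bal]
    · exact ⟨0, by rw [sy_zero_left]; rfl⟩
    · intro a b _ _ ha hb
      rw [sy_add_left]; exact hadd _ _ ha hb
    · rintro c a _ ⟨σ, hσ⟩
      refine ⟨c • σ, ?_⟩
      rw [Finsupp.sum_smul_index' (fun p => sy_zero_right _), sy_smul_left, hσ, Finsupp.smul_sum]
      simp only [sy_smul_right]
  · exact ⟨0, rfl⟩

theorem Psi_inj (pk : Pack1 φ φ' e X θ e' w) (d1 : EData k M e' φ')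
    (d2 : EData k (OT k S B M φ) e φ) :
    letI := d1.inst; letI := d1.tower; letI := d2.inst
    Function.Injective (Psi pk d1 d2) := by
  letI := d1.inst; letI := d1.tower; letI := d2.inst; letI := d2.tower
  rw [injective_iff_map_eq_zero]
  rintro ⟨u, v⟩ h
  rw [Psi_apply] at h
  suffices hu : u = 0 by
    rw [hu, map_zero, zero_add] at h
    rw [hu, Psi2_inj _ _ _ h]; rfl
  obtain ⟨κ, h1, h2, h3⟩ := pk.kap
  obtain ⟨σ, rfl⟩ := FE_repr pk d1 u
  suffices hσ : σ = 0 by rw [hσ]; rfl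
  ext p
  obtain ⟨K, hK⟩ := exists_fun (M := M) (κ p) (h1 p)
  have e1 := Psi2_fun pk.pack2 d2 K v
  have e2 : K (Psi1 pk d1 d2 (σ.sum fun p x => sy φ' (w p) x)).val = (σ p).val := by
    clear h
    induction σ using Finsupp.induction_linear with
    | zero => rw [Finsupp.sum_zero_index, map_zero]; exact map_zero K
    | add σ σ' h h' =>
      rw [Finsupp.sum_add_index' (fun p => sy_zero_right _) (fun p a b => sy_add_right _ _ _),
        map_add, Submodule.coe_add, map_add, h, h']; rfl
    | single q x =>
      rw [Finsupp.sum_single_index (by exact sy_zero_right _), Psi1_sy, hK, h2, Finsupp.single_apply]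
      by_cases hpq : p = q
      · rw [if_pos hpq, if_pos hpq.symm, eSub_smul pk.idem]
      · rw [if_neg hpq, if_neg (Ne.symm hpq), zero_smul]; rfl
  have e3 := congrArg (fun z => K z.val) h
  simp only [Submodule.coe_add, map_add] at e3
  rw [e1, e2] at e3
  simp only [hK, h3, zero_smul] at e3
  rw [Finsupp.sum_fun_zero, add_zero] at e3
  rw [e3]; simp

/-- the isomorphism -/
noncomputable def Phi1 (pk : Pack1 φ φ' e X θ e' w) (d1 : EData k M e' φ')
    (d2 : EData k (OT k S B M φ) e φ) :
    letI := d1.inst; letI := d1.tower; letI := d2.inst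
    ↥(eSub k B (OT k S B M φ) e) ≃ₗ[S] (OT k T S ↥(eSub k S M e') φ' × (ℕ →₀ M)) :=
  letI := d1.inst; letI := d1.tower; letI := d2.inst
  (LinearEquiv.ofBijective (Psi pk d1 d2) ⟨Psi_inj pk d1 d2, Psi_surj pk d1 d2⟩).symm

theorem Phi1_symm (pk : Pack1 φ φ' e X θ e' w) (d1 : EData k M e' φ')
    (d2 : EData k (OT k S B M φ) e φ) :
    letI := d1.inst; letI := d1.tower; letI := d2.inst
    ∀ z, (Phi1 pk d1 d2).symm z = Psi pk d1 d2 z := by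
  intro z; rfl

theorem Psi1_gr (pk : Pack1 φ φ' e X θ e' w) (d1 : EData k M e' φ')
    (d2 : EData k (OT k S B M φ) e φ) {𝒜S : ℤ → Submodule k S}
    {𝒜B : ℤ → Submodule k B} {gr : ℤ → Submodule k M} {dg : ℤ}
    (hm : ∀ {c₁ c₂ : ℤ} {a b : B}, a ∈ 𝒜B c₁ → b ∈ 𝒜B c₂ → a * b ∈ 𝒜B (c₁ + c₂))
    (hφ : ∀ c s, s ∈ 𝒜S c → φ s ∈ 𝒜B c) (hθ : θ ∈ 𝒜B (-dg)) (m : ℤ) :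
    letI := d1.inst; letI := d1.tower; letI := d2.inst
    ∀ y, y ∈ otGr k T S ↥(eSub k S M e') φ' 𝒜S (eSubGr k S M e' gr) (m + dg) →
      Psi1 pk d1 d2 y ∈ eSubGr k B (OT k S B M φ) e (otGr k S B M φ 𝒜B gr) m := by
  letI := d1.inst; letI := d1.tower; letI := d2.inst; letI := d2.tower
  intro y hy
  refine Submodule.span_induction (p := fun y _ => Psi1 pk d1 d2 y ∈
    eSubGr k B (OT k S B M φ) e (otGr k S B M φ 𝒜B gr) m) ?_ ?_ ?_ ?_ hy
  · rintro _ ⟨c₁, c₂, s, x, hc, hs, hx, rfl⟩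
    show (Psi1 pk d1 d2 (sy φ' s x)).val ∈ otGr k S B M φ 𝒜B gr m
    rw [Psi1_sy]
    exact Submodule.subset_span ⟨c₁ + -dg, c₂, _, x.val, by linarith, hm (hφ _ _ hs) hθ, hx, rfl⟩
  · rw [map_zero]; exact zero_mem _
  · intro a b _ _ ha hb
    rw [map_add]; exact add_mem ha hb
  · intro c a _ ha
    rw [← algebraMap_smul S c a, map_smul, algebraMap_smul]
    exact Submodule.smul_mem _ _ ha

theorem Psi_nat (pk : Pack1 φ φ' e X θ e' w) (d1 : EData k M e' φ')
    (d2 : EData k (OT k S B M φ) e φ) {M' : Type}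
    [AddCommGroup M'] [Module k M'] [Module S M'] [IsScalarTower k S M']
    (d1' : EData k M' e' φ') (d2' : EData k (OT k S B M' φ) e φ) (f : M →ₗ[S] M')
    (gF : OT k S B M φ →ₗ[k] OT k S B M' φ)
    (hgF : ∀ b m, gF (OTmk k S B M φ (b ⊗ₜ[k] m)) = OTmk k S B M' φ (b ⊗ₜ[k] f m))
    (gE : ↥(eSub k S M e') →ₗ[k] ↥(eSub k S M' e')) (hgE : ∀ x, (gE x).val = f x.val) :
    letI := d1.inst; letI := d1.tower; letI := d2.inst
    letI := d1'.inst; letI := d1'.tower; letI := d2'.inst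
    ∀ (gFE : OT k T S ↥(eSub k S M e') φ' →ₗ[k] OT k T S ↥(eSub k S M' e') φ'),
      (∀ s x, gFE (OTmk k T S ↥(eSub k S M e') φ' (s ⊗ₜ[k] x)) =
        OTmk k T S ↥(eSub k S M' e') φ' (s ⊗ₜ[k] gE x)) →
    ∀ u v, gF (Psi pk d1 d2 (u, v)).val =
      (Psi pk d1' d2' (gFE u, Finsupp.mapRange f f.map_zero v)).val := by
  letI := d1.inst; letI := d1.tower; letI := d2.inst
  letI := d1'.inst; letI := d1'.tower; letI := d2'.inst
  intro gFE hgFE u v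
  have h1 : gF (Psi1 pk d1 d2 u).val = (Psi1 pk d1' d2' (gFE u)).val := by
    refine ot_ind (P := fun u => gF (Psi1 pk d1 d2 u).val = (Psi1 pk d1' d2' (gFE u)).val)
      ?_ ?_ ?_ u
    · intro s x
      have : gFE (sy φ' s x) = sy φ' s (gE x) := hgFE s x
      rw [this, Psi1_sy, Psi1_sy, hgE]
      exact hgF _ _
    · intro a b ha hb
      rw [map_add, map_add, map_add, Submodule.coe_add, Submodule.coe_add, map_add, ha, hb]
    · rw [map_zero, map_zero, map_zero]; exact map_zero gF
  rw [Psi_apply, Psi_apply, Submodule.coe_add, Submodule.coe_add, map_add, h1,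
    Psi2_nat pk.pack2 d2 d2' f gF hgF]

end Gen
end Abs
end KLR

set_option linter.unusedSectionVars false
set_option linter.unusedSimpArgs false
set_option linter.unusedVariables false
set_option linter.style.haveILetI false
namespace KLR
section Packs
variable {k : Type} [Field k] {I : Type} [Fintype I] [DecidableEq I] {C : CartanDatum k I}

theorem toB_Ee_zero {n : ℕ} {β : I → ℕ} {ν : Fin n → I} (h : content ν ≠ β) :
    (toB C (Ee C ν) : bAlg C n β) = 0 := by
  have h1 : (toB C (Ee C ν) : bAlg C n β) = toB C (eIdem C n β * Ee C ν) := by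
    rw [map_mul, toB_eIdem, one_mul]
  rw [h1]
  have h2 : eIdem C n β * Ee C ν = 0 := by
    show eS C (seqs β n) * Ee C ν = 0
    rw [eS_Ee, if_neg]
    rw [mem_seqs]; exact h
  rw [h2, map_zero]

section down
variable {n : ℕ} {β : I → ℕ} {i : I}

theorem phi_one_down {φ' : bAlg C n (subA β i) →ₙₐ[k] bAlg C (n + 1) β} (hφ' : IsUpRb C i φ') :
    φ' 1 = eDb C (n + 1) β i := by
  rw [phi_one hφ', eDb]
  by_cases h : β i = 0
  · rw [eR, eD, map_sum, map_sum, Finset.sum_eq_zero, Finset.sum_eq_zero]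
    · intro ν hν
      rw [Finset.mem_filter, mem_seqs] at hν
      exfalso
      obtain ⟨h1, h2⟩ := hν
      rw [dif_pos (Nat.succ_pos n)] at h2
      rw [← h1] at h
      have h3 := Finset.card_eq_zero.1 h
      have h4 : (⟨n + 1 - 1, Nat.sub_lt (Nat.succ_pos n) one_pos⟩ : Fin (n + 1)) ∈
        (Finset.univ.filter (fun a => ν a = i)) := by
        rw [Finset.mem_filter]; exact ⟨Finset.mem_univ _, h2⟩
      rw [h3] at h4
      simp at h4
    · intro ν hν
      rw [Finset.mem_filter, mem_seqs] at hν
      apply toB_Ee_zero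
      rw [hν.1]
      intro h1
      have := congrFun h1 i
      simp [addA, h] at this
  · have hb : addA (subA β i) i = β := by
      funext j
      by_cases hj : j = i
      · subst hj; simp [addA, subA]; omega
      · simp [addA, subA, hj]
    have := eD_eq (C := C) n (subA β i) i
    rw [hb] at this
    rw [this]

end down

theorem phi_one_up {n : ℕ} {β : I → ℕ} {i : I}
    {φ : bAlg C n β →ₙₐ[k] bAlg C (n + 1) (addA β i)} (hφ : IsUpRb C i φ) :
    φ 1 = eDb C (n + 1) (addA β i) i := by
  rw [phi_one hφ, eDb, eD_eq]

theorem pack2 {n : ℕ} {β : I → ℕ} {i : I}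
    {φ : bAlg C n β →ₙₐ[k] bAlg C (n + 1) (addA β i)} (hφ : IsUpRb C i φ) :
    Pack2 φ (eDb C (n + 1) (addA β i) i) (toB C (xA C (n + 1) n)) := by
  refine ⟨phi_one_up hφ, X_comm hφ, ?_⟩
  obtain ⟨κ, h1, h2⟩ := exists_kappa rfl hφ
  refine ⟨fun j => κ (Fin.last n, j), fun j b s => h1 _ b s, fun j j' s => ?_⟩
  rw [← wB_last, h2]
  simp

theorem span0 {β : I → ℕ} {i : I}
    {φ : bAlg C 0 β →ₙₐ[k] bAlg C 1 (addA β i)} (hφ : IsUpRb C i φ) (b : bAlg C 1 (addA β i)) :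
    eDb C 1 (addA β i) i * b * eDb C 1 (addA β i) i ∈
      Submodule.span k {u | ∃ (j : ℕ) (s : _), u = toB C (xA C 1 0) ^ j * φ s} := by
  rw [← phi_one_up hφ]
  refine Submodule.span_mono ?_ (span_phi hφ (φ 1 * b))
  rintro _ ⟨⟨a, c⟩, s, rfl⟩
  refine ⟨c, s, ?_⟩
  rw [← wB_last]
  have : a = Fin.last 0 := Fin.ext (by have := a.2; simp)
  rw [this]

theorem pack1 {n : ℕ} {β : I → ℕ} {i : I}
    {φ : bAlg C (n + 1) β →ₙₐ[k] bAlg C (n + 2) (addA β i)} (hφ : IsUpRb C i φ)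
    {φ' : bAlg C n (subA β i) →ₙₐ[k] bAlg C (n + 1) β} (hφ' : IsUpRb C i φ') :
    Pack1 φ φ' (eDb C (n + 2) (addA β i) i) (toB C (xA C (n + 2) (n + 1)))
      (toB C (tA C (n + 2) n) * φ (eDb C (n + 1) β i)) (eDb C (n + 1) β i) (wB C n β) := by
  have hid : eDb C (n + 1) β i * eDb C (n + 1) β i = eDb C (n + 1) β i := by
    rw [← phi_one_down hφ', ← map_mul, mul_one]
  refine ⟨pack2 hφ, phi_one_down hφ', ?_, ?_, ?_, ?_, ?_⟩
  · rw [← eTe' hφ, ← phi_one_up hφ, ← mul_assoc, ← mul_assoc, phi_one_mul]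
  · intro t
    rw [mul_assoc, ← map_mul, ← phi_one_down hφ', ← map_mul, one_mul, tau_comm hφ hφ',
      tau_comm hφ hφ', ← mul_assoc, ← map_mul, ← map_mul, mul_one]
  · intro b
    rw [← phi_one_up hφ]
    refine Submodule.span_mono ?_ (e_span hφ b)
    rintro _ (⟨s, y, rfl⟩ | h)
    · left
      refine ⟨s, y, ?_⟩
      conv_rhs => rw [← mul_assoc, mul_assoc _ (φ (eDb C (n + 1) β i)), ← map_mul,
        ← mul_assoc, hid]
    · exact Or.inr h
  · intro s
    rw [← phi_one_down hφ']
    exact span_phi hφ' s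
  · obtain ⟨κ, h1, h2⟩ := exists_kappa rfl hφ
    have h3 : ∀ (p : Fin (n + 1) × ℕ) (j : ℕ) (s), κ (p.1.castSucc, p.2)
        (toB C (xA C (n + 2) (n + 1)) ^ j * φ s) = 0 := by
      intro p j s
      rw [← wB_last, h2, if_neg]
      intro h
      have := congrArg (fun q => (q.1 : Fin (n + 2)).val) h
      have h' := p.1.2
      simp at this
      omega
    refine ⟨fun p => κ (p.1.castSucc, p.2), fun p b s => h1 _ b s, ?_, h3⟩
    rintro p ⟨a, c⟩
    obtain ⟨z, hz, hz'⟩ := wB_tau hφ a c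
    rw [← mul_assoc, hz', map_sub, h2]
    have h4 : κ (p.1.castSucc, p.2) z = 0 := by
      refine Submodule.span_induction (p := fun z _ => κ (p.1.castSucc, p.2) z = 0)
        ?_ ?_ ?_ ?_ hz
      · rintro _ ⟨j, s, rfl⟩; exact h3 _ _ _
      · exact map_zero _
      · intro a b _ _ ha hb; rw [map_add, ha, hb, add_zero]
      · intro c a _ ha; rw [map_smul, ha, smul_zero]
    rw [h4, sub_zero]
    congr 1
    rw [Prod.ext_iff, Prod.ext_iff]
    simp

end Packs
end KLR

set_option linter.unusedSectionVars false
set_option linter.unusedSimpArgs false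
set_option linter.unusedVariables false
set_option linter.style.haveILetI false
namespace KLR
section Grad
variable {k : Type} [Field k] {I : Type} [Fintype I] [DecidableEq I] {C : CartanDatum k I}

theorem gr_unique {V : Type} [AddCommGroup V] [Module k V] {A P : ℤ → Submodule k V}
    (hA : DirectSum.IsInternal A) (hP : ∀ c, P c ≤ A c) (ht : ⨆ c, P c = ⊤) (c : ℤ) {s : V}
    (hs : s ∈ A c) : s ∈ P c := by
  have h1 : s ∈ ⨆ c, P c := by rw [ht]; trivial
  rw [iSup_split_single P c] at h1
  obtain ⟨p, hp, q, hq, rfl⟩ := Submodule.mem_sup.1 h1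
  have hi := (hA.submodule_iSupIndep c)
  have hq1 : q ∈ A c := by
    have := sub_mem hs (hP c hp)
    rwa [add_sub_cancel_left] at this
  have hq2 : q ∈ ⨆ (j) (_ : j ≠ c), A j :=
    (iSup_mono fun j => iSup_mono fun _ => hP j) hq
  have := (Submodule.disjoint_def.1 hi) q hq1 hq2
  rw [this, add_zero]
  exact hp

variable {n : ℕ} {β γ : I → ℕ} {i : I} {φ : bAlg C n β →ₙₐ[k] bAlg C (n + 1) γ}

theorem gr_phi (hφ : IsUpRb C i φ) {𝒜S : ℤ → Submodule k (bAlg C n β)}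
    (hS : IsKLRGrading C (toB C) 𝒜S) {𝒜B : ℤ → Submodule k (bAlg C (n + 1) γ)}
    (hB : IsKLRGrading C (toB C) 𝒜B) (c : ℤ) (s : bAlg C n β) (hs : s ∈ 𝒜S c) : φ s ∈ 𝒜B c := by
  let φl : bAlg C n β →ₗ[k] bAlg C (n + 1) γ :=
    { toFun := φ, map_add' := map_add φ, map_smul' := fun c s => map_smul φ c s }
  let P : ℤ → Submodule k (bAlg C n β) := fun c => 𝒜S c ⊓ (𝒜B c).comap φl
  have hP : ∀ c s, s ∈ 𝒜S c → φ s ∈ 𝒜B c → s ∈ ⨆ c, P c := fun c s h1 h2 =>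
    Submodule.mem_iSup_of_mem c ⟨h1, h2⟩
  obtain ⟨⟨hS1, hSm, hSi⟩, hSe, hSx, hSt⟩ := hS
  obtain ⟨⟨hB1, hBm, hBi⟩, hBe, hBx, hBt⟩ := hB
  have hEe : ∀ ν, toB C (Ee C ν) ∈ ⨆ c, P c := fun ν => by
    refine hP 0 _ (hSe ν) ?_
    rw [hφ.1]; exact hBe _
  have ht : ⨆ c, P c = ⊤ := by
    rw [eq_top_iff]
    rintro s -
    obtain ⟨r, rfl⟩ := toB_surj s
    refine alg_ind (P := fun r => toB C r ∈ ⨆ c, P c) hEe ?_ ?_ ?_ ?_ ?_ r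
    · intro j hj
      rw [xA_of C hj, ← mul_one (Xx C _), ← Ee_sum, Finset.mul_sum, map_sum]
      refine sum_mem fun ν _ => hP _ _ (hSx _ ν) ?_
      rw [map_mul, map_mul, hφ.2.1, map_mul, ← phi_one hφ, mul_assoc, phi_one_mul, hφ.1, ← map_mul]
      have := hBx (Fin.castSucc ⟨j, hj⟩) (Fin.snoc ν i)
      rw [Fin.snoc_castSucc] at this
      exact this
    · intro l hl
      rw [tA_of C hl, ← mul_one (Tt C _ _), ← Ee_sum, Finset.mul_sum, map_sum]
      refine sum_mem fun ν _ => hP _ _ (hSt _ hl ν) ?_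
      rw [map_mul, map_mul, hφ.2.2, map_mul, ← phi_one hφ, mul_assoc, phi_one_mul, hφ.1, ← map_mul]
      have := hBt l (Nat.lt_succ_of_lt hl) (Fin.snoc ν i)
      have e1 : (Fin.snoc ν i : Fin (n + 1) → I) ⟨l, by omega⟩ = ν ⟨l, by omega⟩ :=
        Fin.snoc_castSucc (α := fun _ => I) i ν ⟨l, by omega⟩
      have e2 : (Fin.snoc ν i : Fin (n + 1) → I) ⟨l + 1, by omega⟩ = ν ⟨l + 1, by omega⟩ :=
        Fin.snoc_castSucc (α := fun _ => I) i ν ⟨l + 1, by omega⟩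
      rw [e1, e2] at this
      exact this
    · intro c
      rw [Algebra.algebraMap_eq_smul_one, map_smul, ← Ee_sum, map_sum]
      exact Submodule.smul_mem _ _ (sum_mem fun ν _ => hEe ν)
    · intro a b ha hb
      rw [map_add]; exact add_mem ha hb
    · intro a b ha hb
      rw [map_mul]
      refine Submodule.iSup_induction P (motive := fun x => x * toB C b ∈ ⨆ c, P c) ha ?_ ?_ ?_
      · intro c x hx
        refine Submodule.iSup_induction P (motive := fun y => x * y ∈ ⨆ c, P c) hb ?_ ?_ ?_
        · intro c' y hy
          refine hP (c + c') _ (hSm hx.1 hy.1) ?_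
          rw [map_mul]
          exact hBm hx.2 hy.2
        · rw [mul_zero]; exact zero_mem _
        · intro y y' h h'; rw [mul_add]; exact add_mem h h'
      · rw [zero_mul]; exact zero_mem _
      · intro y y' h h'; rw [add_mul]; exact add_mem h h'
  exact (gr_unique hSi (fun c => inf_le_left) ht c hs).2

theorem gr_X (hφ : IsUpRb C i φ) {𝒜B : ℤ → Submodule k (bAlg C (n + 1) γ)}
    (hB : IsKLRGrading C (toB C) 𝒜B) (j : ℕ) :
    toB C (xA C (n + 1) n) ^ j * φ 1 ∈ 𝒜B ((j : ℤ) * B C i i) := by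
  obtain ⟨⟨hB1, hBm, hBi⟩, hBe, hBx, hBt⟩ := hB
  induction j with
  | zero =>
    rw [pow_zero, one_mul, phi_one hφ, eR, map_sum, Nat.cast_zero, zero_mul]
    exact sum_mem fun ν _ => hBe ν
  | succ j ih =>
    have h1 : toB C (xA C (n + 1) n) * φ 1 ∈ 𝒜B (B C i i) := by
      rw [phi_one hφ, ← map_mul, eR, Finset.mul_sum, map_sum, xA_of C (Nat.lt_succ_self n)]
      refine sum_mem fun ν hν => ?_
      have h2 := (Finset.mem_filter.1 hν).2
      have := hBx (Fin.last n) ν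
      rw [h2] at this
      exact this
    have h3 := hBm ih h1
    have h4 : toB C (xA C (n + 1) n) ^ j * φ 1 * (toB C (xA C (n + 1) n) * φ 1) =
        toB C (xA C (n + 1) n) ^ (j + 1) * φ 1 := by
      rw [mul_assoc, ← mul_assoc (φ 1), ← X_comm hφ, mul_assoc _ (φ 1), phi_one_mul, pow_succ,
        mul_assoc]
    rw [h4] at h3
    convert h3 using 2
    push_cast; ring

theorem gr_tau {n : ℕ} {β : I → ℕ} {i : I}
    {φ : bAlg C (n + 1) β →ₙₐ[k] bAlg C (n + 2) (addA β i)} (hφ : IsUpRb C i φ)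
    {𝒜B : ℤ → Submodule k (bAlg C (n + 2) (addA β i))}
    (hB : IsKLRGrading C (toB C) 𝒜B) :
    toB C (tA C (n + 2) n) * φ (eDb C (n + 1) β i) ∈ 𝒜B (-(B C i i)) := by
  obtain ⟨⟨hB1, hBm, hBi⟩, hBe, hBx, hBt⟩ := hB
  rw [phi_e' hφ, ← map_mul, eS, Finset.mul_sum, map_sum, tA_of C (by omega : n + 1 < n + 2)]
  refine sum_mem fun ν hν => ?_
  obtain ⟨-, h1, h2⟩ := (mem_sT ν).1 hν
  have := hBt n (by omega) ν
  rw [h1] at this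
  have e2 : ν ⟨n + 1, by omega⟩ = i := h2
  rw [e2] at this
  exact this

end Grad
end KLR

set_option linter.unusedSectionVars false
set_option linter.unusedSimpArgs false
set_option linter.unusedVariables false
set_option linter.style.haveILetI false
namespace KLR
section Final
open TensorProduct
variable {k : Type} [Field k]

theorem Phi0_nat {S B M M' : Type} [Ring S] [Algebra k S] [Ring B] [Algebra k B]
    [AddCommGroup M] [Module k M] [Module S M] [IsScalarTower k S M]
    [AddCommGroup M'] [Module k M'] [Module S M'] [IsScalarTower k S M']
    {φ : S →ₙₐ[k] B} {e X : B} (pk : Pack2 φ e X)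
    (hs : ∀ b, e * b * e ∈ Submodule.span k {u | ∃ (j : ℕ) (s : _), u = X ^ j * φ s})
    (d : EData k (OT k S B M φ) e φ) (d' : EData k (OT k S B M' φ) e φ) (f : M →ₗ[S] M')
    (gF : OT k S B M φ →ₗ[k] OT k S B M' φ)
    (hgF : ∀ b m, gF (OTmk k S B M φ (b ⊗ₜ[k] m)) = OTmk k S B M' φ (b ⊗ₜ[k] f m))
    (gEF : ↥(eSub k B (OT k S B M φ) e) →ₗ[k] ↥(eSub k B (OT k S B M' φ) e))
    (hgEF : ∀ x, (gEF x).val = gF x.val) :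
    letI := d.inst; letI := d'.inst
    ∀ z, Phi0 pk hs d' (gEF z) = Finsupp.mapRange ⇑f f.map_zero (Phi0 pk hs d z) := by
  letI := d.inst; letI := d'.inst
  intro z
  rw [← LinearEquiv.eq_symm_apply, Phi0_symm]
  apply Subtype.ext
  rw [hgEF, ← Psi2_nat pk d d' f gF hgF, ← Phi0_symm pk hs d, LinearEquiv.symm_apply_apply]

theorem Phi1_nat {T S B P M M' : Type} [Ring T] [Algebra k T] [Ring S] [Algebra k S]
    [Ring B] [Algebra k B] [DecidableEq P]
    [AddCommGroup M] [Module k M] [Module S M] [IsScalarTower k S M]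
    [AddCommGroup M'] [Module k M'] [Module S M'] [IsScalarTower k S M']
    {φ : S →ₙₐ[k] B} {φ' : T →ₙₐ[k] S} {e X θ : B} {e' : S} {w : P → S}
    (pk : Pack1 φ φ' e X θ e' w)
    (d1 : EData k M e' φ') (d2 : EData k (OT k S B M φ) e φ)
    (d1' : EData k M' e' φ') (d2' : EData k (OT k S B M' φ) e φ) (f : M →ₗ[S] M')
    (gF : OT k S B M φ →ₗ[k] OT k S B M' φ)
    (hgF : ∀ b m, gF (OTmk k S B M φ (b ⊗ₜ[k] m)) = OTmk k S B M' φ (b ⊗ₜ[k] f m))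
    (gEF : ↥(eSub k B (OT k S B M φ) e) →ₗ[k] ↥(eSub k B (OT k S B M' φ) e))
    (hgEF : ∀ x, (gEF x).val = gF x.val)
    (gE : ↥(eSub k S M e') →ₗ[k] ↥(eSub k S M' e')) (hgE : ∀ x, (gE x).val = f x.val) :
    letI := d1.inst; letI := d1.tower; letI := d2.inst
    letI := d1'.inst; letI := d1'.tower; letI := d2'.inst
    ∀ (gFE : OT k T S ↥(eSub k S M e') φ' →ₗ[k] OT k T S ↥(eSub k S M' e') φ'),
      (∀ s x, gFE (OTmk k T S ↥(eSub k S M e') φ' (s ⊗ₜ[k] x)) =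
        OTmk k T S ↥(eSub k S M' e') φ' (s ⊗ₜ[k] gE x)) →
    ∀ z, Phi1 pk d1' d2' (gEF z) = (gFE (Phi1 pk d1 d2 z).1,
      Finsupp.mapRange ⇑f f.map_zero (Phi1 pk d1 d2 z).2) := by
  letI := d1.inst; letI := d1.tower; letI := d2.inst
  letI := d1'.inst; letI := d1'.tower; letI := d2'.inst
  intro gFE hgFE z
  rw [← LinearEquiv.eq_symm_apply, Phi1_symm]
  apply Subtype.ext
  rw [hgEF, ← Psi_nat pk d1 d2 d1' d2' f gF hgF gE hgE gFE hgFE, Prod.mk.eta,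
    ← Phi1_symm pk d1 d2, LinearEquiv.symm_apply_apply]

end Final
end KLR

open KLR TensorProduct in
set_option maxHeartbeats 1000000 in
/-- For every graded `R(β)`-module `M` there is a natural isomorphism of graded
`R(β)`-modules `E_i F_i M ≅ q^{-(α_i,α_i)} F_i E_i M ⊕ (M ⊗ k[t_i])`, with
`M ⊗ k[t_i] ≅ ⊕_{m ≥ 0} q^{m(α_i,α_i)} M` (encoded as `ℕ →₀ M`); when `β = 0` the
term `F_i E_i M` is zero and the isomorphism reads `E_i F_i M ≅ M ⊗ k[t_i]`. -/
theorem EiFi_decomposition {k : Type} [Field k] {I : Type} [Fintype I]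
    [DecidableEq I] (C : CartanDatum k I) (β : I → ℕ) (i : I) :
    -- the case `β = 0`, where `E_i` on `R(β)`-modules is the zero functor
    (ht I β = 0 →
      ∀ (φ0 : bAlg C 0 β →ₙₐ[k] bAlg C 1 (addA β i)), IsUpRb C i φ0 →
      ∀ (𝒜S : ℤ → Submodule k (bAlg C 0 β)), IsKLRGrading C (toB C) 𝒜S →
      ∀ (𝒜B : ℤ → Submodule k (bAlg C 1 (addA β i))), IsKLRGrading C (toB C) 𝒜B →
      ∃ Φ : ∀ (M : Type) [AddCommGroup M] [Module k M] [Module (bAlg C 0 β) M]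
          [IsScalarTower k (bAlg C 0 β) M]
          (d : EData k (OT k (bAlg C 0 β) (bAlg C 1 (addA β i)) M φ0)
            (eDb C 1 (addA β i) i) φ0),
          (letI := d.inst;
            (↥(eSub k (bAlg C 1 (addA β i))
                (OT k (bAlg C 0 β) (bAlg C 1 (addA β i)) M φ0) (eDb C 1 (addA β i) i))
              ≃ₗ[bAlg C 0 β] (ℕ →₀ M))),
        (∀ (M : Type) (_ : AddCommGroup M) (_ : Module k M)
          (_ : Module (bAlg C 0 β) M) (_ : IsScalarTower k (bAlg C 0 β) M)
          (d : EData k (OT k (bAlg C 0 β) (bAlg C 1 (addA β i)) M φ0)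
            (eDb C 1 (addA β i) i) φ0),
          letI := d.inst;
          ∀ (grM : ℤ → Submodule k M), IsModGrading k 𝒜S grM →
          ∀ (m : ℤ) (jj : ℕ) (x : M), x ∈ grM (m - (jj : ℤ) * B C i i) →
            (Φ M d).symm (Finsupp.single jj x)
              ∈ eSubGr k (bAlg C 1 (addA β i))
                (OT k (bAlg C 0 β) (bAlg C 1 (addA β i)) M φ0) (eDb C 1 (addA β i) i)
                (otGr k (bAlg C 0 β) (bAlg C 1 (addA β i)) M φ0 𝒜B grM) m) ∧
        (∀ (M M' : Type) (_ : AddCommGroup M) (_ : Module k M)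
          (_ : Module (bAlg C 0 β) M) (_ : IsScalarTower k (bAlg C 0 β) M)
          (_ : AddCommGroup M') (_ : Module k M') (_ : Module (bAlg C 0 β) M')
          (_ : IsScalarTower k (bAlg C 0 β) M')
          (d : EData k (OT k (bAlg C 0 β) (bAlg C 1 (addA β i)) M φ0)
            (eDb C 1 (addA β i) i) φ0)
          (d' : EData k (OT k (bAlg C 0 β) (bAlg C 1 (addA β i)) M' φ0)
            (eDb C 1 (addA β i) i) φ0),
          letI := d.inst; letI := d'.inst;
          ∀ (f : M →ₗ[bAlg C 0 β] M')
            (gF : OT k (bAlg C 0 β) (bAlg C 1 (addA β i)) M φ0 →ₗ[k]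
              OT k (bAlg C 0 β) (bAlg C 1 (addA β i)) M' φ0),
            (∀ (b : bAlg C 1 (addA β i)) (m : M),
              gF (OTmk k (bAlg C 0 β) (bAlg C 1 (addA β i)) M φ0 (b ⊗ₜ[k] m))
                = OTmk k (bAlg C 0 β) (bAlg C 1 (addA β i)) M' φ0 (b ⊗ₜ[k] f m)) →
          ∀ (gEF : ↥(eSub k (bAlg C 1 (addA β i))
              (OT k (bAlg C 0 β) (bAlg C 1 (addA β i)) M φ0) (eDb C 1 (addA β i) i))
              →ₗ[k] ↥(eSub k (bAlg C 1 (addA β i))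
              (OT k (bAlg C 0 β) (bAlg C 1 (addA β i)) M' φ0) (eDb C 1 (addA β i) i))),
            (∀ x, (gEF x).val = gF x.val) →
            ∀ z, Φ M' d' (gEF z) = Finsupp.mapRange ⇑f f.map_zero (Φ M d z))) ∧
    -- the case of `β` of positive height
    (∀ n : ℕ, ht I β = n + 1 →
      ∀ (φup : bAlg C (n + 1) β →ₙₐ[k] bAlg C (n + 2) (addA β i)), IsUpRb C i φup →
      ∀ (φdown : bAlg C n (subA β i) →ₙₐ[k] bAlg C (n + 1) β), IsUpRb C i φdown →
      ∀ (𝒜S : ℤ → Submodule k (bAlg C (n + 1) β)), IsKLRGrading C (toB C) 𝒜S →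
      ∀ (𝒜B : ℤ → Submodule k (bAlg C (n + 2) (addA β i))), IsKLRGrading C (toB C) 𝒜B →
      ∀ (𝒜T : ℤ → Submodule k (bAlg C n (subA β i))), IsKLRGrading C (toB C) 𝒜T →
      ∃ Φ : ∀ (M : Type) [AddCommGroup M] [Module k M] [Module (bAlg C (n + 1) β) M]
          [IsScalarTower k (bAlg C (n + 1) β) M]
          (d1 : EData k M (eDb C (n + 1) β i) φdown)
          (d2 : EData k (OT k (bAlg C (n + 1) β) (bAlg C (n + 2) (addA β i)) M φup)
            (eDb C (n + 2) (addA β i) i) φup),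
          (letI := d1.inst; letI := d1.tower; letI := d2.inst;
            (↥(eSub k (bAlg C (n + 2) (addA β i))
                (OT k (bAlg C (n + 1) β) (bAlg C (n + 2) (addA β i)) M φup)
                (eDb C (n + 2) (addA β i) i))
              ≃ₗ[bAlg C (n + 1) β]
              ((OT k (bAlg C n (subA β i)) (bAlg C (n + 1) β)
                  ↥(eSub k (bAlg C (n + 1) β) M (eDb C (n + 1) β i)) φdown) ×
                (ℕ →₀ M)))),
        -- gradedness
        (∀ (M : Type) (_ : AddCommGroup M) (_ : Module k M)
          (_ : Module (bAlg C (n + 1) β) M) (_ : IsScalarTower k (bAlg C (n + 1) β) M)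
          (d1 : EData k M (eDb C (n + 1) β i) φdown)
          (d2 : EData k (OT k (bAlg C (n + 1) β) (bAlg C (n + 2) (addA β i)) M φup)
            (eDb C (n + 2) (addA β i) i) φup),
          letI := d1.inst; letI := d1.tower; letI := d2.inst;
          ∀ (grM : ℤ → Submodule k M), IsModGrading k 𝒜S grM →
          ∀ m : ℤ,
            (∀ y, y ∈ otGr k (bAlg C n (subA β i)) (bAlg C (n + 1) β)
                ↥(eSub k (bAlg C (n + 1) β) M (eDb C (n + 1) β i)) φdown 𝒜S
                (eSubGr k (bAlg C (n + 1) β) M (eDb C (n + 1) β i) grM)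
                (m + B C i i) →
              (Φ M d1 d2).symm (y, 0) ∈ eSubGr k (bAlg C (n + 2) (addA β i))
                (OT k (bAlg C (n + 1) β) (bAlg C (n + 2) (addA β i)) M φup)
                (eDb C (n + 2) (addA β i) i)
                (otGr k (bAlg C (n + 1) β) (bAlg C (n + 2) (addA β i)) M φup 𝒜B grM)
                m) ∧
            (∀ (jj : ℕ) (x : M), x ∈ grM (m - (jj : ℤ) * B C i i) →
              (Φ M d1 d2).symm (0, Finsupp.single jj x)
                ∈ eSubGr k (bAlg C (n + 2) (addA β i))
                  (OT k (bAlg C (n + 1) β) (bAlg C (n + 2) (addA β i)) M φup)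
                  (eDb C (n + 2) (addA β i) i)
                  (otGr k (bAlg C (n + 1) β) (bAlg C (n + 2) (addA β i)) M φup 𝒜B grM)
                  m)) ∧
        -- naturality in `M`
        (∀ (M M' : Type) (_ : AddCommGroup M) (_ : Module k M)
          (_ : Module (bAlg C (n + 1) β) M) (_ : IsScalarTower k (bAlg C (n + 1) β) M)
          (_ : AddCommGroup M') (_ : Module k M')
          (_ : Module (bAlg C (n + 1) β) M')
          (_ : IsScalarTower k (bAlg C (n + 1) β) M')
          (d1 : EData k M (eDb C (n + 1) β i) φdown)
          (d2 : EData k (OT k (bAlg C (n + 1) β) (bAlg C (n + 2) (addA β i)) M φup)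
            (eDb C (n + 2) (addA β i) i) φup)
          (d1' : EData k M' (eDb C (n + 1) β i) φdown)
          (d2' : EData k (OT k (bAlg C (n + 1) β) (bAlg C (n + 2) (addA β i)) M' φup)
            (eDb C (n + 2) (addA β i) i) φup),
          letI := d1.inst; letI := d1.tower; letI := d2.inst;
          letI := d1'.inst; letI := d1'.tower; letI := d2'.inst;
          ∀ (f : M →ₗ[bAlg C (n + 1) β] M')
            (gF : OT k (bAlg C (n + 1) β) (bAlg C (n + 2) (addA β i)) M φup →ₗ[k]
              OT k (bAlg C (n + 1) β) (bAlg C (n + 2) (addA β i)) M' φup),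
            (∀ (b : bAlg C (n + 2) (addA β i)) (m : M),
              gF (OTmk k (bAlg C (n + 1) β) (bAlg C (n + 2) (addA β i)) M φup
                  (b ⊗ₜ[k] m))
                = OTmk k (bAlg C (n + 1) β) (bAlg C (n + 2) (addA β i)) M' φup
                  (b ⊗ₜ[k] f m)) →
          ∀ (gEF : ↥(eSub k (bAlg C (n + 2) (addA β i))
              (OT k (bAlg C (n + 1) β) (bAlg C (n + 2) (addA β i)) M φup)
              (eDb C (n + 2) (addA β i) i)) →ₗ[k]
              ↥(eSub k (bAlg C (n + 2) (addA β i))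
              (OT k (bAlg C (n + 1) β) (bAlg C (n + 2) (addA β i)) M' φup)
              (eDb C (n + 2) (addA β i) i))),
            (∀ x, (gEF x).val = gF x.val) →
          ∀ (gE : ↥(eSub k (bAlg C (n + 1) β) M (eDb C (n + 1) β i)) →ₗ[k]
              ↥(eSub k (bAlg C (n + 1) β) M' (eDb C (n + 1) β i))),
            (∀ x, (gE x).val = f x.val) →
          ∀ (gFE : OT k (bAlg C n (subA β i)) (bAlg C (n + 1) β)
              ↥(eSub k (bAlg C (n + 1) β) M (eDb C (n + 1) β i)) φdown →ₗ[k]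
              OT k (bAlg C n (subA β i)) (bAlg C (n + 1) β)
              ↥(eSub k (bAlg C (n + 1) β) M' (eDb C (n + 1) β i)) φdown),
            (∀ (b : bAlg C (n + 1) β)
                (x : ↥(eSub k (bAlg C (n + 1) β) M (eDb C (n + 1) β i))),
              gFE (OTmk k (bAlg C n (subA β i)) (bAlg C (n + 1) β)
                  ↥(eSub k (bAlg C (n + 1) β) M (eDb C (n + 1) β i)) φdown
                  (b ⊗ₜ[k] x))
                = OTmk k (bAlg C n (subA β i)) (bAlg C (n + 1) β)
                  ↥(eSub k (bAlg C (n + 1) β) M' (eDb C (n + 1) β i)) φdown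
                  (b ⊗ₜ[k] gE x)) →
            ∀ z, Φ M' d1' d2' (gEF z)
              = (gFE (Φ M d1 d2 z).1,
                  Finsupp.mapRange ⇑f f.map_zero (Φ M d1 d2 z).2))) := by
  refine ⟨?_, ?_⟩
  · intro _ φ0 hφ0 𝒜S hS 𝒜B hB
    refine ⟨fun M _ _ _ _ d => Phi0 (pack2 hφ0) (span0 hφ0) d, ?_, ?_⟩
    · intro M _ _ _ _ d grM hM m jj x hx
      exact Psi2_gr (pack2 hφ0) d (gr_X hφ0 hB) m jj x hx
    · intro M M' _ _ _ _ _ _ _ _ d d' f gF hgF gEF hgEF z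
      exact Phi0_nat (pack2 hφ0) (span0 hφ0) d d' f gF hgF gEF hgEF z
  · intro n _ φup hup φdown hdown 𝒜S hS 𝒜B hB 𝒜T hT
    refine ⟨fun M _ _ _ _ d1 d2 => Phi1 (pack1 hup hdown) d1 d2, ?_, ?_⟩
    · intro M _ _ _ _ d1 d2
      letI := d1.inst; letI := d1.tower; letI := d2.inst
      intro grM hM m
      refine ⟨fun y hy => ?_, fun jj x hx => ?_⟩
      · have h := Psi1_gr (pack1 hup hdown) d1 d2 hB.1.2.1 (gr_phi hup hS hB) (gr_tau hup hB) m y hy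
        have e : Psi (pack1 hup hdown) d1 d2 (y, 0) = Psi1 (pack1 hup hdown) d1 d2 y := by
          rw [Psi_apply, map_zero, add_zero]
        rw [← e] at h
        exact h
      · have h := Psi2_gr (pack1 hup hdown).pack2 d2 (gr_X hup hB) m jj x hx
        have e : Psi (pack1 hup hdown) d1 d2 (0, Finsupp.single jj x) =
            Psi2 (pack1 hup hdown).pack2 d2 (Finsupp.single jj x) := by
          rw [Psi_apply, map_zero, zero_add]
        rw [← e] at h
        exact h
    · intro M M' _ _ _ _ _ _ _ _ d1 d2 d1' d2' f gF hgF gEF hgEF gE hgE gFE hgFE z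
      exact Phi1_nat (pack1 hup hdown) d1 d2 d1' d2' f gF hgF gEF hgEF gE hgE gFE hgFE z
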